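/- Let b > 0 be real with b² irrational, let x ∈ ℝ, let 0 < δ < min(b,b⁻¹), and let γ_δ be the contour consisting of the real axis with the segment [−δ, δ] replaced by the semicircle of radius δ below the origin. Then the improper contour integral lim_{R,R'→∞} ∫_{γ_δ, −R ≤ Re y ≤ R'} e^{−2πixy}·e^{−πiy²}·e_b(y + c_b) dy exists, is independent of δ, and equals ζ₀⁻¹·e_b(x), where ζ₀ := e^{πi(1−4c_b²)/12}. (Here e_b(y+c_b) is understood via the meromorphic continuation of e_b; its only singularity near γ_δ is the simple pole at y = 0.) -/

import Mathlib

open MeasureTheory Complex Real Filter Topology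

noncomputable section

/-- The special point `c_b = i(b+b⁻¹)/2`. -/
def cb (b : ℝ) : ℂ := Complex.I * ((b : ℂ) + (b : ℂ)⁻¹) / 2

/-- The integrand in the integral representation of the noncompact quantum dilogarithm. -/
def ebIntegrand (b ε : ℝ) (z : ℂ) (t : ℝ) : ℂ :=
  Complex.exp (-2 * Complex.I * z * ((t : ℂ) + Complex.I * (ε : ℂ))) /
    (((t : ℂ) + Complex.I * (ε : ℂ)) *
      Complex.sinh ((b : ℂ) * ((t : ℂ) + Complex.I * (ε : ℂ))) *
      Complex.sinh ((b : ℂ)⁻¹ * ((t : ℂ) + Complex.I * (ε : ℂ))))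

/-- The noncompact quantum dilogarithm defined with contour parameter `ε`. -/
def ebE (b ε : ℝ) (z : ℂ) : ℂ :=
  Complex.exp ((1 / 4 : ℂ) * ∫ t : ℝ, ebIntegrand b ε z t)

/-- The noncompact quantum dilogarithm `e_b` (canonical choice of contour parameter;
the value is independent of this choice). -/
def eb (b : ℝ) (z : ℂ) : ℂ := ebE b (π * min b b⁻¹ / 2) z

/-- The set `{c_b + i(mb + nb⁻¹) : m, n ∈ ℤ≥0}` of poles of the continuation of `e_b`. -/
def ebPoles (b : ℝ) : Set ℂ :=
  {z | ∃ m n : ℕ, z = cb b + Complex.I * ((m : ℂ) * (b : ℂ) + (n : ℂ) * (b : ℂ)⁻¹)}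

/-- The constant `ζ₀ = e^{πi(1−4c_b²)/12}`. -/
def zeta0 (b : ℝ) : ℂ := Complex.exp ((π : ℂ) * Complex.I * (1 - 4 * (cb b) ^ 2) / 12)

lemma q_rect (h : ℂ → ℂ) {a b c d : ℝ} (hab : a ≤ b) (hcd : c ≤ d)
    (H : ∀ y : ℂ, a ≤ y.re → y.re ≤ b → c ≤ y.im → y.im ≤ d → DifferentiableAt ℂ h y) :
    (∫ t in a..b, h ((t:ℂ) + (c:ℂ) * I)) - (∫ t in a..b, h ((t:ℂ) + (d:ℂ) * I)) +
      I * (∫ s in c..d, h ((b:ℂ) + (s:ℂ) * I)) - I * (∫ s in c..d, h ((a:ℂ) + (s:ℂ) * I)) = 0 := by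
  have := Complex.integral_boundary_rect_eq_zero_of_differentiableOn h ⟨a, c⟩ ⟨b, d⟩ (by
    intro y hy
    rw [mem_reProdIm] at hy
    simp only [Set.uIcc_of_le hab, Set.uIcc_of_le hcd, Set.mem_Icc] at hy
    exact (H y hy.1.1 hy.1.2 hy.2.1 hy.2.2).differentiableWithinAt)
  simpa [smul_eq_mul] using this

lemma q_cont_line (h : ℂ → ℂ) (S : Set ℝ) (c : ℝ)
    (H : ∀ t ∈ S, DifferentiableAt ℂ h ((t:ℂ) + (c:ℂ) * I)) :
    ContinuousOn (fun t : ℝ => h ((t:ℂ) + (c:ℂ) * I)) S := by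
  intro t ht
  have h1 := (H t ht).continuousAt
  have : ContinuousAt (fun t : ℝ => (t:ℂ) + (c:ℂ) * I) t := by fun_prop
  exact (ContinuousAt.comp (f := fun t : ℝ => (t:ℂ) + (c:ℂ) * I) h1 this).continuousWithinAt

lemma q_cont_vert (h : ℂ → ℂ) (S : Set ℝ) (c : ℝ)
    (H : ∀ t ∈ S, DifferentiableAt ℂ h ((c:ℂ) + (t:ℂ) * I)) :
    ContinuousOn (fun t : ℝ => h ((c:ℂ) + (t:ℂ) * I)) S := by
  intro t ht
  have h1 := (H t ht).continuousAt
  have : ContinuousAt (fun t : ℝ => (c:ℂ) + (t:ℂ) * I) t := by fun_prop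
  exact (ContinuousAt.comp (f := fun t : ℝ => (c:ℂ) + (t:ℂ) * I) h1 this).continuousWithinAt

lemma q_int_right (h : ℂ → ℂ) {a0 c α C : ℝ} (hα : 0 < α)
    (H : ∀ t : ℝ, a0 ≤ t → DifferentiableAt ℂ h ((t:ℂ) + (c:ℂ) * I))
    (B : ∀ t : ℝ, a0 ≤ t → ‖h ((t:ℂ) + (c:ℂ) * I)‖ ≤ C * Real.exp (-α * t)) :
    IntegrableOn (fun t : ℝ => h ((t:ℂ) + (c:ℂ) * I)) (Set.Ioi a0) := by
  have hi : IntegrableOn (fun t : ℝ => C * Real.exp (-α * t)) (Set.Ioi a0) := by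
    apply Integrable.const_mul
    exact exp_neg_integrableOn_Ioi a0 hα
  refine hi.mono' ?_ ?_
  · refine ContinuousOn.aestronglyMeasurable ?_ measurableSet_Ioi
    exact q_cont_line h _ c (fun t ht => H t (le_of_lt ht))
  · refine (ae_restrict_iff' measurableSet_Ioi).2 (Eventually.of_forall fun t ht => B t (le_of_lt ht))

lemma q_hs_right (h : ℂ → ℂ) {a0 c d α C : ℝ} (hα : 0 < α) (hcd : c ≤ d)
    (H : ∀ y : ℂ, a0 ≤ y.re → c ≤ y.im → y.im ≤ d → DifferentiableAt ℂ h y)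
    (B : ∀ y : ℂ, a0 ≤ y.re → c ≤ y.im → y.im ≤ d → ‖h y‖ ≤ C * Real.exp (-α * y.re)) :
    (∫ t in Set.Ioi a0, h ((t:ℂ) + (c:ℂ) * I)) - (∫ t in Set.Ioi a0, h ((t:ℂ) + (d:ℂ) * I)) =
      I * (∫ s in c..d, h ((a0:ℂ) + (s:ℂ) * I)) := by
  have i1 := q_int_right h (a0 := a0) (c := c) (C := C) hα
    (fun t ht => H _ (by simpa using ht) (by simp) (by simpa using hcd))
    (fun t ht => by simpa using B ((t:ℂ) + (c:ℂ) * I) (by simpa using ht) (by simp) (by simpa using hcd))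
  have i2 := q_int_right h (a0 := a0) (c := d) (C := C) hα
    (fun t ht => H _ (by simpa using ht) (by simpa using hcd) (by simp))
    (fun t ht => by simpa using B ((t:ℂ) + (d:ℂ) * I) (by simpa using ht) (by simpa using hcd) (by simp))
  have t1 := intervalIntegral_tendsto_integral_Ioi a0 i1 tendsto_id
  have t2 := intervalIntegral_tendsto_integral_Ioi a0 i2 tendsto_id
  have t3 : Tendsto (fun R : ℝ => I * ∫ s in c..d, h ((R:ℂ) + (s:ℂ) * I)) atTop (𝓝 0) := by
    have hz : Tendsto (fun R : ℝ => C * Real.exp (-α * R) * |d - c|) atTop (𝓝 0) := by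
      have : Tendsto (fun R : ℝ => Real.exp (-α * R)) atTop (𝓝 0) := by
        apply Real.tendsto_exp_atBot.comp
        exact (tendsto_const_mul_atBot_of_neg (by linarith)).2 tendsto_id
      simpa using (this.const_mul C).mul_const |d - c|
    refine squeeze_zero_norm' ?_ hz
    filter_upwards [eventually_ge_atTop a0] with R hR
    rw [norm_mul, norm_I, one_mul]
    apply intervalIntegral.norm_integral_le_of_norm_le_const
    intro s hs
    rw [Set.uIoc_of_le hcd] at hs
    simpa using B ((R:ℂ) + (s:ℂ) * I) (by simpa using hR) (by simpa using hs.1.le) (by simpa using hs.2)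
  have t4 := (t1.sub t2).add t3
  have t5 : Tendsto (fun R : ℝ => (∫ t in a0..R, h ((t:ℂ) + (c:ℂ) * I)) -
      (∫ t in a0..R, h ((t:ℂ) + (d:ℂ) * I)) + I * (∫ s in c..d, h ((R:ℂ) + (s:ℂ) * I))) atTop
      (𝓝 (I * (∫ s in c..d, h ((a0:ℂ) + (s:ℂ) * I)))) := by
    apply tendsto_const_nhds.congr'
    filter_upwards [eventually_ge_atTop a0] with R hR
    have := q_rect h hR hcd (fun y h1 _ h3 h4 => H y h1 h3 h4)
    linear_combination -this
  have := tendsto_nhds_unique t4 t5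
  simpa using this

lemma q_int_left (h : ℂ → ℂ) {a0 c α C : ℝ} (hα : 0 < α)
    (H : ∀ t : ℝ, t ≤ a0 → DifferentiableAt ℂ h ((t:ℂ) + (c:ℂ) * I))
    (B : ∀ t : ℝ, t ≤ a0 → ‖h ((t:ℂ) + (c:ℂ) * I)‖ ≤ C * Real.exp (α * t)) :
    IntegrableOn (fun t : ℝ => h ((t:ℂ) + (c:ℂ) * I)) (Set.Iic a0) := by
  have hi : IntegrableOn (fun t : ℝ => C * Real.exp (α * t)) (Set.Iic a0) := by
    apply Integrable.const_mul
    exact integrableOn_exp_mul_Iic hα a0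
  refine hi.mono' ?_ ?_
  · refine ContinuousOn.aestronglyMeasurable ?_ measurableSet_Iic
    exact q_cont_line h _ c (fun t ht => H t ht)
  · refine (ae_restrict_iff' measurableSet_Iic).2 (Eventually.of_forall fun t ht => B t ht)

lemma q_hs_left (h : ℂ → ℂ) {a0 c d α C : ℝ} (hα : 0 < α) (hcd : c ≤ d)
    (H : ∀ y : ℂ, y.re ≤ a0 → c ≤ y.im → y.im ≤ d → DifferentiableAt ℂ h y)
    (B : ∀ y : ℂ, y.re ≤ a0 → c ≤ y.im → y.im ≤ d → ‖h y‖ ≤ C * Real.exp (α * y.re)) :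
    (∫ t in Set.Iic a0, h ((t:ℂ) + (c:ℂ) * I)) - (∫ t in Set.Iic a0, h ((t:ℂ) + (d:ℂ) * I)) =
      -(I * (∫ s in c..d, h ((a0:ℂ) + (s:ℂ) * I))) := by
  have i1 := q_int_left h (a0 := a0) (c := c) (C := C) hα
    (fun t ht => H _ (by simpa using ht) (by simp) (by simpa using hcd))
    (fun t ht => by simpa using B ((t:ℂ) + (c:ℂ) * I) (by simpa using ht) (by simp) (by simpa using hcd))
  have i2 := q_int_left h (a0 := a0) (c := d) (C := C) hα
    (fun t ht => H _ (by simpa using ht) (by simpa using hcd) (by simp))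
    (fun t ht => by simpa using B ((t:ℂ) + (d:ℂ) * I) (by simpa using ht) (by simpa using hcd) (by simp))
  have t1 := intervalIntegral_tendsto_integral_Iic a0 i1 tendsto_id
  have t2 := intervalIntegral_tendsto_integral_Iic a0 i2 tendsto_id
  have t3 : Tendsto (fun R : ℝ => I * ∫ s in c..d, h ((R:ℂ) + (s:ℂ) * I)) atBot (𝓝 0) := by
    have hz : Tendsto (fun R : ℝ => C * Real.exp (α * R) * |d - c|) atBot (𝓝 0) := by
      have : Tendsto (fun R : ℝ => Real.exp (α * R)) atBot (𝓝 0) := by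
        apply Real.tendsto_exp_atBot.comp
        exact (tendsto_const_mul_atBot_of_pos hα).2 tendsto_id
      simpa using (this.const_mul C).mul_const |d - c|
    refine squeeze_zero_norm' ?_ hz
    filter_upwards [eventually_le_atBot a0] with R hR
    rw [norm_mul, norm_I, one_mul]
    apply intervalIntegral.norm_integral_le_of_norm_le_const
    intro s hs
    rw [Set.uIoc_of_le hcd] at hs
    simpa using B ((R:ℂ) + (s:ℂ) * I) (by simpa using hR) (by simpa using hs.1.le) (by simpa using hs.2)
  have t4 := (t1.sub t2).sub t3
  have t5 : Tendsto (fun R : ℝ => (∫ t in R..a0, h ((t:ℂ) + (c:ℂ) * I)) -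
      (∫ t in R..a0, h ((t:ℂ) + (d:ℂ) * I)) - I * (∫ s in c..d, h ((R:ℂ) + (s:ℂ) * I))) atBot
      (𝓝 (-(I * (∫ s in c..d, h ((a0:ℂ) + (s:ℂ) * I))))) := by
    apply tendsto_const_nhds.congr'
    filter_upwards [eventually_le_atBot a0] with R hR
    have := q_rect h hR hcd (fun y _ h2 h3 h4 => H y h2 h3 h4)
    linear_combination -this
  have := tendsto_nhds_unique t4 t5
  simpa using this

/-- Laplace transforms are holomorphic. -/
lemma q_laplace (G : ℝ → ℂ) {α C : ℝ}
    (hm : AEStronglyMeasurable G (volume.restrict (Set.Ioi 0)))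
    (B : ∀ t : ℝ, 0 < t → ‖G t‖ ≤ C * Real.exp (-α * t)) (z : ℂ) (hz : z.re < α) :
    DifferentiableAt ℂ (fun z : ℂ => ∫ t in Set.Ioi (0:ℝ), Complex.exp (z * t) * G t) z := by
  obtain ⟨r, hr⟩ : ∃ r : ℝ, r = (α - z.re) / 2 := ⟨_, rfl⟩
  have hr0 : 0 < r := by rw [hr]; linarith
  have hs : Metric.ball z r ∈ 𝓝 z := Metric.ball_mem_nhds z hr0
  have hre : ∀ w ∈ Metric.ball z r, w.re ≤ α - r := by
    intro w hw
    have h1 : ‖w - z‖ < r := by simpa [dist_eq_norm] using hw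
    have h2 := (abs_le.1 (abs_re_le_norm (w - z))).2
    rw [sub_re] at h2
    have : α - z.re = 2 * r := by rw [hr]; ring
    linarith
  have hnorm : ∀ (w : ℂ) (t : ℝ), ‖Complex.exp (w * t)‖ = Real.exp (w.re * t) := by
    intro w t; rw [Complex.norm_exp]; simp
  have hmw : ∀ w : ℂ, AEStronglyMeasurable (fun t : ℝ => Complex.exp (w * t) * G t)
      (volume.restrict (Set.Ioi 0)) := by
    intro w
    exact (Continuous.aestronglyMeasurable (by fun_prop)).mul hm
  have hC : 0 ≤ C := by
    have := (norm_nonneg _).trans (B 1 one_pos)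
    exact nonneg_of_mul_nonneg_left this (Real.exp_pos _)
  have key : ∀ w ∈ Metric.ball z r, ∀ t : ℝ, 0 < t →
      ‖Complex.exp (w * t) * G t‖ ≤ C * Real.exp (-r * t) := by
    intro w hw t ht
    rw [norm_mul, hnorm]
    calc Real.exp (w.re * t) * ‖G t‖ ≤ Real.exp ((α - r) * t) * (C * Real.exp (-α * t)) := by
          gcongr
          · exact hre w hw
          · exact B t ht
      _ = C * Real.exp (-r * t) := by
          rw [mul_left_comm, ← Real.exp_add]; ring_nf
  have hint : IntegrableOn (fun t : ℝ => C * Real.exp (-r * t)) (Set.Ioi 0) :=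
    (exp_neg_integrableOn_Ioi 0 hr0).const_mul C
  have hint2 : IntegrableOn (fun t : ℝ => t * (C * Real.exp (-r * t))) (Set.Ioi 0) := by
    have := Real.GammaIntegral_convergent (s := 2) (by norm_num)
    have h3 : IntegrableOn (fun t : ℝ => t ^ (1:ℝ) * Real.exp (-r * t)) (Set.Ioi 0) := by
      have := integrableOn_rpow_mul_exp_neg_mul_rpow (p := 1) (s := 1) (b := r) (by norm_num) (by norm_num) hr0
      simpa using this
    have h4 := h3.const_mul C
    refine h4.congr ?_
    refine Eventually.of_forall fun t => ?_
    simp only [Real.rpow_one]; ring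
  refine (hasDerivAt_integral_of_dominated_loc_of_deriv_le (F := fun (z : ℂ) (t : ℝ) => Complex.exp (z * t) * G t)
    (F' := fun (z : ℂ) (t : ℝ) => t * (Complex.exp (z * t) * G t)) hs
    (Eventually.of_forall hmw) ?_ ?_ ?_ hint2 ?_).2.differentiableAt
  · refine hint.mono' (hmw z) ((ae_restrict_iff' measurableSet_Ioi).2 (Eventually.of_forall fun t ht => ?_))
    exact key z (Metric.mem_ball_self hr0) t ht
  · exact (Continuous.aestronglyMeasurable (by fun_prop)).mul (hmw z)
  · refine (ae_restrict_iff' measurableSet_Ioi).2 (Eventually.of_forall fun t ht w hw => ?_)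
    have ht' : (0:ℝ) < t := ht
    rw [norm_mul]
    simp only [norm_real, Real.norm_eq_abs, abs_of_pos ht']
    gcongr
    exact key w hw t ht
  · refine Eventually.of_forall fun t w _ => ?_
    have h1 : HasDerivAt (fun w : ℂ => Complex.exp (w * t)) (Complex.exp (w * t) * (1 * t)) w :=
      ((hasDerivAt_id w).mul_const (t:ℂ)).cexp
    have := h1.mul_const (G t)
    have e : (t:ℂ) * (Complex.exp (w * t) * G t) = Complex.exp (w * t) * (1 * t) * G t := by ring
    show HasDerivAt _ ((t:ℂ) * (Complex.exp (w * t) * G t)) w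
    rw [e]; exact this

lemma q_int_inv {a T : ℝ} (ha : 0 < a) :
    (∫ t in (-T)..T, ((a:ℂ) + (t:ℂ) * I)⁻¹) = ((2 * Real.arctan (T / a) : ℝ) : ℂ) := by
  have hne : ∀ t : ℝ, ((a:ℂ) + (t:ℂ) * I) ≠ 0 := by
    intro t h
    have := congrArg Complex.re h
    simp at this; exact ha.ne' this
  have hd : ∀ t : ℝ, HasDerivAt (fun t : ℝ => ((Real.arctan (t / a) : ℝ) : ℂ) -
      I / 2 * ((Real.log (a ^ 2 + t ^ 2) : ℝ) : ℂ)) (((a:ℂ) + (t:ℂ) * I)⁻¹) t := by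
    intro t
    have hp : 0 < a ^ 2 + t ^ 2 := by positivity
    have h1 : HasDerivAt (fun t : ℝ => Real.arctan (t / a)) (1 / (1 + (t / a) ^ 2) * (1 / a)) t :=
      ((hasDerivAt_id t).div_const a).arctan
    have h2 : HasDerivAt (fun t : ℝ => Real.log (a ^ 2 + t ^ 2)) ((2 * t) / (a ^ 2 + t ^ 2)) t := by
      have := ((hasDerivAt_pow 2 t).const_add (a ^ 2)).log hp.ne'
      simpa using this
    have h3 := (h1.ofReal_comp).sub ((h2.ofReal_comp).const_mul (I / 2))
    refine h3.congr_deriv (Eq.symm ?_)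
    have hpc : (a:ℂ) ^ 2 + (t:ℂ) ^ 2 ≠ 0 := by exact_mod_cast hp.ne'
    have hac : (a:ℂ) ≠ 0 := by exact_mod_cast ha.ne'
    rw [inv_eq_iff_eq_inv, eq_comm]
    have e : (((1 / (1 + (t / a) ^ 2) * (1 / a) : ℝ)) : ℂ) = a / ((a:ℂ) ^ 2 + (t:ℂ) ^ 2) := by
      push_cast
      have : 1 + ((t:ℂ) / a) ^ 2 = ((a:ℂ) ^ 2 + t ^ 2) / a ^ 2 := by field_simp
      rw [this]; field_simp
    rw [e]
    push_cast
    have e2 : (a:ℂ) / ((a:ℂ) ^ 2 + (t:ℂ) ^ 2) - I / 2 * (2 * t / ((a:ℂ) ^ 2 + (t:ℂ) ^ 2))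
      = ((a:ℂ) - t * I) / ((a:ℂ) ^ 2 + (t:ℂ) ^ 2) := by field_simp
    rw [e2, inv_div]
    have h4 : (a:ℂ) - t * I ≠ 0 := by
      have := hne (-t); push_cast at this; intro h; apply this; linear_combination h
    rw [div_eq_iff h4]
    linear_combination ((t:ℂ)^2) * I_sq
  have hc : IntervalIntegrable (fun t : ℝ => ((a:ℂ) + (t:ℂ) * I)⁻¹) volume (-T) T := by
    apply Continuous.intervalIntegrable
    exact Continuous.inv₀ (by fun_prop) hne
  rw [intervalIntegral.integral_eq_sub_of_hasDerivAt (fun t _ => hd t) hc]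
  have : -T / a = -(T / a) := by ring
  rw [this, Real.arctan_neg]
  push_cast
  ring

/-- boundary integral of a rectangle -/
def rectInt (h : ℂ → ℂ) (a b c d : ℝ) : ℂ :=
    (∫ t in a..b, h ((t:ℂ) + (c:ℂ) * I)) - (∫ t in a..b, h ((t:ℂ) + (d:ℂ) * I)) +
      I * (∫ s in c..d, h ((b:ℂ) + (s:ℂ) * I)) - I * (∫ s in c..d, h ((a:ℂ) + (s:ℂ) * I))

lemma q_rect_inv {ε : ℝ} (hε : 0 < ε) :
    rectInt (fun w => w⁻¹) (-1) 1 (-ε) ε = 2 * π * I := by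
  unfold rectInt
  have e1 : (∫ t in (-1:ℝ)..1, ((t:ℂ) + ((-ε : ℝ):ℂ) * I)⁻¹) = I * ((2 * Real.arctan (1 / ε) : ℝ) : ℂ) := by
    rw [← q_int_inv (T := 1) hε, ← intervalIntegral.integral_const_mul]
    congr 1; ext t
    have : (t:ℂ) + ((-ε : ℝ):ℂ) * I = -I * (ε + t * I) := by
      push_cast; linear_combination (t:ℂ) * I_sq
    rw [this, mul_inv, inv_neg, inv_I, neg_neg]
  have e2 : (∫ t in (-1:ℝ)..1, ((t:ℂ) + (ε:ℂ) * I)⁻¹) = -I * ((2 * Real.arctan (1 / ε) : ℝ) : ℂ) := by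
    have h1 := intervalIntegral.integral_comp_neg (a := -1) (b := 1) (fun t : ℝ => ((t:ℂ) + (ε:ℂ) * I)⁻¹)
    rw [neg_neg] at h1
    rw [← h1, neg_mul, ← e1, ← intervalIntegral.integral_neg]
    congr 1; ext t
    rw [← inv_neg]; congr 1; push_cast; ring
  have e3 : (∫ s in (-ε)..ε, (((1:ℝ):ℂ) + (s:ℂ) * I)⁻¹) = ((2 * Real.arctan ε : ℝ) : ℂ) := by
    rw [q_int_inv one_pos, div_one]
  have e4 : (∫ s in (-ε)..ε, (((-1:ℝ):ℂ) + (s:ℂ) * I)⁻¹) = -((2 * Real.arctan ε : ℝ) : ℂ) := by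
    have h1 := intervalIntegral.integral_comp_neg (a := -ε) (b := ε) (fun s : ℝ => (((-1:ℝ):ℂ) + (s:ℂ) * I)⁻¹)
    rw [neg_neg] at h1
    rw [← h1, ← e3, ← intervalIntegral.integral_neg]
    congr 1; ext t
    rw [← inv_neg]; congr 1; push_cast; ring
  rw [e1, e2, e3, e4, one_div, Real.arctan_inv_of_pos hε]
  push_cast
  ring

lemma q_rect_prim (h G : ℂ → ℂ) {a b c d : ℝ} (hab : a ≤ b) (hcd : c ≤ d)
    (H : ∀ y : ℂ, (y.re = a ∨ y.re = b ∨ y.im = c ∨ y.im = d) → HasDerivAt G (h y) y ∧ ContinuousAt h y) :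
    rectInt h a b c d = 0 := by
  have hor : ∀ e : ℝ, e = c ∨ e = d → (∫ t in a..b, h ((t:ℂ) + (e:ℂ) * I)) = G (b + e * I) - G (a + e * I) := by
    intro e he
    have hh : ∀ t : ℝ, HasDerivAt G (h ((t:ℂ) + (e:ℂ) * I)) ((t:ℂ) + (e:ℂ) * I) ∧ ContinuousAt h ((t:ℂ) + (e:ℂ) * I) := by
      intro t; apply H; simp; tauto
    refine intervalIntegral.integral_eq_sub_of_hasDerivAt (f := fun t : ℝ => G (t + e * I)) (fun t _ => ?_) ?_
    · have h1 : HasDerivAt (fun z : ℂ => z + e * I) 1 (t:ℂ) := (hasDerivAt_id _).add_const _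
      have := (HasDerivAt.comp (t:ℂ) (hh t).1 h1).comp_ofReal
      simpa using this
    · apply ContinuousOn.intervalIntegrable
      intro t _
      exact (ContinuousAt.comp (f := fun t : ℝ => (t:ℂ) + (e:ℂ) * I) (hh t).2 (by fun_prop)).continuousWithinAt
  have ver : ∀ e : ℝ, e = a ∨ e = b → I * (∫ t in c..d, h ((e:ℂ) + (t:ℂ) * I)) = G (e + d * I) - G (e + c * I) := by
    intro e he
    have hh : ∀ t : ℝ, HasDerivAt G (h ((e:ℂ) + (t:ℂ) * I)) ((e:ℂ) + (t:ℂ) * I) ∧ ContinuousAt h ((e:ℂ) + (t:ℂ) * I) := by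
      intro t; apply H; simp; tauto
    rw [← intervalIntegral.integral_const_mul]
    refine intervalIntegral.integral_eq_sub_of_hasDerivAt (f := fun t : ℝ => G (e + t * I)) (fun t _ => ?_) ?_
    · have h1 : HasDerivAt (fun z : ℂ => e + z * I) (1 * I) (t:ℂ) := ((hasDerivAt_id _).mul_const _).const_add _
      have := (HasDerivAt.comp (t:ℂ) (hh t).1 h1).comp_ofReal
      refine this.congr_deriv ?_
      ring
    · apply ContinuousOn.intervalIntegrable
      intro t _
      refine ContinuousAt.continuousWithinAt ?_
      exact continuousAt_const.mul (ContinuousAt.comp (f := fun t : ℝ => (e:ℂ) + (t:ℂ) * I) (hh t).2 (by fun_prop))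
  unfold rectInt
  rw [hor c (by simp), hor d (by simp), ver a (by simp), ver b (by simp)]
  ring

lemma q_rect_add (h1 h2 : ℂ → ℂ) {a b c d : ℝ}
    (H : ∀ y : ℂ, (y.re = a ∨ y.re = b ∨ y.im = c ∨ y.im = d) → ContinuousAt h1 y ∧ ContinuousAt h2 y) :
    rectInt (fun y => h1 y + h2 y) a b c d = rectInt h1 a b c d + rectInt h2 a b c d := by
  have hor : ∀ e : ℝ, e = c ∨ e = d → (∫ t in a..b, (h1 ((t:ℂ) + (e:ℂ) * I) + h2 ((t:ℂ) + (e:ℂ) * I)))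
     = (∫ t in a..b, h1 ((t:ℂ) + (e:ℂ) * I)) + (∫ t in a..b, h2 ((t:ℂ) + (e:ℂ) * I)) := by
    intro e he
    have hh : ∀ t : ℝ, ContinuousAt h1 ((t:ℂ) + (e:ℂ) * I) ∧ ContinuousAt h2 ((t:ℂ) + (e:ℂ) * I) := by
      intro t; apply H; simp; tauto
    apply intervalIntegral.integral_add <;>
    · apply ContinuousOn.intervalIntegrable
      intro t _
      first
      | exact (ContinuousAt.comp (f := fun t : ℝ => (t:ℂ) + (e:ℂ) * I) (hh t).1 (by fun_prop)).continuousWithinAt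
      | exact (ContinuousAt.comp (f := fun t : ℝ => (t:ℂ) + (e:ℂ) * I) (hh t).2 (by fun_prop)).continuousWithinAt
  have ver : ∀ e : ℝ, e = a ∨ e = b → (∫ t in c..d, (h1 ((e:ℂ) + (t:ℂ) * I) + h2 ((e:ℂ) + (t:ℂ) * I)))
     = (∫ t in c..d, h1 ((e:ℂ) + (t:ℂ) * I)) + (∫ t in c..d, h2 ((e:ℂ) + (t:ℂ) * I)) := by
    intro e he
    have hh : ∀ t : ℝ, ContinuousAt h1 ((e:ℂ) + (t:ℂ) * I) ∧ ContinuousAt h2 ((e:ℂ) + (t:ℂ) * I) := by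
      intro t; apply H; simp; tauto
    apply intervalIntegral.integral_add <;>
    · apply ContinuousOn.intervalIntegrable
      intro t _
      first
      | exact (ContinuousAt.comp (f := fun t : ℝ => (e:ℂ) + (t:ℂ) * I) (hh t).1 (by fun_prop)).continuousWithinAt
      | exact (ContinuousAt.comp (f := fun t : ℝ => (e:ℂ) + (t:ℂ) * I) (hh t).2 (by fun_prop)).continuousWithinAt
  unfold rectInt
  rw [hor c (by simp), hor d (by simp), ver a (by simp), ver b (by simp)]
  ring

lemma q_rect_congr (h1 h2 : ℂ → ℂ) {a b c d : ℝ}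
    (H : ∀ y : ℂ, (y.re = a ∨ y.re = b ∨ y.im = c ∨ y.im = d) → h1 y = h2 y) :
    rectInt h1 a b c d = rectInt h2 a b c d := by
  unfold rectInt
  have k1 : ∀ e : ℝ, e = c ∨ e = d → ∀ t : ℝ, h1 ((t:ℂ) + (e:ℂ) * I) = h2 ((t:ℂ) + (e:ℂ) * I) := by
    intro e he t; apply H; simp; tauto
  have k2 : ∀ e : ℝ, e = a ∨ e = b → ∀ t : ℝ, h1 ((e:ℂ) + (t:ℂ) * I) = h2 ((e:ℂ) + (t:ℂ) * I) := by
    intro e he t; apply H; simp; tauto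
  simp only [k1 c (by simp), k1 d (by simp), k2 a (by simp), k2 b (by simp)]

lemma q_rect_smul (γ : ℂ) (h : ℂ → ℂ) (a b c d : ℝ) :
    rectInt (fun y => γ * h y) a b c d = γ * rectInt h a b c d := by
  unfold rectInt
  simp only [intervalIntegral.integral_const_mul]
  ring

/-- Residue theorem for a triple pole at 0 in the rectangle `[-1,1] × [-ε,ε]`. -/
lemma q_residue (h : ℂ → ℂ) {ε : ℝ} (hε : 0 < ε) (β γ : ℂ)
    (hd : ∀ y : ℂ, y ≠ 0 → |y.re| ≤ 1 → |y.im| ≤ ε → DifferentiableAt ℂ h y)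
    (ho : (fun w => h w - ((w ^ 3)⁻¹ + β * (w ^ 2)⁻¹ + γ * w⁻¹)) =O[𝓝[≠] 0] (fun _ => (1:ℂ))) :
    rectInt h (-1) 1 (-ε) ε = 2 * π * I * γ := by
  set H : ℂ → ℂ := fun w => h w - ((w ^ 3)⁻¹ + β * (w ^ 2)⁻¹ + γ * w⁻¹) with hH
  set L := limUnder (𝓝[≠] (0:ℂ)) H
  have hHd : ∀ y : ℂ, y ≠ 0 → |y.re| ≤ 1 → |y.im| ≤ ε → DifferentiableAt ℂ H y := by
    intro y h1 h2 h3
    have := hd y h1 h2 h3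
    have h4 : y ^ 3 ≠ 0 := pow_ne_zero _ h1
    have h5 : y ^ 2 ≠ 0 := pow_ne_zero _ h1
    apply DifferentiableAt.sub this
    fun_prop (disch := assumption)
  set S : Set ℂ := {y | |y.re| ≤ 1 ∧ |y.im| ≤ ε} with hS
  have hSn : S ∈ 𝓝 (0:ℂ) := by
    have : {y : ℂ | |y.re| < 1 ∧ |y.im| < ε} ∈ 𝓝 (0:ℂ) := by
      apply IsOpen.mem_nhds
      · exact (isOpen_lt (f := fun y : ℂ => |y.re|) (g := fun _ => (1:ℝ)) (by fun_prop) (by fun_prop)).inter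
          (isOpen_lt (f := fun y : ℂ => |y.im|) (g := fun _ => ε) (by fun_prop) (by fun_prop))
      · simpa using hε
    filter_upwards [this] with y hy
    exact ⟨hy.1.le, hy.2.le⟩
  have hup : DifferentiableOn ℂ (Function.update H 0 L) S := by
    apply differentiableOn_update_limUnder_of_isLittleO hSn
    · intro y hy
      exact (hHd y hy.2 hy.1.1 hy.1.2).differentiableWithinAt
    · apply IsBoundedUnder.isLittleO_sub_self_inv
      have h1 : (fun w => H w - H 0) =O[𝓝[≠] 0] (fun _ => (1:ℂ)) :=
        ho.sub (Asymptotics.isBigO_const_const _ one_ne_zero _)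
      have := (Asymptotics.isBigO_one_iff (F := ℂ)).1 h1
      exact this
  have z1 : rectInt (Function.update H 0 L) (-1) 1 (-ε) ε = 0 := by
    have := Complex.integral_boundary_rect_eq_zero_of_differentiableOn (Function.update H 0 L) ⟨-1, -ε⟩ ⟨1, ε⟩ (by
      refine hup.mono ?_
      intro y hy
      rw [mem_reProdIm] at hy
      simp only [Set.uIcc_of_le (show (-1:ℝ) ≤ 1 by norm_num), Set.uIcc_of_le (show -ε ≤ ε by linarith), Set.mem_Icc] at hy
      exact ⟨abs_le.2 hy.1, abs_le.2 hy.2⟩)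
    unfold rectInt
    simpa [smul_eq_mul] using this
  have hne : ∀ y : ℂ, (y.re = -1 ∨ y.re = 1 ∨ y.im = -ε ∨ y.im = ε) → y ≠ 0 := by
    rintro y hy rfl
    simp at hy
    rcases hy with h | h
    · exact hε.ne' h
    · exact hε.ne h
  have z2 : rectInt H (-1) 1 (-ε) ε = 0 := by
    rw [← z1]
    apply q_rect_congr
    intro y hy
    rw [Function.update_of_ne (hne y hy)]
  have z3 : rectInt (fun w : ℂ => (w ^ 3)⁻¹) (-1) 1 (-ε) ε = 0 := by
    apply q_rect_prim _ (fun w => -1/2 * (w ^ 2)⁻¹) (by norm_num) (by linarith)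
    intro y hy
    have := hne y hy
    constructor
    · have h1 := ((hasDerivAt_pow 2 y).fun_inv (pow_ne_zero 2 this)).const_mul (-1/2)
      refine h1.congr_deriv ?_
      simp only [Nat.cast_ofNat]
      field_simp
      norm_num
    · have h4 : y ^ 3 ≠ 0 := pow_ne_zero _ this
      fun_prop (disch := assumption)
  have z4 : rectInt (fun w : ℂ => (w ^ 2)⁻¹) (-1) 1 (-ε) ε = 0 := by
    apply q_rect_prim _ (fun w => - (w)⁻¹) (by norm_num) (by linarith)
    intro y hy
    have := hne y hy
    constructor
    · have h1 := (hasDerivAt_inv this).neg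
      refine h1.congr_deriv ?_
      simp
    · have h4 : y ^ 2 ≠ 0 := pow_ne_zero _ this
      fun_prop (disch := assumption)
  have z5 : rectInt (fun y => H y + (((y ^ 3)⁻¹ + β * (y ^ 2)⁻¹) + γ * y⁻¹)) (-1) 1 (-ε) ε = 2 * π * I * γ := by
    have c3 : ∀ y : ℂ, y ≠ 0 → ContinuousAt (fun y : ℂ => (y ^ 3)⁻¹) y := by
      intro y hy
      have h4 : y ^ 3 ≠ 0 := pow_ne_zero _ hy
      fun_prop (disch := assumption)
    have c2 : ∀ y : ℂ, y ≠ 0 → ContinuousAt (fun y : ℂ => β * (y ^ 2)⁻¹) y := by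
      intro y hy
      have h4 : y ^ 2 ≠ 0 := pow_ne_zero _ hy
      fun_prop (disch := assumption)
    have c1 : ∀ y : ℂ, y ≠ 0 → ContinuousAt (fun y : ℂ => γ * (y)⁻¹) y := by
      intro y hy
      fun_prop (disch := assumption)
    have c4 : ∀ y : ℂ, y ≠ 0 → ContinuousAt (fun y : ℂ => ((y ^ 3)⁻¹ + β * (y ^ 2)⁻¹) + γ * y⁻¹) y :=
      fun y hy => ((c3 y hy).add (c2 y hy)).add (c1 y hy)
    unfold rectInt
    have hor : ∀ e : ℝ, (e = -ε ∨ e = ε) → IntervalIntegrable (fun t : ℝ => H ((t:ℂ) + (e:ℂ) * I)) volume (-1) 1 := by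
      intro e he
      apply ContinuousOn.intervalIntegrable
      rw [Set.uIcc_of_le (show (-1:ℝ) ≤ 1 by norm_num)]
      refine q_cont_line H _ e (fun t ht => hHd _ (hne _ (by simp; tauto)) (by simpa [abs_le] using ht) ?_)
      rcases he with rfl | rfl <;> simp [abs_of_pos hε]
    have ver : ∀ e : ℝ, (e = -1 ∨ e = 1) → IntervalIntegrable (fun t : ℝ => H ((e:ℂ) + (t:ℂ) * I)) volume (-ε) ε := by
      intro e he
      apply ContinuousOn.intervalIntegrable
      rw [Set.uIcc_of_le (show -ε ≤ ε by linarith)]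
      refine q_cont_vert H _ e (fun t ht => hHd _ (hne _ (by simp; tauto)) ?_ (by simpa [abs_le] using ht))
      rcases he with rfl | rfl <;> simp
    have hor2 : ∀ e : ℝ, (e = -ε ∨ e = ε) → IntervalIntegrable (fun t : ℝ => (((((t:ℂ) + (e:ℂ) * I)) ^ 3)⁻¹ + β * ((((t:ℂ) + (e:ℂ) * I)) ^ 2)⁻¹) + γ * (((t:ℂ) + (e:ℂ) * I))⁻¹) volume (-1) 1 := by
      intro e he
      apply Continuous.intervalIntegrable
      rw [continuous_iff_continuousAt]
      intro t
      exact ContinuousAt.comp (f := fun t : ℝ => (t:ℂ) + (e:ℂ) * I) (c4 _ (hne _ (by simp; tauto))) (by fun_prop)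
    have ver2 : ∀ e : ℝ, (e = -1 ∨ e = 1) → IntervalIntegrable (fun t : ℝ => (((((e:ℂ) + (t:ℂ) * I)) ^ 3)⁻¹ + β * ((((e:ℂ) + (t:ℂ) * I)) ^ 2)⁻¹) + γ * (((e:ℂ) + (t:ℂ) * I))⁻¹) volume (-ε) ε := by
      intro e he
      apply Continuous.intervalIntegrable
      rw [continuous_iff_continuousAt]
      intro t
      exact ContinuousAt.comp (f := fun t : ℝ => (e:ℂ) + (t:ℂ) * I) (c4 _ (hne _ (by simp; tauto))) (by fun_prop)
    rw [intervalIntegral.integral_add (hor _ (by simp)) (hor2 _ (by simp)),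
      intervalIntegral.integral_add (hor _ (by simp)) (hor2 _ (by simp)),
      intervalIntegral.integral_add (ver _ (by simp)) (ver2 _ (by simp)),
      intervalIntegral.integral_add (ver _ (by simp)) (ver2 _ (by simp))]
    have w2 : rectInt (fun y => (y ^ 3)⁻¹ + β * (y ^ 2)⁻¹) (-1) 1 (-ε) ε = 0 := by
      rw [q_rect_add _ _ (fun y hy => ⟨c3 y (hne y hy), c2 y (hne y hy)⟩), q_rect_smul, z3, z4]; simp
    have w3 : rectInt (fun y => ((y ^ 3)⁻¹ + β * (y ^ 2)⁻¹) + γ * y⁻¹) (-1) 1 (-ε) ε = 2 * π * I * γ := by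
      rw [q_rect_add (fun y => (y ^ 3)⁻¹ + β * (y ^ 2)⁻¹) _ (fun y hy => ⟨(c3 y (hne y hy)).add (c2 y (hne y hy)), c1 y (hne y hy)⟩), w2, q_rect_smul, q_rect_inv hε]
      ring
    unfold rectInt at w3 z2
    linear_combination w3 + z2
  rw [← z5]
  apply q_rect_congr
  intro y hy
  simp only [hH]; ring

def qh (b : ℝ) (z w : ℂ) : ℂ :=
  Complex.exp (-2 * I * z * w) / (w * Complex.sinh ((b:ℂ) * w) * Complex.sinh ((b:ℂ)⁻¹ * w))

lemma q_normSq_sinh (w : ℂ) : ‖Complex.sinh w‖ ^ 2 = Real.sinh w.re ^ 2 + Real.sin w.im ^ 2 := by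
  have h : Complex.sinh w = ((Real.sinh w.re * Real.cos w.im : ℝ) : ℂ) +
      ((Real.cosh w.re * Real.sin w.im : ℝ) : ℂ) * I := by
    conv_lhs => rw [← re_add_im w]
    rw [Complex.sinh_add, Complex.cosh_mul_I, Complex.sinh_mul_I]
    push_cast; ring
  rw [h, ← Complex.normSq_eq_norm_sq, Complex.normSq_add_mul_I]
  have h1 := Real.cosh_sq w.re
  have h2 := Real.sin_sq_add_cos_sq w.im
  have h3 : Real.cos w.im ^ 2 = 1 - Real.sin w.im ^ 2 := by linarith
  rw [mul_pow, mul_pow, h1, h3]; ring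

lemma q_sinh_lower1 (w : ℂ) : |Real.sin w.im| * Real.exp |w.re| / 2 ≤ ‖Complex.sinh w‖ := by
  have h1 : Real.exp |w.re| / 2 ≤ Real.cosh w.re := by
    rw [← Real.cosh_abs, Real.cosh_eq]; have := Real.exp_pos (-|w.re|); linarith
  have h2 : |Real.sin w.im| * Real.cosh w.re ≤ ‖Complex.sinh w‖ := by
    refine (sq_le_sq₀ (mul_nonneg (abs_nonneg _) (Real.cosh_pos _).le) (norm_nonneg _)).1 ?_
    rw [q_normSq_sinh, mul_pow, sq_abs, Real.cosh_sq]
    have := Real.sin_sq_le_one w.im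
    nlinarith [sq_nonneg (Real.sinh w.re)]
  calc _ = |Real.sin w.im| * (Real.exp |w.re| / 2) := by ring
    _ ≤ |Real.sin w.im| * Real.cosh w.re := by gcongr
    _ ≤ _ := h2

lemma q_sinh_lower2 (w : ℂ) {m : ℝ} (hw : m ≤ |w.re|) :
    (1 - Real.exp (-2 * m)) / 2 * Real.exp |w.re| ≤ ‖Complex.sinh w‖ := by
  have h1 : Real.sinh |w.re| ≤ ‖Complex.sinh w‖ := by
    refine (sq_le_sq₀ (Real.sinh_nonneg_iff.2 (abs_nonneg _)) (norm_nonneg _)).1 ?_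
    rw [q_normSq_sinh]
    have : Real.sinh |w.re| ^ 2 = Real.sinh w.re ^ 2 := by
      rcases abs_cases w.re with h | h <;> rw [h.1]
      rw [Real.sinh_neg]; ring
    rw [this]; nlinarith [sq_nonneg (Real.sin w.im)]
  refine le_trans ?_ h1
  rw [Real.sinh_eq]
  have : Real.exp (-|w.re|) = Real.exp |w.re| * Real.exp (-2 * |w.re|) := by
    rw [← Real.exp_add]; ring_nf
  rw [this]
  have h3 : Real.exp (-2 * |w.re|) ≤ Real.exp (-2 * m) := Real.exp_le_exp.2 (by linarith)
  have := Real.exp_pos |w.re|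
  nlinarith

lemma q_sinh_ne (w : ℂ) (h0 : w ≠ 0) (h : |w.im| < π) : Complex.sinh w ≠ 0 := by
  intro hs
  have h1 := q_normSq_sinh w
  rw [hs, norm_zero] at h1
  have h2 : Real.sinh w.re ^ 2 = 0 := by nlinarith [sq_nonneg (Real.sin w.im), sq_nonneg (Real.sinh w.re)]
  have h3 : Real.sin w.im ^ 2 = 0 := by nlinarith [sq_nonneg (Real.sin w.im), sq_nonneg (Real.sinh w.re)]
  have h4 : w.re = 0 := Real.sinh_eq_zero.1 (pow_eq_zero_iff two_ne_zero |>.1 h2)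
  have h5 : w.im = 0 := (Real.sin_eq_zero_iff_of_lt_of_lt (abs_lt.1 h).1 (abs_lt.1 h).2).1
    (pow_eq_zero_iff two_ne_zero |>.1 h3)
  exact h0 (Complex.ext h4 h5)

lemma q_h_diff {b : ℝ} (hb : 0 < b) (hb1 : b < 1) (z w : ℂ) (h0 : w ≠ 0) (h : |w.im| < π * b) :
    DifferentiableAt ℂ (qh b z) w := by
  unfold qh
  have hbc : (b:ℂ) ≠ 0 := by exact_mod_cast hb.ne'
  have h1 : Complex.sinh ((b:ℂ) * w) ≠ 0 := by
    apply q_sinh_ne _ (mul_ne_zero hbc h0)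
    simp only [mul_im, ofReal_re, ofReal_im, zero_mul, add_zero, abs_mul, abs_of_pos hb]
    nlinarith [Real.pi_pos, abs_nonneg w.im]
  have h2 : Complex.sinh ((b:ℂ)⁻¹ * w) ≠ 0 := by
    apply q_sinh_ne _ (mul_ne_zero (inv_ne_zero hbc) h0)
    rw [← ofReal_inv]
    simp only [mul_im, ofReal_re, ofReal_im, zero_mul, add_zero, abs_mul, abs_of_pos (inv_pos.2 hb)]
    rw [inv_mul_lt_iff₀ hb]; linarith
  have h3 : w * Complex.sinh ((b:ℂ) * w) * Complex.sinh ((b:ℂ)⁻¹ * w) ≠ 0 :=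
    mul_ne_zero (mul_ne_zero h0 h1) h2
  apply DifferentiableAt.div
  · fun_prop
  · apply DifferentiableAt.mul
    · apply DifferentiableAt.mul (by fun_prop)
      exact (Complex.differentiable_sinh _).comp w (by fun_prop)
    · exact (Complex.differentiable_sinh _).comp w (by fun_prop)
  · exact h3

open Asymptotics in
lemma q_sinh_O (c : ℂ) : (fun w : ℂ => Complex.sinh (c * w) - (c * w + (c * w) ^ 3 / 6)) =O[𝓝 0] (fun w => w ^ 5) := by
  have e := Complex.exp_sub_sum_range_isBigO_pow 5
  have t1 : Tendsto (fun w : ℂ => c * w) (𝓝 0) (𝓝 0) := by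
    have : Continuous (fun w : ℂ => c * w) := by fun_prop
    simpa using this.tendsto 0
  have t2 : Tendsto (fun w : ℂ => -(c * w)) (𝓝 0) (𝓝 0) := by
    have : Continuous (fun w : ℂ => -(c * w)) := by fun_prop
    simpa using this.tendsto 0
  have e1 := e.comp_tendsto t1
  have e2 := e.comp_tendsto t2
  have o1 : ((fun w : ℂ => w ^ 5) ∘ (fun w => c * w)) =O[𝓝 0] (fun w : ℂ => w ^ 5) := by
    have : ((fun w : ℂ => w ^ 5) ∘ (fun w => c * w)) = fun w => c ^ 5 * w ^ 5 := by
      ext w; simp [mul_pow]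
    rw [this]; exact isBigO_const_mul_self _ _ _
  have o2 : ((fun w : ℂ => w ^ 5) ∘ (fun w => -(c * w))) =O[𝓝 0] (fun w : ℂ => w ^ 5) := by
    have : ((fun w : ℂ => w ^ 5) ∘ (fun w => -(c * w))) = fun w => (-c) ^ 5 * w ^ 5 := by
      ext w; simp; ring
    rw [this]; exact isBigO_const_mul_self _ _ _
  have := ((e1.trans o1).sub (e2.trans o2)).const_mul_left (1/2 : ℂ)
  refine this.congr_left ?_
  intro w
  simp only [Function.comp, Finset.sum_range_succ, Finset.sum_range_zero, Nat.factorial]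
  rw [Complex.sinh]
  push_cast
  ring

open Asymptotics in
lemma q_h_O {b : ℝ} (hb : 0 < b) (z : ℂ) :
    (fun w => qh b z w - ((w ^ 3)⁻¹ + (-2 * I * z) * (w ^ 2)⁻¹ +
      (-2 * z ^ 2 - ((b:ℂ) ^ 2 + ((b:ℂ)⁻¹) ^ 2) / 6) * w⁻¹)) =O[𝓝[≠] 0] (fun _ => (1:ℂ)) := by
  have hbc : (b:ℂ) ≠ 0 := by exact_mod_cast hb.ne'
  have hbi : (b:ℂ) * (b:ℂ)⁻¹ = 1 := mul_inv_cancel₀ hbc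
  have bd : ∀ F : ℂ → ℂ, Continuous F → F =O[𝓝 0] (fun _ => (1:ℂ)) := by
    intro F hF
    exact (hF.tendsto 0).isBigO_one ℂ
  -- sinh product
  set B : ℂ := (b:ℂ)⁻¹
  set σ : ℂ := ((b:ℂ) ^ 2 + B ^ 2) / 6 with hσ
  have s1 := q_sinh_O (b:ℂ)
  have s2 := q_sinh_O B
  have o2 : (fun w : ℂ => Complex.sinh (B * w)) =O[𝓝 0] (fun w => w) := by
    have : HasDerivAt (fun w : ℂ => Complex.sinh (B * w)) (Complex.cosh (B * 0) * (B * 1)) 0 :=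
      ((hasDerivAt_id (0:ℂ)).const_mul B).csinh
    simpa using this.isBigO_sub
  have l1 : (fun w : ℂ => (b:ℂ) * w + ((b:ℂ) * w) ^ 3 / 6) =O[𝓝 0] (fun w => w) := by
    have : (fun w : ℂ => (b:ℂ) * w + ((b:ℂ) * w) ^ 3 / 6) = fun w => w * ((b:ℂ) + (b:ℂ) ^ 3 * w ^ 2 / 6) := by
      ext w; ring
    rw [this]
    simpa using (isBigO_refl (fun w : ℂ => w) (𝓝 0)).mul (bd (fun w => (b:ℂ) + (b:ℂ) ^ 3 * w ^ 2 / 6) (by fun_prop))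
  have p : (fun w : ℂ => Complex.sinh ((b:ℂ) * w) * Complex.sinh (B * w) - (w ^ 2 + σ * w ^ 4)) =O[𝓝 0] (fun w => w ^ 6) := by
    have a1 := s1.mul o2
    have a2 := l1.mul s2
    have a3 : (fun w : ℂ => w ^ 6 / 36) =O[𝓝 0] (fun w => w ^ 6) := by
      have : (fun w : ℂ => w ^ 6 / 36) = fun w => (1/36) * w ^ 6 := by ext w; ring
      rw [this]; exact isBigO_const_mul_self _ _ _
    have a4 : (fun w : ℂ => w ^ 5 * w) =O[𝓝 0] (fun w => w ^ 6) := by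
      have : (fun w : ℂ => w ^ 5 * w) = fun w => w ^ 6 := by ext w; ring
      rw [this]
    have a5 : (fun w : ℂ => w * w ^ 5) =O[𝓝 0] (fun w => w ^ 6) := by
      have : (fun w : ℂ => w * w ^ 5) = fun w => w ^ 6 := by ext w; ring
      rw [this]
    have := ((a1.trans a4).add (a2.trans a5)).add a3
    refine this.congr_left ?_
    intro w
    have hb3 : (b:ℂ) ^ 3 * B ^ 3 = 1 := by rw [← mul_pow, hbi, one_pow]
    have hb4 : (b:ℂ) ^ 3 * B = b ^ 2 := by linear_combination (b:ℂ)^2 * hbi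
    have hb5 : (b:ℂ) * B ^ 3 = B ^ 2 := by linear_combination B^2 * hbi
    rw [hσ]
    linear_combination (-1:ℂ) * (w ^ 2 * hbi + w ^ 4 / 6 * hb4 + w ^ 4 / 6 * hb5 + w ^ 6 / 36 * hb3)
  have ex : (fun w : ℂ => Complex.exp (-2 * I * z * w) - (1 + (-2 * I * z) * w - 2 * z ^ 2 * w ^ 2)) =O[𝓝 0] (fun w => w ^ 3) := by
    have e := Complex.exp_sub_sum_range_isBigO_pow 3
    have t1 : Tendsto (fun w : ℂ => -2 * I * z * w) (𝓝 0) (𝓝 0) := by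
      have : Continuous (fun w : ℂ => -2 * I * z * w) := by fun_prop
      simpa using this.tendsto 0
    have e1 := e.comp_tendsto t1
    have o1 : ((fun w : ℂ => w ^ 3) ∘ (fun w => -2 * I * z * w)) =O[𝓝 0] (fun w : ℂ => w ^ 3) := by
      have : ((fun w : ℂ => w ^ 3) ∘ (fun w => -2 * I * z * w)) = fun w => (-2 * I * z) ^ 3 * w ^ 3 := by
        ext w; simp only [Function.comp]; ring
      rw [this]; exact isBigO_const_mul_self _ _ _
    refine (e1.trans o1).congr_left ?_
    intro w
    simp only [Function.comp, Finset.sum_range_succ, Finset.sum_range_zero, Nat.factorial]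
    push_cast
    linear_combination (-2 * z ^ 2 * w ^ 2) * I_sq
  have N : (fun w : ℂ => Complex.exp (-2 * I * z * w) * w ^ 2 - (1 + (-2 * I * z) * w + (-2 * z ^ 2 - σ) * w ^ 2) *
      (Complex.sinh ((b:ℂ) * w) * Complex.sinh (B * w))) =O[𝓝 0] (fun w => w ^ 5) := by
    have a1 : (fun w : ℂ => (Complex.exp (-2 * I * z * w) - (1 + (-2 * I * z) * w - 2 * z ^ 2 * w ^ 2)) * w ^ 2) =O[𝓝 0] (fun w => w ^ 5) := by
      have := ex.mul (isBigO_refl (fun w : ℂ => w ^ 2) (𝓝 0))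
      refine this.congr_right ?_
      intro w; ring
    have a2 : (fun w : ℂ => (1 + (-2 * I * z) * w + (-2 * z ^ 2 - σ) * w ^ 2) * (Complex.sinh ((b:ℂ) * w) * Complex.sinh (B * w) - (w ^ 2 + σ * w ^ 4))) =O[𝓝 0] (fun w => w ^ 5) := by
      have := (bd (fun w => (1 + (-2 * I * z) * w + (-2 * z ^ 2 - σ) * w ^ 2)) (by fun_prop)).mul p
      refine this.trans ?_
      have h5 : (fun w : ℂ => w ^ 5 * w) =O[𝓝 0] (fun w : ℂ => w ^ 5 * 1) :=
        (isBigO_refl (fun w : ℂ => w ^ 5) (𝓝 0)).mul (bd (fun w => w) continuous_id)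
      refine (h5.congr_left ?_).congr_right ?_
      · intro w; ring
      · intro w; ring
    have a3 : (fun w : ℂ => w ^ 5 * (σ * ((-2 * I * z) + (-2 * z ^ 2 - σ) * w))) =O[𝓝 0] (fun w => w ^ 5) := by
      exact ((isBigO_refl (fun w : ℂ => w ^ 5) (𝓝 0)).mul (bd (fun w => (σ * ((-2 * I * z) + (-2 * z ^ 2 - σ) * w))) (by fun_prop))).congr_right (fun w => by ring)
    refine ((a1.sub a2).sub a3).congr_left ?_
    intro w; ring
  have D : (fun w : ℂ => w ^ 2) =O[𝓝 0] (fun w : ℂ => Complex.sinh ((b:ℂ) * w) * Complex.sinh (B * w)) := by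
    have h1 : (fun w : ℂ => Complex.sinh ((b:ℂ) * w) * Complex.sinh (B * w) - w ^ 2) =o[𝓝 0] (fun w => w ^ 2) := by
      have h2 : (fun w : ℂ => σ * w ^ 4) =o[𝓝 0] (fun w : ℂ => w ^ 2) :=
        (isLittleO_pow_pow (by norm_num : 2 < 4)).const_mul_left σ
      have h3 := p.trans_isLittleO (isLittleO_pow_pow (by norm_num : 2 < 6))
      refine (h3.add h2).congr_left ?_
      intro w; ring
    have := h1.right_isBigO_add
    refine this.congr_right ?_
    intro w; ring
  have N' := N.mono (nhdsWithin_le_nhds (s := {(0:ℂ)}ᶜ))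
  have D' := D.mono (nhdsWithin_le_nhds (s := {(0:ℂ)}ᶜ))
  have D2 : (fun w : ℂ => w ^ 5) =O[𝓝[≠] 0] (fun w : ℂ => w ^ 3 * (Complex.sinh ((b:ℂ) * w) * Complex.sinh (B * w))) := by
    refine ((isBigO_refl (fun w : ℂ => w ^ 3) (𝓝[≠] 0)).mul D').congr_left ?_
    intro w; ring
  have ND := N'.trans D2
  have hnz : ∀ᶠ w in 𝓝[≠] (0:ℂ), w ≠ 0 ∧ Complex.sinh ((b:ℂ) * w) ≠ 0 ∧ Complex.sinh (B * w) ≠ 0 := by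
    have n0 : ∀ᶠ w in 𝓝[≠] (0:ℂ), w ≠ 0 := eventually_mem_nhdsWithin
    have n1 := D'.eq_zero_imp
    filter_upwards [n0, n1] with w h0 h1
    refine ⟨h0, ?_, ?_⟩
    · intro h; exact h0 (pow_eq_zero_iff two_ne_zero |>.1 (h1 (by rw [h]; simp)))
    · intro h; exact h0 (pow_eq_zero_iff two_ne_zero |>.1 (h1 (by rw [h]; simp)))
  have fin := ND.mul (isBigO_refl (fun w : ℂ => (w ^ 3 * (Complex.sinh ((b:ℂ) * w) * Complex.sinh (B * w)))⁻¹) (𝓝[≠] 0))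
  refine (fin.congr' ?_ ?_)
  · filter_upwards [hnz] with w hw
    obtain ⟨h0, h1, h2⟩ := hw
    unfold qh
    generalize Complex.sinh ((b:ℂ) * w) = S1 at *
    change _ = Complex.exp (-2 * I * z * w) / (w * S1 * Complex.sinh (B * w)) - _
    generalize Complex.sinh (B * w) = S2 at *
    generalize Complex.exp (-2 * I * z * w) = E
    generalize -2 * z ^ 2 - σ = K
    field_simp
  · filter_upwards [hnz] with w hw
    obtain ⟨h0, h1, h2⟩ := hw
    exact mul_inv_cancel₀ (mul_ne_zero (pow_ne_zero _ h0) (mul_ne_zero h1 h2))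

lemma q_den {b : ℝ} (hb : 0 < b) (hb1 : b < 1) : ∃ c : ℝ, 0 < c ∧ ∀ w : ℂ,
    (|w.im| = π * b / 2 ∨ 1 ≤ |w.re|) → c * Real.exp ((b + b⁻¹) * |w.re|) ≤
      ‖w * Complex.sinh ((b:ℂ) * w) * Complex.sinh ((b:ℂ)⁻¹ * w)‖ := by
  have hpi := Real.pi_pos
  have hbi : 0 < b⁻¹ := inv_pos.2 hb
  have hs : 0 < Real.sin (b * (π * b / 2)) := by
    apply Real.sin_pos_of_pos_of_lt_pi
    · positivity
    · nlinarith [mul_pos hb hb, mul_pos hpi hb]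
  have he : ∀ m : ℝ, 0 < m → 0 < (1 - Real.exp (-2 * m)) / 2 := by
    intro m hm
    have : Real.exp (-2 * m) < 1 := Real.exp_lt_one_iff.2 (by linarith)
    linarith
  have reb : ∀ w : ℂ, ((b:ℂ) * w).re = b * w.re := by intro w; simp
  have imb : ∀ w : ℂ, ((b:ℂ) * w).im = b * w.im := by intro w; simp
  have rei : ∀ w : ℂ, ((b:ℂ)⁻¹ * w).re = b⁻¹ * w.re := by intro w; rw [← ofReal_inv]; simp
  have imi : ∀ w : ℂ, ((b:ℂ)⁻¹ * w).im = b⁻¹ * w.im := by intro w; rw [← ofReal_inv]; simp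
  have expsplit : ∀ w : ℂ, Real.exp ((b + b⁻¹) * |w.re|) = Real.exp (b * |w.re|) * Real.exp (b⁻¹ * |w.re|) := by
    intro w; rw [← Real.exp_add]; ring_nf
  obtain ⟨c1, hc1⟩ : ∃ c1 : ℝ, c1 = (π * b / 2) * (Real.sin (b * (π * b / 2)) / 2) * (1 / 2) := ⟨_, rfl⟩
  obtain ⟨c2, hc2⟩ : ∃ c2 : ℝ, c2 = 1 * ((1 - Real.exp (-2 * b)) / 2) * ((1 - Real.exp (-2 * b⁻¹)) / 2) := ⟨_, rfl⟩
  have p1 : 0 < c1 := by rw [hc1]; positivity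
  have p2 : 0 < c2 := by rw [hc2]; have := he b hb; have := he _ hbi; positivity
  have key : ∀ (w : ℂ) (k1 k2 k3 : ℝ), 0 ≤ k1 → 0 ≤ k2 → 0 ≤ k3 → k1 ≤ ‖w‖ →
      k2 * Real.exp (b * |w.re|) ≤ ‖Complex.sinh ((b:ℂ) * w)‖ →
      k3 * Real.exp (b⁻¹ * |w.re|) ≤ ‖Complex.sinh ((b:ℂ)⁻¹ * w)‖ →
      k1 * k2 * k3 * Real.exp ((b + b⁻¹) * |w.re|) ≤
      ‖w * Complex.sinh ((b:ℂ) * w) * Complex.sinh ((b:ℂ)⁻¹ * w)‖ := by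
    intro w k1 k2 k3 h1 h2 h3 g1 g2 g3
    rw [norm_mul, norm_mul, expsplit]
    calc _ = k1 * (k2 * Real.exp (b * |w.re|)) * (k3 * Real.exp (b⁻¹ * |w.re|)) := by ring
      _ ≤ _ := by gcongr
  refine ⟨min c1 c2, lt_min p1 p2, ?_⟩
  intro w hw
  rcases hw with hw | hw
  · refine le_trans (mul_le_mul_of_nonneg_right (min_le_left _ _) (Real.exp_pos _).le) ?_
    rw [hc1]
    apply key
    · positivity
    · positivity
    · positivity
    · rw [← hw]; exact abs_im_le_norm w
    · have := q_sinh_lower1 ((b:ℂ) * w)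
      rw [reb, imb, abs_mul, abs_of_pos hb] at this
      have h2 : |Real.sin (b * w.im)| = Real.sin (b * (π * b / 2)) := by
        rw [← hw] at hs ⊢
        rcases abs_cases w.im with h | h
        · rw [h.1] at hs ⊢; exact abs_of_pos hs
        · rw [h.1] at hs ⊢
          rw [mul_neg, Real.sin_neg] at hs ⊢
          exact abs_of_neg (by linarith)
      rw [h2] at this
      linarith
    · have := q_sinh_lower1 ((b:ℂ)⁻¹ * w)
      rw [rei, imi, abs_mul, abs_of_pos hbi] at this
      have h2 : |Real.sin (b⁻¹ * w.im)| = 1 := by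
        have h3 : b⁻¹ * |w.im| = π / 2 := by rw [hw]; field_simp
        rcases abs_cases w.im with h | h
        · rw [h.1] at h3; rw [h3]; simp
        · rw [h.1] at h3
          have : b⁻¹ * w.im = -(π/2) := by linarith
          rw [this]; simp
      rw [h2] at this
      linarith
  · refine le_trans (mul_le_mul_of_nonneg_right (min_le_right _ _) (Real.exp_pos _).le) ?_
    rw [hc2]
    apply key
    · norm_num
    · exact (he b hb).le
    · exact (he _ hbi).le
    · exact hw.trans (abs_re_le_norm w)
    · have := q_sinh_lower2 ((b:ℂ) * w) (m := b) (by rw [reb, abs_mul, abs_of_pos hb]; nlinarith)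
      rwa [reb, abs_mul, abs_of_pos hb] at this
    · have := q_sinh_lower2 ((b:ℂ)⁻¹ * w) (m := b⁻¹) (by rw [rei, abs_mul, abs_of_pos hbi]; nlinarith)
      rwa [rei, abs_mul, abs_of_pos hbi] at this

lemma q_h_bound {b : ℝ} (hb : 0 < b) (hb1 : b < 1) : ∃ c : ℝ, 0 < c ∧ ∀ z w : ℂ, ∀ V : ℝ, |z.im| ≤ V →
    (|w.im| = π * b / 2 ∨ 1 ≤ |w.re|) →
      ‖qh b z w‖ ≤ c * Real.exp (2 * z.re * w.im) * Real.exp (-(b + b⁻¹ - 2 * V) * |w.re|) := by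
  obtain ⟨c, hc, H⟩ := q_den hb hb1
  refine ⟨c⁻¹, inv_pos.2 hc, ?_⟩
  intro z w V hz hw
  have h1 := H w hw
  unfold qh
  rw [norm_div, Complex.norm_exp]
  have h2 : (-2 * I * z * w).re = 2 * z.re * w.im + 2 * z.im * w.re := by
    simp
  rw [h2]
  have h3 : z.im * w.re ≤ V * |w.re| := by
    calc _ ≤ |z.im * w.re| := le_abs_self _
      _ = |z.im| * |w.re| := abs_mul _ _
      _ ≤ _ := by gcongr
  have h4 : 0 < c * Real.exp ((b + b⁻¹) * |w.re|) := by positivity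
  calc _ ≤ Real.exp (2 * z.re * w.im + 2 * z.im * w.re) / (c * Real.exp ((b + b⁻¹) * |w.re|)) := by gcongr
    _ = c⁻¹ * Real.exp (2 * z.re * w.im) * Real.exp (2 * z.im * w.re - (b + b⁻¹) * |w.re|) := by
        rw [Real.exp_sub, Real.exp_add]; field_simp
    _ ≤ _ := by
        gcongr
        linarith

lemma q_int_abs {α : ℝ} (hα : 0 < α) : Integrable (fun t : ℝ => Real.exp (-α * |t|)) := by
  rw [← integrableOn_univ, ← Set.Iic_union_Ioi (a := (0:ℝ))]
  apply IntegrableOn.union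
  · refine (integrableOn_exp_mul_Iic hα 0).congr_fun ?_ measurableSet_Iic
    intro t ht
    simp only [abs_of_nonpos (Set.mem_Iic.1 ht)]
    ring_nf
  · refine (exp_neg_integrableOn_Ioi 0 hα).congr_fun ?_ measurableSet_Ioi
    intro t ht
    simp only [abs_of_pos (Set.mem_Ioi.1 ht)]

lemma q_I_bound {b : ℝ} (hb : 0 < b) (hb1 : b < 1) {V : ℝ} (hV : V < (b + b⁻¹) / 2) : ∃ C : ℝ, 0 < C ∧
    ∀ z : ℂ, |z.im| ≤ V → ∀ e : ℝ, |e| = π * b / 2 →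
      Integrable (fun t : ℝ => qh b z ((t:ℂ) + (e:ℂ) * I)) ∧
      ‖∫ t : ℝ, qh b z ((t:ℂ) + (e:ℂ) * I)‖ ≤ C * Real.exp (2 * z.re * e) := by
  obtain ⟨c, hc, H⟩ := q_h_bound hb hb1
  have hpi := Real.pi_pos
  have hα : 0 < b + b⁻¹ - 2 * V := by linarith
  have hint : Integrable (fun t : ℝ => Real.exp (-(b + b⁻¹ - 2 * V) * |t|)) :=
    q_int_abs hα
  refine ⟨c * (∫ t : ℝ, Real.exp (-(b + b⁻¹ - 2 * V) * |t|)) + 1, ?_, ?_⟩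
  · have : 0 ≤ ∫ t : ℝ, Real.exp (-(b + b⁻¹ - 2 * V) * |t|) := integral_nonneg (fun t => (Real.exp_pos _).le)
    positivity
  intro z hz e he
  have hB : ∀ t : ℝ, ‖qh b z ((t:ℂ) + (e:ℂ) * I)‖ ≤ c * Real.exp (2 * z.re * e) * Real.exp (-(b + b⁻¹ - 2 * V) * |t|) := by
    intro t
    have := H z ((t:ℂ) + (e:ℂ) * I) V hz (Or.inl (by simpa using he))
    simpa using this
  have he0 : e ≠ 0 := by
    intro h; rw [h, abs_zero] at he; have : 0 < π * b / 2 := by positivity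
    linarith
  have hi2 := hint.const_mul (c * Real.exp (2 * z.re * e))
  constructor
  · refine hi2.mono' ?_ (Eventually.of_forall hB)
    apply Continuous.aestronglyMeasurable
    rw [← continuousOn_univ]
    apply q_cont_line
    intro t _
    apply q_h_diff hb hb1
    · intro h; apply he0; simpa using congrArg Complex.im h
    · simp [he]; nlinarith
  · calc _ ≤ ∫ t : ℝ, c * Real.exp (2 * z.re * e) * Real.exp (-(b + b⁻¹ - 2 * V) * |t|) :=
        norm_integral_le_of_norm_le hi2 (Eventually.of_forall hB)
      _ = c * (∫ t : ℝ, Real.exp (-(b + b⁻¹ - 2 * V) * |t|)) * Real.exp (2 * z.re * e) := by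
        rw [integral_const_mul]; ring
      _ ≤ _ := by gcongr; linarith

lemma q_line_split (F : ℝ → ℂ) (hF : Integrable F) :
    ∫ t : ℝ, F t = (∫ t in Set.Iic (-1), F t) + (∫ t in (-1:ℝ)..1, F t) + ∫ t in Set.Ioi 1, F t := by
  have h1 := intervalIntegral.integral_Iic_add_Ioi (b := (1:ℝ)) hF.integrableOn hF.integrableOn
  have h2 := intervalIntegral.integral_Iic_sub_Iic (a := (-1:ℝ)) (b := 1) (f := F) hF.integrableOn hF.integrableOn
  rw [← h1, ← h2]; ring

lemma q_I_diff {b : ℝ} (hb : 0 < b) (hb1 : b < 1) (z : ℂ) (hz : |z.im| < (b + b⁻¹) / 2) :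
    (∫ t : ℝ, qh b z ((t:ℂ) + ((-(π * b / 2) : ℝ):ℂ) * I)) - (∫ t : ℝ, qh b z ((t:ℂ) + ((π * b / 2 : ℝ):ℂ) * I)) =
      2 * π * I * (-2 * z ^ 2 - ((b:ℂ) ^ 2 + ((b:ℂ)⁻¹) ^ 2) / 6) := by
  obtain ⟨C, hC, HI⟩ := q_I_bound hb hb1 hz
  obtain ⟨c, hc, HB⟩ := q_h_bound hb hb1
  have hpi := Real.pi_pos
  obtain ⟨ε, hε⟩ : ∃ ε : ℝ, ε = π * b / 2 := ⟨_, rfl⟩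
  have hε0 : 0 < ε := by rw [hε]; positivity
  rw [← hε] at HI HB ⊢
  have hα : 0 < b + b⁻¹ - 2 * |z.im| := by linarith
  have i1 := (HI z le_rfl (-ε) (by rw [abs_neg, abs_of_pos hε0])).1
  have i2 := (HI z le_rfl ε (abs_of_pos hε0)).1
  rw [q_line_split _ i1, q_line_split _ i2]
  have hd : ∀ w : ℂ, w ≠ 0 → |w.im| ≤ ε → DifferentiableAt ℂ (qh b z) w := by
    intro w h0 h1
    apply q_h_diff hb hb1 z w h0
    rw [hε] at h1; nlinarith
  obtain ⟨M, hM⟩ : ∃ M : ℝ, M = c * Real.exp (2 * |z.re| * ε) := ⟨_, rfl⟩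
  have hMb : ∀ w : ℂ, |w.im| ≤ ε → 1 ≤ |w.re| → ‖qh b z w‖ ≤ M * Real.exp (-(b + b⁻¹ - 2 * |z.im|) * |w.re|) := by
    intro w h1 h2
    refine (HB z w _ le_rfl (Or.inr h2)).trans ?_
    rw [hM]
    have : z.re * w.im ≤ |z.re| * ε := by
      calc _ ≤ |z.re * w.im| := le_abs_self _
        _ = |z.re| * |w.im| := abs_mul _ _
        _ ≤ _ := by gcongr
    refine mul_le_mul_of_nonneg_right (mul_le_mul_of_nonneg_left (Real.exp_le_exp.2 ?_) hc.le) (Real.exp_pos _).le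
    linarith
  have r := q_hs_right (qh b z) (a0 := 1) (c := -ε) (d := ε) (C := M) hα (by linarith)
    (fun y h1 h2 h3 => hd y (by intro h; rw [h] at h1; simp at h1; linarith) (abs_le.2 ⟨h2, h3⟩))
    (fun y h1 h2 h3 => by
      have := hMb y (abs_le.2 ⟨h2, h3⟩) (h1.trans (le_abs_self _))
      rwa [abs_of_pos (a := y.re) (by linarith)] at this)
  have l := q_hs_left (qh b z) (a0 := -1) (c := -ε) (d := ε) (C := M) hα (by linarith)
    (fun y h1 h2 h3 => hd y (by intro h; rw [h] at h1; simp at h1; linarith) (abs_le.2 ⟨h2, h3⟩))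
    (fun y h1 h2 h3 => by
      have := hMb y (abs_le.2 ⟨h2, h3⟩) (by rw [abs_of_neg (by linarith)]; linarith)
      rw [abs_of_neg (a := y.re) (by linarith)] at this
      rwa [neg_mul_neg] at this)
  have m := q_residue (qh b z) hε0 (-2 * I * z) (-2 * z ^ 2 - ((b:ℂ) ^ 2 + ((b:ℂ)⁻¹) ^ 2) / 6) ?_ (q_h_O hb z)
  · unfold rectInt at m
    push_cast at *
    linear_combination r + l + m
  · intro y h0 _ h2
    exact hd y h0 h2

/-- Asymptotics of the dilogarithm. -/
lemma q_asym {b : ℝ} (hb : 0 < b) (hb1 : b < 1) {V : ℝ} (hV : V < (b + b⁻¹) / 2) : ∃ C : ℝ, 0 < C ∧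
    ∀ z : ℂ, |z.im| ≤ V → (∃ u : ℂ, eb b z = Complex.exp u ∧ ‖u‖ ≤ C * Real.exp (π * b * z.re)) ∧
      (∃ u : ℂ, eb b z = Complex.exp (I * π * z ^ 2 + I * π * ((b:ℂ)^2 + ((b:ℂ)⁻¹)^2) / 12 + u) ∧
        ‖u‖ ≤ C * Real.exp (-(π * b * z.re))) := by
  obtain ⟨C, hC, HI⟩ := q_I_bound hb hb1 hV
  have hpi := Real.pi_pos
  have hmin : min b b⁻¹ = b := min_eq_left (by
    have := (one_lt_inv₀ hb).2 hb1
    linarith)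
  have e0 : 0 < π * b / 2 := by positivity
  refine ⟨C, hC, ?_⟩
  intro z hz
  have hebz : eb b z = Complex.exp ((1/4:ℂ) * ∫ t : ℝ, qh b z ((t:ℂ) + ((π * b / 2 : ℝ):ℂ) * I)) := by
    unfold eb ebE ebIntegrand qh
    rw [hmin]
    simp only [mul_comm I]
  have quarter : ∀ w : ℂ, ‖(1/4:ℂ) * w‖ ≤ ‖w‖ := by
    intro w; rw [norm_mul]; norm_num; linarith [norm_nonneg w]
  constructor
  · refine ⟨_, hebz, ?_⟩
    refine (quarter _).trans (((HI z hz _ (abs_of_pos e0)).2).trans (le_of_eq ?_))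
    congr 2; ring
  · refine ⟨(1/4:ℂ) * ∫ t : ℝ, qh b z ((t:ℂ) + ((-(π * b / 2) : ℝ):ℂ) * I), ?_, ?_⟩
    · rw [hebz]
      congr 1
      have := q_I_diff hb hb1 z (lt_of_le_of_lt hz hV)
      linear_combination (-1/4:ℂ) * this
    · refine (quarter _).trans (((HI z hz _ (by rw [abs_neg, abs_of_pos e0])).2).trans (le_of_eq ?_))
      congr 2; ring

/-- The hypotheses on the continuation used in the proof (with `b < 1`). -/
structure QD (b : ℝ) (f : ℂ → ℂ) : Prop where
  hb : 0 < b
  hb1 : b < 1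
  ext : ∀ z : ℂ, |z.im| < (b + b⁻¹) / 2 → f z = eb b z
  an : ∀ z : ℂ, z ∉ ebPoles b → AnalyticAt ℂ f z
  shift : ∀ z : ℂ, z - Complex.I * (b : ℂ) / 2 ∉ ebPoles b →
      z + Complex.I * (b : ℂ) / 2 ∉ ebPoles b →
      f (z - Complex.I * (b : ℂ) / 2) =
        (1 + Complex.exp (2 * (π : ℂ) * (b : ℂ) * z)) * f (z + Complex.I * (b : ℂ) / 2)

lemma q_norm_gauss (z : ℂ) : ‖Complex.exp (I * π * z ^ 2)‖ = Real.exp (-2 * π * z.re * z.im) := by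
  rw [Complex.norm_exp]; congr 1; simp [sq]; ring

lemma q_norm_gauss' (z : ℂ) : ‖Complex.exp (-(π:ℂ) * I * z ^ 2)‖ = Real.exp (2 * π * z.re * z.im) := by
  rw [Complex.norm_exp]; congr 1; simp [sq]; ring

/-- the constant in the right asymptotics -/
def qz (b : ℝ) : ℂ := Complex.exp (I * π * ((b:ℂ)^2 + ((b:ℂ)⁻¹)^2) / 12)

lemma q_norm_qz (b : ℝ) : ‖qz b‖ = 1 := by
  unfold qz
  have : I * π * ((b:ℂ)^2 + ((b:ℂ)⁻¹)^2) / 12 = ((π * (b^2 + b⁻¹^2) / 12 : ℝ) : ℂ) * I := by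
    push_cast; ring
  rw [this, Complex.norm_exp_ofReal_mul_I]

lemma q_norm_exp_le (u : ℂ) : ‖Complex.exp u‖ ≤ Real.exp ‖u‖ := by
  rw [Complex.norm_exp]; exact Real.exp_le_exp.2 (re_le_norm u)

lemma q_norm_exp_inv_le (u : ℂ) : ‖Complex.exp u‖⁻¹ ≤ Real.exp ‖u‖ := by
  rw [← norm_inv, ← Complex.exp_neg, ← norm_neg u]; exact q_norm_exp_le _

lemma q_f_bound {b : ℝ} {f : ℂ → ℂ} (Q : QD b f) {V : ℝ} (hV : V < (b + b⁻¹) / 2) : ∃ C : ℝ, 0 < C ∧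
    ∀ z : ℂ, |z.im| ≤ V → f z ≠ 0 ∧ (z.re ≤ 0 → ‖f z‖ ≤ C ∧ ‖f z‖⁻¹ ≤ C) ∧
      (0 ≤ z.re → ‖f z‖ ≤ C * Real.exp (-2 * π * z.re * z.im) ∧ ‖f z‖⁻¹ ≤ C * Real.exp (2 * π * z.re * z.im)) := by
  obtain ⟨C, hC, H⟩ := q_asym Q.hb Q.hb1 hV
  have hpi := Real.pi_pos
  have hb := Q.hb
  refine ⟨Real.exp C, Real.exp_pos _, ?_⟩
  intro z hz
  rw [Q.ext z (lt_of_le_of_lt hz hV)]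
  obtain ⟨⟨u, hu, hu'⟩, ⟨v, hv, hv'⟩⟩ := H z hz
  refine ⟨by rw [hu]; exact Complex.exp_ne_zero _, ?_, ?_⟩
  · intro h0
    have : ‖u‖ ≤ C := by
      refine hu'.trans ?_
      have : Real.exp (π * b * z.re) ≤ 1 := Real.exp_le_one_iff.2 (mul_nonpos_of_nonneg_of_nonpos (by positivity) h0)
      nlinarith
    rw [hu]
    exact ⟨(q_norm_exp_le u).trans (Real.exp_le_exp.2 this), (q_norm_exp_inv_le u).trans (Real.exp_le_exp.2 this)⟩
  · intro h0
    have : ‖v‖ ≤ C := by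
      refine hv'.trans ?_
      have : Real.exp (-(π * b * z.re)) ≤ 1 := Real.exp_le_one_iff.2 (by
        have : 0 ≤ π * b * z.re := by positivity
        linarith)
      nlinarith
    have e : ‖eb b z‖ = Real.exp (-2 * π * z.re * z.im) * ‖Complex.exp v‖ := by
      rw [hv, Complex.exp_add, Complex.exp_add, norm_mul, norm_mul, q_norm_gauss]
      have := q_norm_qz b
      unfold qz at this
      rw [this, mul_one]
    rw [e]
    constructor
    · rw [mul_comm]
      gcongr
      exact (q_norm_exp_le v).trans (Real.exp_le_exp.2 this)
    · rw [mul_inv, mul_comm, ← Real.exp_neg]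
      have : -(-2 * π * z.re * z.im) = 2 * π * z.re * z.im := by ring
      rw [this]
      gcongr
      exact (q_norm_exp_inv_le v).trans (Real.exp_le_exp.2 (by assumption))

lemma q_f_lim_left {b : ℝ} {f : ℂ → ℂ} (Q : QD b f) {c : ℝ} (hc : |c| < (b + b⁻¹) / 2) :
    Tendsto (fun t : ℝ => f ((t:ℂ) + (c:ℂ) * I)) atBot (𝓝 1) := by
  obtain ⟨C, hC, H⟩ := q_asym Q.hb Q.hb1 hc
  have hpb : 0 < π * b := mul_pos Real.pi_pos Q.hb
  have H' : ∀ t : ℝ, ∃ u : ℂ, f ((t:ℂ) + (c:ℂ) * I) = Complex.exp u ∧ ‖u‖ ≤ C * Real.exp (π * b * t) := by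
    intro t
    obtain ⟨u, hu, hu'⟩ := (H ((t:ℂ) + (c:ℂ) * I) (by simp)).1
    refine ⟨u, ?_, by simpa using hu'⟩
    rw [Q.ext _ (by simpa using hc), hu]
  choose u hu hu' using H'
  have t1 : Tendsto u atBot (𝓝 0) := by
    refine squeeze_zero_norm hu' ?_
    have : Tendsto (fun R : ℝ => Real.exp (π * b * R)) atBot (𝓝 0) := by
      apply Real.tendsto_exp_atBot.comp
      exact (tendsto_const_mul_atBot_of_pos hpb).2 tendsto_id
    simpa using this.const_mul C
  have := (Complex.continuous_exp.tendsto 0).comp t1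
  rw [Complex.exp_zero] at this
  refine this.congr (fun t => (hu t).symm)

lemma q_f_lim_right {b : ℝ} {f : ℂ → ℂ} (Q : QD b f) {c : ℝ} (hc : |c| < (b + b⁻¹) / 2) :
    Tendsto (fun t : ℝ => f ((t:ℂ) + (c:ℂ) * I) * Complex.exp (-(π:ℂ) * I * ((t:ℂ) + (c:ℂ) * I) ^ 2)) atTop (𝓝 (qz b)) := by
  obtain ⟨C, hC, H⟩ := q_asym Q.hb Q.hb1 hc
  have hpb : 0 < π * b := mul_pos Real.pi_pos Q.hb
  have H' : ∀ t : ℝ, ∃ u : ℂ, f ((t:ℂ) + (c:ℂ) * I) * Complex.exp (-(π:ℂ) * I * ((t:ℂ) + (c:ℂ) * I) ^ 2)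
      = qz b * Complex.exp u ∧ ‖u‖ ≤ C * Real.exp (-(π * b) * t) := by
    intro t
    obtain ⟨u, hu, hu'⟩ := (H ((t:ℂ) + (c:ℂ) * I) (by simp)).2
    refine ⟨u, ?_, by simpa using hu'⟩
    rw [Q.ext _ (by simpa using hc), hu]
    unfold qz
    rw [← Complex.exp_add, ← Complex.exp_add]
    congr 1; ring
  choose u hu hu' using H'
  have t1 : Tendsto u atTop (𝓝 0) := by
    refine squeeze_zero_norm hu' ?_
    have : Tendsto (fun R : ℝ => Real.exp (-(π * b) * R)) atTop (𝓝 0) := by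
      apply Real.tendsto_exp_atBot.comp
      exact (tendsto_const_mul_atBot_of_neg (by linarith)).2 tendsto_id
    simpa using this.const_mul C
  have := ((Complex.continuous_exp.tendsto 0).comp t1).const_mul (qz b)
  rw [Complex.exp_zero, mul_one] at this
  refine this.congr (fun t => (hu t).symm)

/-- `g(y) = e^{-πiy²} f(y+c_b)` -/
def qg (b : ℝ) (f : ℂ → ℂ) (y : ℂ) : ℂ := Complex.exp (-(π:ℂ) * I * y ^ 2) * f (y + cb b)

lemma q_cb (b : ℝ) : cb b = (((b + b⁻¹) / 2 : ℝ) : ℂ) * I := by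
  unfold cb; push_cast; ring

lemma q_not_pole {b : ℝ} (hb : 0 < b) (y : ℂ) (hy : y.im < 0 ∨ y.re ≠ 0) : y + cb b ∉ ebPoles b := by
  rintro ⟨m, n, h⟩
  have h1 : y = I * (((m * b + n * b⁻¹ : ℝ)) : ℂ) := by
    push_cast; linear_combination h
  have h2 : y.re = 0 := by rw [h1]; simp
  have h3 : y.im = m * b + n * b⁻¹ := by rw [h1]; simp
  rcases hy with hy | hy
  · have : 0 ≤ (m:ℝ) * b + n * b⁻¹ := by positivity
    linarith
  · exact hy h2

lemma q_g_diff {b : ℝ} {f : ℂ → ℂ} (Q : QD b f) (y : ℂ) (hy : y.im < 0 ∨ y.re ≠ 0) :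
    DifferentiableAt ℂ (qg b f) y := by
  unfold qg
  have h := (Q.an _ (q_not_pole Q.hb y hy)).differentiableAt
  apply DifferentiableAt.mul (by fun_prop)
  exact h.comp y (by fun_prop)

lemma q_g_shift {b : ℝ} {f : ℂ → ℂ} (Q : QD b f) (y : ℂ) (hy : y.im < 0 ∨ y.re ≠ 0) :
    qg b f (y - I * b) = Complex.exp (I * π * b ^ 2) * (Complex.exp (-2 * π * b * y) - 1) * qg b f y := by
  have hb := Q.hb
  have hbc : (b:ℂ) ≠ 0 := by exact_mod_cast hb.ne'
  have e1 : (y + cb b - I * b / 2) - I * b / 2 = (y - I * b) + cb b := by ring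
  have e2 : (y + cb b - I * b / 2) + I * b / 2 = y + cb b := by ring
  have h := Q.shift (y + cb b - I * b / 2) (by
    rw [e1]; apply q_not_pole hb
    rcases hy with hy | hy
    · left; simp; linarith
    · right; simpa using hy) (by rw [e2]; exact q_not_pole hb y hy)
  rw [e1, e2] at h
  have e3 : 2 * (π:ℂ) * b * (y + cb b - I * b / 2) = 2 * π * b * y + π * I := by
    unfold cb; field_simp; ring
  rw [e3, Complex.exp_add, Complex.exp_pi_mul_I] at h
  unfold qg
  rw [h]
  have e4 : -(π:ℂ) * I * (y - I * b) ^ 2 = I * π * b ^ 2 + (-2 * π * b * y) + (-(π:ℂ) * I * y ^ 2) := by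
    linear_combination (2 * π * b * y - π * I * b ^ 2) * I_sq
  have e5 : Complex.exp (2 * π * b * y) = (Complex.exp (-2 * π * b * y))⁻¹ := by
    rw [← Complex.exp_neg]; congr 1; ring
  rw [e4, Complex.exp_add, Complex.exp_add, e5]
  have := Complex.exp_ne_zero (-2 * π * b * y)
  field_simp
  ring

lemma q_g_bound1 {b : ℝ} {f : ℂ → ℂ} (Q : QD b f) {η : ℝ} (hη : 0 < η) : ∃ C : ℝ, 0 < C ∧
    ∀ y : ℂ, -((b + b⁻¹) / 2) ≤ y.im → y.im ≤ -η →
      ‖qg b f y‖ ≤ C * Real.exp (2 * π * y.re * y.im) ∧ ‖qg b f y‖ ≤ C * Real.exp (-(π * (b + b⁻¹)) * y.re) := by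
  obtain ⟨C, hC, H⟩ := q_f_bound Q (V := (b + b⁻¹) / 2 - η) (by linarith)
  have hpi := Real.pi_pos
  refine ⟨C, hC, ?_⟩
  intro y h1 h2
  have im1 : (y + cb b).im = y.im + (b + b⁻¹) / 2 := by rw [q_cb]; simp
  have re1 : (y + cb b).re = y.re := by rw [q_cb]; simp
  obtain ⟨-, h3, h4⟩ := H (y + cb b) (by rw [im1, abs_le]; constructor <;> linarith)
  rw [im1, re1] at h4
  rw [re1] at h3
  unfold qg
  rw [norm_mul, q_norm_gauss']
  rcases le_total y.re 0 with h0 | h0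
  · have h5 := (h3 h0).1
    have h6 : Real.exp (2 * π * y.re * y.im) * ‖f (y + cb b)‖ ≤ C * Real.exp (2 * π * y.re * y.im) := by
      rw [mul_comm]; gcongr
    refine ⟨h6, h6.trans ?_⟩
    refine mul_le_mul_of_nonneg_left (Real.exp_le_exp.2 ?_) hC.le
    nlinarith [mul_nonneg (mul_nonneg hpi.le (neg_nonneg.2 h0)) (by linarith : 0 ≤ y.im + (b + b⁻¹) / 2)]
  · have h5 := (h4 h0).1
    have h6 : Real.exp (2 * π * y.re * y.im) * ‖f (y + cb b)‖ ≤ C * Real.exp (-(π * (b + b⁻¹)) * y.re) := by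
      calc _ ≤ Real.exp (2 * π * y.re * y.im) * (C * Real.exp (-2 * π * y.re * (y.im + (b + b⁻¹) / 2))) := by gcongr
        _ = C * Real.exp (2 * π * y.re * y.im + -2 * π * y.re * (y.im + (b + b⁻¹) / 2)) := by
          rw [Real.exp_add]; ring
        _ = _ := by congr 2; ring
    refine ⟨h6.trans ?_, h6⟩
    refine mul_le_mul_of_nonneg_left (Real.exp_le_exp.2 ?_) hC.le
    nlinarith [mul_nonneg (mul_nonneg hpi.le h0) (by linarith : 0 ≤ y.im + (b + b⁻¹) / 2)]

lemma q_g_bound2 {b : ℝ} {f : ℂ → ℂ} (Q : QD b f) {η κ δ : ℝ} (hη : 0 < η) (hκ : κ ≤ b - η)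
    (hηb : η + b ≤ (b + b⁻¹) / 2) (hδ : 0 < δ) : ∃ C : ℝ, 0 < C ∧
    ∀ y : ℂ, -η ≤ y.im → y.im ≤ κ →
      (y.re ≤ -δ → ‖qg b f y‖ ≤ C * Real.exp (2 * π * y.re * y.im)) ∧
      (δ ≤ y.re → ‖qg b f y‖ ≤ C * Real.exp (-(π * (b + b⁻¹)) * y.re)) := by
  obtain ⟨C, hC, H⟩ := q_g_bound1 Q hη
  have hpi := Real.pi_pos
  have hb := Q.hb
  obtain ⟨m, hm⟩ : ∃ m : ℝ, m = 1 - Real.exp (-2 * π * b * δ) := ⟨_, rfl⟩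
  have hm0 : 0 < m := by
    have : Real.exp (-2 * π * b * δ) < 1 := Real.exp_lt_one_iff.2 (by
      have : 0 < π * b * δ := by positivity
      linarith)
    linarith
  refine ⟨C / m, div_pos hC hm0, ?_⟩
  intro y h1 h2
  obtain ⟨g1, g2⟩ := H (y - I * b) (by simp; linarith) (by simp; linarith)
  have re1 : (y - I * b).re = y.re := by simp
  have im1 : (y - I * b).im = y.im - b := by simp
  rw [re1] at g1 g2
  rw [im1] at g1
  have sh : y.re ≠ 0 → ‖qg b f (y - I * b)‖ = ‖Complex.exp (-2 * π * b * y) - 1‖ * ‖qg b f y‖ := by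
    intro h
    rw [q_g_shift Q y (Or.inr h), norm_mul, norm_mul]
    have : I * (π:ℂ) * b ^ 2 = ((π * b ^ 2 : ℝ) : ℂ) * I := by push_cast; ring
    rw [this, Complex.norm_exp_ofReal_mul_I, one_mul]
  have ne : ‖Complex.exp (-2 * π * b * y)‖ = Real.exp (-2 * π * b * y.re) := by
    rw [Complex.norm_exp]; congr 1; simp
  constructor
  · intro h
    rw [sh (by linarith)] at g1
    have l : m * Real.exp (-2 * π * b * y.re) ≤ ‖Complex.exp (-2 * π * b * y) - 1‖ := by
      have := norm_sub_norm_le (Complex.exp (-2 * π * b * y)) 1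
      rw [ne, norm_one] at this
      refine le_trans ?_ this
      have e : Real.exp (-2 * π * b * δ) * Real.exp (-2 * π * b * y.re) ≥ 1 := by
        rw [← Real.exp_add]
        apply Real.one_le_exp
        have : 0 ≤ π * b * (-δ - y.re) := mul_nonneg (by positivity) (by linarith)
        linarith
      rw [hm]; linarith
    have l2 : m * Real.exp (-2 * π * b * y.re) * ‖qg b f y‖ ≤ C * Real.exp (2 * π * y.re * (y.im - b)) :=
      le_trans (by gcongr) g1
    have e2 : Real.exp (2 * π * y.re * (y.im - b)) = Real.exp (2 * π * y.re * y.im) * Real.exp (-2 * π * b * y.re) := by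
      rw [← Real.exp_add]; ring_nf
    rw [e2] at l2
    have := Real.exp_pos (-2 * π * b * y.re)
    rw [div_mul_eq_mul_div, le_div_iff₀ hm0]
    have l3 : (‖qg b f y‖ * m) * Real.exp (-2 * π * b * y.re) ≤ (C * Real.exp (2 * π * y.re * y.im)) * Real.exp (-2 * π * b * y.re) := by
      linarith
    exact le_of_mul_le_mul_right l3 this
  · intro h
    rw [sh (by linarith)] at g2
    have l : m ≤ ‖Complex.exp (-2 * π * b * y) - 1‖ := by
      have := norm_sub_norm_le 1 (Complex.exp (-2 * π * b * y))
      rw [ne, norm_one, norm_sub_rev] at this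
      refine le_trans ?_ this
      have e : Real.exp (-2 * π * b * y.re) ≤ Real.exp (-2 * π * b * δ) := by
        apply Real.exp_le_exp.2
        have : 0 ≤ π * b * (y.re - δ) := mul_nonneg (by positivity) (by linarith)
        linarith
      rw [hm]; linarith
    have l2 : m * ‖qg b f y‖ ≤ C * Real.exp (-(π * (b + b⁻¹)) * y.re) :=
      le_trans (by gcongr) g2
    rw [div_mul_eq_mul_div, le_div_iff₀ hm0]
    linarith

lemma q_shift_Ioi (F : ℝ → ℂ) (a c : ℝ) : ∫ t in Set.Ioi a, F t = ∫ u in Set.Ioi (a - c), F (u + c) := by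
  rw [← integral_indicator measurableSet_Ioi, ← integral_indicator measurableSet_Ioi,
    ← integral_add_right_eq_self _ c]
  congr 1; ext u
  by_cases h : a - c < u
  · rw [Set.indicator_of_mem (by simpa using (by linarith : a < u + c)), Set.indicator_of_mem (by simpa using h)]
  · rw [Set.indicator_of_notMem (by simpa using (by linarith : u + c ≤ a)), Set.indicator_of_notMem (by simpa using h)]

lemma q_shift_Iic (F : ℝ → ℂ) (a c : ℝ) : ∫ t in Set.Iic a, F t = ∫ u in Set.Iic (a - c), F (u + c) := by
  rw [← integral_indicator measurableSet_Iic, ← integral_indicator measurableSet_Iic,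
    ← integral_add_right_eq_self _ c]
  congr 1; ext u
  by_cases h : u ≤ a - c
  · rw [Set.indicator_of_mem (by simpa using (by linarith : u + c ≤ a)), Set.indicator_of_mem (by simpa using h)]
  · rw [Set.indicator_of_notMem (by simpa using (by linarith : a < u + c)), Set.indicator_of_notMem (by simpa using h)]

lemma q_flip_Iic (F : ℝ → ℂ) (a : ℝ) : ∫ t in Set.Iic a, F t = ∫ u in Set.Ioi (0:ℝ), F (a - u) := by
  have h := integral_comp_neg_Iic a (fun t => F (-t))
  simp only [neg_neg] at h
  rw [h, q_shift_Ioi _ (-a) (-a)]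
  simp only [sub_self]
  congr 1; ext u; congr 1; ring

/-- parameters -/
structure QP (b η κ δ : ℝ) : Prop where
  hη : 0 < η
  hκ : 0 < κ
  hκb : κ ≤ b - η
  hηb : η + b < (b + b⁻¹) / 2
  hδ : 0 < δ

def qH (b : ℝ) (f : ℂ → ℂ) (x y : ℂ) : ℂ := Complex.exp (-2 * π * I * x * y) * qg b f y

lemma q_norm_char (x y : ℂ) : ‖Complex.exp (-2 * π * I * x * y)‖ =
    Real.exp (2 * π * (x.im * y.re + x.re * y.im)) := by
  rw [Complex.norm_exp]; congr 1; simp; ring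

lemma q_H_diff {b : ℝ} {f : ℂ → ℂ} (Q : QD b f) (x y : ℂ) (hy : y.im < 0 ∨ y.re ≠ 0) :
    DifferentiableAt ℂ (qH b f x) y := by
  unfold qH
  exact DifferentiableAt.mul (by fun_prop) (q_g_diff Q y hy)

def qPhi (b : ℝ) (f : ℂ → ℂ) (η κ δ : ℝ) (x : ℂ) : ℂ :=
  (∫ t in Set.Iic (-δ), qH b f x ((t:ℂ) + (κ:ℂ) * I)) -
    I * (∫ s in (-η)..κ, qH b f x (((-δ:ℝ):ℂ) + (s:ℂ) * I)) +
    ∫ t in Set.Ioi (-δ), qH b f x ((t:ℂ) + ((-η:ℝ):ℂ) * I)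

lemma q_Phi_hol {b : ℝ} {f : ℂ → ℂ} (Q : QD b f) {η κ δ : ℝ} (P : QP b η κ δ) (x : ℂ)
    (h1 : -κ < x.im) (h2 : x.im < (b + b⁻¹) / 2) : DifferentiableAt ℂ (qPhi b f η κ δ) x := by
  have hpi := Real.pi_pos
  have hη := P.hη
  have hκ := P.hκ
  have hδ := P.hδ
  have hηb := P.hηb
  have hb := Q.hb
  obtain ⟨C1, hC1, B1⟩ := q_g_bound1 Q P.hη
  obtain ⟨C2, hC2, B2⟩ := q_g_bound2 Q P.hη P.hκb P.hηb.le P.hδ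
  unfold qPhi
  have p1 : DifferentiableAt ℂ (fun x => ∫ t in Set.Iic (-δ), qH b f x ((t:ℂ) + (κ:ℂ) * I)) x := by
    have e : (fun x => ∫ t in Set.Iic (-δ), qH b f x ((t:ℂ) + (κ:ℂ) * I)) = fun x =>
        Complex.exp (-2 * π * I * x * (-δ + κ * I)) * (fun z : ℂ => ∫ u in Set.Ioi (0:ℝ), Complex.exp (z * u) *
          qg b f (((-δ - u : ℝ):ℂ) + (κ:ℂ) * I)) (2 * π * I * x) := by
      ext x
      rw [q_flip_Iic, ← integral_const_mul]
      congr 1; ext u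
      unfold qH
      rw [← mul_assoc, ← Complex.exp_add]
      congr 2
      push_cast; ring
    rw [e]
    apply DifferentiableAt.mul (by fun_prop)
    apply DifferentiableAt.comp x (g := (fun z : ℂ => ∫ u in Set.Ioi (0:ℝ), Complex.exp (z * u) *
          qg b f (((-δ - u : ℝ):ℂ) + (κ:ℂ) * I))) (f := fun x => 2 * π * I * x) _ (by fun_prop)
    apply q_laplace _ (α := 2 * π * κ) (C := C2)
    · refine ContinuousOn.aestronglyMeasurable ?_ measurableSet_Ioi
      intro u hu
      have := (q_g_diff Q (((-δ - u : ℝ):ℂ) + (κ:ℂ) * I) (Or.inr (by simp; linarith [Set.mem_Ioi.1 hu]))).continuousAt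
      have h3 : ContinuousAt (fun u : ℝ => ((-δ - u : ℝ):ℂ) + (κ:ℂ) * I) u := by fun_prop
      exact (ContinuousAt.comp (f := fun u : ℝ => ((-δ - u : ℝ):ℂ) + (κ:ℂ) * I) this h3).continuousWithinAt
    · intro t ht
      have := (B2 (((-δ - t : ℝ):ℂ) + (κ:ℂ) * I) (by simp; linarith) (by simp)).1 (by simp; linarith)
      refine this.trans ?_
      refine mul_le_mul_of_nonneg_left (Real.exp_le_exp.2 ?_) hC2.le
      simp
      have : 0 < π * δ * κ := by positivity
      nlinarith
    · simp
      nlinarith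
  have p3 : DifferentiableAt ℂ (fun x => ∫ t in Set.Ioi (-δ), qH b f x ((t:ℂ) + ((-η:ℝ):ℂ) * I)) x := by
    have e : (fun x => ∫ t in Set.Ioi (-δ), qH b f x ((t:ℂ) + ((-η:ℝ):ℂ) * I)) = fun x =>
        Complex.exp (-2 * π * I * x * (-δ - η * I)) * (fun z : ℂ => ∫ u in Set.Ioi (0:ℝ), Complex.exp (z * u) *
          qg b f (((u + -δ : ℝ):ℂ) + ((-η:ℝ):ℂ) * I)) (-2 * π * I * x) := by
      ext x
      rw [q_shift_Ioi _ _ (-δ), sub_self, ← integral_const_mul]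
      congr 1; ext u
      unfold qH
      rw [← mul_assoc, ← Complex.exp_add]
      congr 2
      push_cast; ring
    rw [e]
    apply DifferentiableAt.mul (by fun_prop)
    apply DifferentiableAt.comp x (g := (fun z : ℂ => ∫ u in Set.Ioi (0:ℝ), Complex.exp (z * u) *
          qg b f (((u + -δ : ℝ):ℂ) + ((-η:ℝ):ℂ) * I))) (f := fun x => -2 * π * I * x) _ (by fun_prop)
    apply q_laplace _ (α := π * (b + b⁻¹)) (C := C1 * Real.exp (π * (b + b⁻¹) * δ))
    · refine ContinuousOn.aestronglyMeasurable ?_ measurableSet_Ioi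
      intro u hu
      have := (q_g_diff Q (((u + -δ : ℝ):ℂ) + ((-η:ℝ):ℂ) * I) (Or.inl (by simp; linarith))).continuousAt
      have h3 : ContinuousAt (fun u : ℝ => ((u + -δ : ℝ):ℂ) + ((-η:ℝ):ℂ) * I) u := by fun_prop
      exact (ContinuousAt.comp (f := fun u : ℝ => ((u + -δ : ℝ):ℂ) + ((-η:ℝ):ℂ) * I) this h3).continuousWithinAt
    · intro t ht
      have := (B1 (((t + -δ : ℝ):ℂ) + ((-η:ℝ):ℂ) * I) (by simp; linarith) (by simp)).2
      refine this.trans (le_of_eq ?_)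
      rw [mul_assoc, ← Real.exp_add]
      congr 2
      simp; ring
    · simp
      nlinarith
  have p2 : DifferentiableAt ℂ (fun x => ∫ s in (-η)..κ, qH b f x (((-δ:ℝ):ℂ) + (s:ℂ) * I)) x := by
    set G : ℝ → ℂ := Set.indicator (Set.Iic (κ + η)) (fun u : ℝ => qg b f (((-δ : ℝ):ℂ) + ((u - η:ℝ):ℂ) * I)) with hG
    have e : (fun x => ∫ s in (-η)..κ, qH b f x (((-δ:ℝ):ℂ) + (s:ℂ) * I)) = fun x =>
        Complex.exp (-2 * π * I * x * (-δ - η * I)) * (fun z : ℂ => ∫ u in Set.Ioi (0:ℝ), Complex.exp (z * u) *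
          G u) (2 * π * x) := by
      ext x
      have i1 := intervalIntegral.integral_comp_sub_right (a := 0) (b := κ + η) (fun s : ℝ => qH b f x (((-δ:ℝ):ℂ) + (s:ℂ) * I)) η
      simp only [zero_sub, add_sub_cancel_right] at i1
      rw [← i1, intervalIntegral.integral_of_le (by linarith), ← integral_const_mul]
      have i2 : Set.Ioc 0 (κ + η) = Set.Ioi 0 ∩ Set.Iic (κ + η) := rfl
      rw [i2, ← setIntegral_indicator measurableSet_Iic]
      congr 1; ext u
      by_cases hu : u ∈ Set.Iic (κ + η)
      · rw [hG, Set.indicator_of_mem hu, Set.indicator_of_mem hu]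
        unfold qH
        rw [← mul_assoc, ← Complex.exp_add]
        congr 2
        push_cast
        linear_combination (-2 * π * x * u) * I_sq
      · rw [hG, Set.indicator_of_notMem hu, Set.indicator_of_notMem hu]; simp
    rw [e]
    apply DifferentiableAt.mul (by fun_prop)
    apply DifferentiableAt.comp x (g := (fun z : ℂ => ∫ u in Set.Ioi (0:ℝ), Complex.exp (z * u) *
          G u)) (f := fun x : ℂ => 2 * (π:ℂ) * x) _ (by fun_prop)
    have hcont : Continuous (fun u : ℝ => qg b f (((-δ : ℝ):ℂ) + ((u - η:ℝ):ℂ) * I)) := by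
      rw [continuous_iff_continuousAt]
      intro u
      have := (q_g_diff Q (((-δ : ℝ):ℂ) + ((u - η:ℝ):ℂ) * I) (Or.inr (by simp; linarith))).continuousAt
      have h3 : ContinuousAt (fun u : ℝ => ((-δ : ℝ):ℂ) + ((u - η:ℝ):ℂ) * I) u := by fun_prop
      exact (ContinuousAt.comp (f := fun u : ℝ => ((-δ : ℝ):ℂ) + ((u - η:ℝ):ℂ) * I) this h3)
    obtain ⟨M, hM⟩ := (isCompact_Icc (a := (0:ℝ)) (b := κ + η)).exists_bound_of_continuousOn hcont.continuousOn
    have hM0 : 0 ≤ M := (norm_nonneg _).trans (hM 0 ⟨le_rfl, by linarith⟩)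
    obtain ⟨α, hα⟩ : ∃ α : ℝ, α = 2 * π * x.re + 1 := ⟨_, rfl⟩
    apply q_laplace _ (α := α) (C := M * Real.exp (|α| * (κ + η)))
    · exact (hcont.aestronglyMeasurable.indicator measurableSet_Iic).restrict
    · intro t ht
      by_cases hu : t ∈ Set.Iic (κ + η)
      · rw [hG, Set.indicator_of_mem hu]
        refine (hM t ⟨ht.le, hu⟩).trans ?_
        rw [mul_assoc, ← Real.exp_add]
        have : 1 ≤ Real.exp (|α| * (κ + η) + -α * t) := by
          apply Real.one_le_exp
          have h4 : α * t ≤ |α| * (κ + η) := by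
            have := le_abs_self α
            have := Set.mem_Iic.1 hu
            have := abs_nonneg α
            nlinarith
          linarith
        nlinarith
      · rw [hG, Set.indicator_of_notMem hu, norm_zero]
        positivity
    · rw [hα]; simp
  exact (p1.sub (p2.const_mul I)).add p3

lemma q_H_bound {b : ℝ} {f : ℂ → ℂ} (Q : QD b f) {η : ℝ} (hη : 0 < η) : ∃ C : ℝ, 0 < C ∧
    ∀ x y : ℂ, -((b + b⁻¹) / 2) ≤ y.im → y.im ≤ -η →
      ‖qH b f x y‖ ≤ C * Real.exp (2 * π * x.re * y.im) * Real.exp (2 * π * (x.im + y.im) * y.re) ∧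
      ‖qH b f x y‖ ≤ C * Real.exp (2 * π * x.re * y.im) * Real.exp (-(2 * π * ((b + b⁻¹) / 2 - x.im)) * y.re) := by
  obtain ⟨C, hC, B⟩ := q_g_bound1 Q hη
  refine ⟨C, hC, ?_⟩
  intro x y h1 h2
  obtain ⟨g1, g2⟩ := B y h1 h2
  unfold qH
  rw [norm_mul, q_norm_char]
  constructor
  · calc _ ≤ Real.exp (2 * π * (x.im * y.re + x.re * y.im)) * (C * Real.exp (2 * π * y.re * y.im)) := by gcongr
      _ = C * (Real.exp (2 * π * (x.im * y.re + x.re * y.im)) * Real.exp (2 * π * y.re * y.im)) := by ring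
      _ = _ := by rw [mul_assoc C, ← Real.exp_add, ← Real.exp_add]; congr 2; ring
  · calc _ ≤ Real.exp (2 * π * (x.im * y.re + x.re * y.im)) * (C * Real.exp (-(π * (b + b⁻¹)) * y.re)) := by gcongr
      _ = C * (Real.exp (2 * π * (x.im * y.re + x.re * y.im)) * Real.exp (-(π * (b + b⁻¹)) * y.re)) := by ring
      _ = _ := by rw [mul_assoc C, ← Real.exp_add, ← Real.exp_add]; congr 2; ring

lemma q_H_line_int {b : ℝ} {f : ℂ → ℂ} (Q : QD b f) {c : ℝ} (hc : 0 < c) (x : ℂ)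
    (h1 : c < x.im) (h2 : x.im < (b + b⁻¹) / 2) :
    Integrable (fun t : ℝ => qH b f x ((t:ℂ) + ((-c:ℝ):ℂ) * I)) := by
  obtain ⟨C, hC, B⟩ := q_H_bound Q hc
  have hpi := Real.pi_pos
  rw [← integrableOn_univ, ← Set.Iic_union_Ioi (a := (0:ℝ))]
  apply IntegrableOn.union
  · apply q_int_left (qH b f x) (α := 2 * π * (x.im - c)) (C := C * Real.exp (2 * π * x.re * (-c)))
    · have : 0 < x.im - c := by linarith
      positivity
    · intro t _; exact q_H_diff Q _ _ (Or.inl (by simpa using hc))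
    · intro t ht
      have := (B x ((t:ℂ) + ((-c:ℝ):ℂ) * I) (by simp; linarith) (by simp)).1
      simpa [sub_eq_add_neg] using this
  · apply q_int_right (qH b f x) (α := 2 * π * ((b + b⁻¹) / 2 - x.im)) (C := C * Real.exp (2 * π * x.re * (-c)))
    · have : 0 < (b + b⁻¹) / 2 - x.im := by linarith
      positivity
    · intro t _; exact q_H_diff Q _ _ (Or.inl (by simpa using hc))
    · intro t ht
      have := (B x ((t:ℂ) + ((-c:ℝ):ℂ) * I) (by simp; linarith) (by simp)).2
      simpa [sub_eq_add_neg] using this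

lemma q_Phi_line {b : ℝ} {f : ℂ → ℂ} (Q : QD b f) {η κ δ : ℝ} (P : QP b η κ δ) (x : ℂ)
    (h1 : η < x.im) (h2 : x.im < (b + b⁻¹) / 2) :
    qPhi b f η κ δ x = ∫ t : ℝ, qH b f x ((t:ℂ) + ((-η:ℝ):ℂ) * I) := by
  obtain ⟨C2, hC2, B2⟩ := q_g_bound2 Q P.hη P.hκb P.hηb.le P.hδ
  have hpi := Real.pi_pos
  have hη := P.hη
  have hκ := P.hκ
  have hδ := P.hδ
  have hi := q_H_line_int Q P.hη x h1 h2
  rw [← intervalIntegral.integral_Iic_add_Ioi (b := (-δ:ℝ)) hi.integrableOn hi.integrableOn]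
  have l := q_hs_left (qH b f x) (a0 := -δ) (c := -η) (d := κ) (α := 2 * π * (x.im - η))
    (C := C2 * Real.exp (2 * π * |x.re| * (η + κ)))
    (by have : 0 < x.im - η := by linarith
        positivity) (by linarith)
    (fun y g1 _ _ => q_H_diff Q x y (Or.inr (by linarith)))
    (fun y g1 g2 g3 => by
      have g4 := (B2 y g2 g3).1 g1
      unfold qH
      rw [norm_mul, q_norm_char]
      have e1 : x.re * y.im ≤ |x.re| * (η + κ) := by
        calc _ ≤ |x.re * y.im| := le_abs_self _
          _ = |x.re| * |y.im| := abs_mul _ _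
          _ ≤ _ := by
            gcongr
            rw [abs_le]; constructor <;> linarith
      have e2 : y.re * (y.im + η) ≤ 0 := mul_nonpos_of_nonpos_of_nonneg (by linarith) (by linarith)
      calc _ ≤ Real.exp (2 * π * (x.im * y.re + x.re * y.im)) * (C2 * Real.exp (2 * π * y.re * y.im)) := by gcongr
        _ = C2 * Real.exp (2 * π * (x.im * y.re + x.re * y.im) + 2 * π * y.re * y.im) := by
            rw [Real.exp_add]; ring
        _ ≤ C2 * Real.exp (2 * π * |x.re| * (η + κ) + 2 * π * (x.im - η) * y.re) := by
            refine mul_le_mul_of_nonneg_left (Real.exp_le_exp.2 ?_) hC2.le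
            nlinarith
        _ = _ := by rw [Real.exp_add]; ring)
  unfold qPhi
  linear_combination -l

/-- moving the line of integration down -/
lemma q_line_move {b : ℝ} {f : ℂ → ℂ} (Q : QD b f) {c d : ℝ} (hc : 0 < c) (hcd : c ≤ d) (x : ℂ)
    (h1 : d < x.im) (h2 : x.im < (b + b⁻¹) / 2) :
    (∫ t : ℝ, qH b f x ((t:ℂ) + ((-c:ℝ):ℂ) * I)) = ∫ t : ℝ, qH b f x ((t:ℂ) + ((-d:ℝ):ℂ) * I) := by
  obtain ⟨C, hC, B⟩ := q_H_bound Q hc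
  have hpi := Real.pi_pos
  have hi := q_H_line_int Q hc x (by linarith) h2
  have hi2 := q_H_line_int Q (by linarith : 0 < d) x (by linarith) h2
  rw [← intervalIntegral.integral_Iic_add_Ioi (b := (0:ℝ)) hi.integrableOn hi.integrableOn]
  rw [← intervalIntegral.integral_Iic_add_Ioi (b := (0:ℝ)) hi2.integrableOn hi2.integrableOn]
  have e1 : ∀ y : ℂ, -d ≤ y.im → y.im ≤ -c → Real.exp (2 * π * x.re * y.im) ≤ Real.exp (2 * π * |x.re| * d) := by
    intro y g1 g2
    apply Real.exp_le_exp.2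
    have : x.re * y.im ≤ |x.re| * d := by
      calc _ ≤ |x.re * y.im| := le_abs_self _
        _ = |x.re| * |y.im| := abs_mul _ _
        _ ≤ _ := by
          gcongr
          rw [abs_le]; constructor <;> linarith
    nlinarith
  have r := q_hs_right (qH b f x) (a0 := 0) (c := -d) (d := -c) (α := 2 * π * ((b + b⁻¹) / 2 - x.im))
    (C := C * Real.exp (2 * π * |x.re| * d))
    (by have : 0 < (b + b⁻¹) / 2 - x.im := by linarith
        positivity) (by linarith)
    (fun y g1 _ _ => q_H_diff Q x y (Or.inl (by linarith)))
    (fun y g1 g2 g3 => by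
      refine ((B x y (by linarith) g3).2).trans ?_
      have := e1 y g2 g3
      gcongr)
  have l := q_hs_left (qH b f x) (a0 := 0) (c := -d) (d := -c) (α := 2 * π * (x.im - d))
    (C := C * Real.exp (2 * π * |x.re| * d))
    (by have : 0 < x.im - d := by linarith
        positivity) (by linarith)
    (fun y g1 _ _ => q_H_diff Q x y (Or.inl (by linarith)))
    (fun y g1 g2 g3 => by
      refine ((B x y (by linarith) g3).1).trans ?_
      have := e1 y g2 g3
      have h5 : Real.exp (2 * π * (x.im + y.im) * y.re) ≤ Real.exp (2 * π * (x.im - d) * y.re) := by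
        apply Real.exp_le_exp.2
        have : 0 ≤ (-y.re) * (y.im + d) := mul_nonneg (by linarith) (by linarith)
        nlinarith
      gcongr)
  linear_combination -(r + l)

lemma q_Phi_shift {b : ℝ} {f : ℂ → ℂ} (Q : QD b f) {η κ δ : ℝ} (P : QP b η κ δ) (x : ℂ)
    (h1 : η + b < x.im) (h2 : x.im < (b + b⁻¹) / 2) :
    qPhi b f η κ δ (x - I * b) = (1 + Complex.exp (2 * π * b * x - I * π * b ^ 2)) * qPhi b f η κ δ x := by
  have hb := Q.hb
  have hη := P.hη
  rw [q_Phi_line Q P x (by linarith) h2, q_Phi_line Q P (x - I * b) (by simp; linarith) (by simp; linarith)]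
  have i1 := q_H_line_int Q P.hη x (by linarith) h2
  have i2 := q_H_line_int Q P.hη (x - I * b) (by simp; linarith) (by simp; linarith)
  have m := q_line_move Q P.hη (by linarith : η ≤ η + b) x h1 h2
  have key : (fun t : ℝ => qH b f x ((t:ℂ) + ((-(η + b):ℝ):ℂ) * I)) = fun t : ℝ =>
      Complex.exp (-(2 * π * b * x - I * π * b ^ 2)) * (qH b f (x - I * b) ((t:ℂ) + ((-η:ℝ):ℂ) * I) -
        qH b f x ((t:ℂ) + ((-η:ℝ):ℂ) * I)) := by
    ext t
    set y : ℂ := (t:ℂ) + ((-η:ℝ):ℂ) * I with hy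
    have e1 : (t:ℂ) + ((-(η + b):ℝ):ℂ) * I = y - I * b := by rw [hy]; push_cast; ring
    rw [e1]
    unfold qH
    rw [q_g_shift Q y (Or.inl (by rw [hy]; simpa using hη))]
    have e2 : Complex.exp (-2 * π * I * (x - I * b) * y) = Complex.exp (-2 * π * I * x * y) * Complex.exp (-2 * π * b * y) := by
      rw [← Complex.exp_add]; congr 1
      linear_combination (2 * π * b * y) * I_sq
    have e3 : Complex.exp (-2 * π * I * x * (y - I * b)) * Complex.exp (I * π * b ^ 2) =
        Complex.exp (-(2 * π * b * x - I * π * b ^ 2)) * Complex.exp (-2 * π * I * x * y) := by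
      rw [← Complex.exp_add, ← Complex.exp_add]; congr 1
      linear_combination (2 * π * b * x) * I_sq
    rw [e2]
    linear_combination ((Complex.exp (-2 * π * b * y) - 1) * qg b f y) * e3
  rw [key, integral_const_mul, integral_sub i2 i1, Complex.exp_neg] at m
  have hne := Complex.exp_ne_zero (2 * π * b * x - I * π * b ^ 2)
  rw [inv_mul_eq_div, eq_div_iff hne] at m
  linear_combination -m

lemma q_not_pole2 {b : ℝ} (hb : 0 < b) (z : ℂ) (hz : z.im < (b + b⁻¹) / 2) : z ∉ ebPoles b := by
  have := q_not_pole hb (z - cb b) (Or.inl (by rw [q_cb]; simp; linarith))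
  simpa using this

lemma q_f_shift {b : ℝ} {f : ℂ → ℂ} (Q : QD b f) (x : ℂ) (h2 : x.im < (b + b⁻¹) / 2) :
    f (x - I * b) = (1 + Complex.exp (2 * π * b * x - I * π * b ^ 2)) * f x := by
  have hb := Q.hb
  have e1 : x - I * b / 2 - I * b / 2 = x - I * b := by ring
  have e2 : x - I * b / 2 + I * b / 2 = x := by ring
  have := Q.shift (x - I * b / 2) (by rw [e1]; apply q_not_pole2 hb; simp; linarith)
    (by rw [e2]; exact q_not_pole2 hb x h2)
  rw [e1, e2] at this
  rw [this]; congr 3; ring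

lemma q_liouville_aux (P : ℂ → ℂ) {b s σ₁ σ₂ m C : ℝ} (hb : 0 < b) (hs1 : σ₁ < s) (hs2 : s + b < σ₂)
    (hd : DifferentiableOn ℂ P {x : ℂ | σ₁ < x.im ∧ x.im < σ₂})
    (hp : ∀ t : ℝ, P ((t:ℂ) + ((s + b : ℝ):ℂ) * I) = P ((t:ℂ) + (s:ℂ) * I))
    (hm0 : 0 ≤ m) (hm : m < b⁻¹) (hC : 0 ≤ C)
    (hB : ∀ x : ℂ, s ≤ x.im → x.im ≤ s + b → ‖P x‖ ≤ C * Real.exp (2 * π * m * |x.re|))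
    (x₀ : ℂ) (h1 : s < x₀.im) (h2 : x₀.im < s + b) :
    Tendsto (fun R : ℝ => ∫ v in s..(s + b), (P ((R:ℂ) + (v:ℂ) * I) - P x₀)) atTop (𝓝 0) := by
  have hpi := Real.pi_pos
  have hbc : (b:ℂ) ≠ 0 := by exact_mod_cast hb.ne'
  set U : Set ℂ := {x : ℂ | σ₁ < x.im ∧ x.im < σ₂} with hU
  have hUo : IsOpen U := (isOpen_lt continuous_const continuous_im).inter (isOpen_lt continuous_im continuous_const)
  have hx0U : x₀ ∈ U := ⟨by linarith, by linarith⟩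
  set E : ℂ → ℂ := fun x => 1 - Complex.exp (-2 * π * (x - x₀) / b) with hE
  have hEd : Differentiable ℂ E := by rw [hE]; fun_prop
  have hE0 : E x₀ = 0 := by simp [hE]
  have hnorm : ∀ x : ℂ, ‖Complex.exp (-2 * π * (x - x₀) / b)‖ = Real.exp (-2 * π * (x.re - x₀.re) / b) := by
    intro x; rw [Complex.norm_exp]; congr 1
    rw [Complex.div_ofReal_re]; congr 1; simp
  have hEne : ∀ x : ℂ, s ≤ x.im → x.im ≤ s + b → x ≠ x₀ → E x ≠ 0 := by
    intro x g1 g2 g3 g4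
    have g5 : Complex.exp (-2 * π * (x - x₀) / b) = 1 := (sub_eq_zero.1 g4).symm
    rw [Complex.exp_eq_one_iff] at g5
    obtain ⟨n, hn⟩ := g5
    have g6 : x - x₀ = -(n:ℂ) * b * I := by
      have hpc : (π:ℂ) ≠ 0 := by exact_mod_cast hpi.ne'
      field_simp at hn
      linear_combination -hn
    have g7 := congrArg Complex.im g6
    simp at g7
    have g8 : |(n:ℝ)| * b < 1 * b := by
      rw [← abs_of_pos hb, ← abs_mul, abs_of_pos hb, abs_lt]; constructor <;> linarith
    have g9 : |(n:ℝ)| < 1 := lt_of_mul_lt_mul_right g8 hb.le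
    have g10 : n = 0 := by
      rw [← Int.cast_abs] at g9
      have : |n| < 1 := by exact_mod_cast g9
      exact Int.abs_lt_one_iff.1 this
    rw [g10] at g6
    apply g3
    simpa [sub_eq_zero] using g6
  have hEderiv : deriv E x₀ ≠ 0 := by
    have h3 : HasDerivAt E (-(Complex.exp (-2 * π * (x₀ - x₀) / b) * (-2 * π * 1 / b))) x₀ := by
      have := ((((hasDerivAt_id x₀).sub_const x₀).const_mul (-2 * (π:ℂ))).div_const (b:ℂ)).cexp.const_sub 1
      exact this
    rw [h3.deriv]
    simp [hb.ne', hpi.ne']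
  set F : ℂ → ℂ := fun x => dslope P x₀ x / dslope E x₀ x with hF
  have hdsP : DifferentiableOn ℂ (dslope P x₀) U := (Complex.differentiableOn_dslope (hUo.mem_nhds hx0U)).2 hd
  have hdsE : DifferentiableOn ℂ (dslope E x₀) U := (Complex.differentiableOn_dslope (hUo.mem_nhds hx0U)).2 hEd.differentiableOn
  have hdsEne : ∀ x : ℂ, s ≤ x.im → x.im ≤ s + b → dslope E x₀ x ≠ 0 := by
    intro x g1 g2
    by_cases hx : x = x₀
    · rw [hx, dslope_same]; exact hEderiv
    · rw [dslope_of_ne _ hx, slope_def_field, hE0, sub_zero]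
      exact div_ne_zero (hEne x g1 g2 hx) (sub_ne_zero.2 hx)
  have hFd : ∀ x : ℂ, s ≤ x.im → x.im ≤ s + b → DifferentiableAt ℂ F x := by
    intro x g1 g2
    have hx : U ∈ 𝓝 x := hUo.mem_nhds ⟨by linarith, by linarith⟩
    exact (hdsP.differentiableAt hx).div (hdsE.differentiableAt hx) (hdsEne x g1 g2)
  have hFx : ∀ x : ℂ, s ≤ x.im → x.im ≤ s + b → x ≠ x₀ → F x = (P x - P x₀) / E x := by
    intro x g1 g2 hx
    have e1 := hEne x g1 g2 hx
    have e2 := sub_ne_zero.2 hx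
    simp only [hF]
    rw [dslope_of_ne _ hx, dslope_of_ne _ hx, slope_def_field, slope_def_field, hE0, sub_zero]
    field_simp
  obtain ⟨D, hD⟩ : ∃ D : ℝ, D = C + ‖P x₀‖ := ⟨_, rfl⟩
  have hD0 : 0 ≤ D := by rw [hD]; positivity
  have hPB : ∀ x : ℂ, s ≤ x.im → x.im ≤ s + b → ‖P x - P x₀‖ ≤ D * Real.exp (2 * π * m * |x.re|) := by
    intro x g1 g2
    refine (norm_sub_le _ _).trans ?_
    have := hB x g1 g2
    have h4 : 1 ≤ Real.exp (2 * π * m * |x.re|) := Real.one_le_exp (by positivity)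
    rw [hD]
    nlinarith [norm_nonneg (P x₀)]
  -- bounds
  obtain ⟨D', hD'⟩ : ∃ D' : ℝ, D' = D * (2 * Real.exp (2 * π * |x₀.re| / b)) := ⟨_, rfl⟩
  have large : ∀ᶠ R : ℝ in atTop, 0 < R ∧ Real.exp (2 * π * (|x₀.re| - R) / b) ≤ 1/2 ∧ |x₀.re| < R := by
    have t : Tendsto (fun R : ℝ => Real.exp (2 * π * (|x₀.re| - R) / b)) atTop (𝓝 0) := by
      apply Real.tendsto_exp_atBot.comp
      have : (fun R : ℝ => 2 * π * (|x₀.re| - R) / b) = fun R => (2 * π * |x₀.re| / b) + (-(2 * π / b)) * R := by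
        ext R; ring
      rw [this]
      apply tendsto_atBot_add_const_left
      exact (tendsto_const_mul_atBot_of_neg (by
        have : 0 < 2 * π / b := by positivity
        linarith)).2 tendsto_id
    filter_upwards [eventually_gt_atTop 0, t.eventually_le_const (by norm_num : (0:ℝ) < 1/2), eventually_gt_atTop |x₀.re|] with R a1 a2 a3
    exact ⟨a1, a2, a3⟩
  have bound : ∀ᶠ R : ℝ in atTop, ‖∫ v in s..(s + b), (P ((R:ℂ) + (v:ℂ) * I) - P x₀)‖ ≤
      2 * (D' * Real.exp (-(2 * π * (b⁻¹ - m)) * R) * b) := by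
    filter_upwards [large] with R hR
    obtain ⟨hR0, hR1, hR2⟩ := hR
    have xe1 := abs_le.1 (le_refl |x₀.re|)
    have r := q_rect F (a := -R) (b := R) (c := s) (d := s + b) (by linarith) (by linarith)
      (fun y _ _ g3 g4 => hFd y g3 g4)
    have per : ∀ t : ℝ, F ((t:ℂ) + ((s + b : ℝ):ℂ) * I) = F ((t:ℂ) + (s:ℂ) * I) := by
      intro t
      rw [hFx _ (by simp [hb.le]) (by simp) (by intro h; rw [← h] at h2; simp at h2),
        hFx _ (by simp) (by simp [hb.le]) (by intro h; rw [← h] at h1; simp at h1), hp]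
      congr 1
      simp only [hE]
      congr 1
      have : -2 * (π:ℂ) * ((t:ℂ) + ((s + b : ℝ):ℂ) * I - x₀) / b = -2 * π * ((t:ℂ) + (s:ℂ) * I - x₀) / b - 2 * π * I := by
        push_cast; field_simp; ring
      rw [this, Complex.exp_sub, Complex.exp_two_pi_mul_I, div_one]
    have hh : (∫ t in (-R)..R, F ((t:ℂ) + ((s + b : ℝ):ℂ) * I)) = ∫ t in (-R)..R, F ((t:ℂ) + (s:ℂ) * I) := by
      congr 1; ext t; exact per t
    rw [hh] at r
    have r2 : (∫ v in s..(s+b), F ((R:ℂ) + (v:ℂ) * I)) = ∫ v in s..(s+b), F (((-R:ℝ):ℂ) + (v:ℂ) * I) := by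
      have : I * ((∫ v in s..(s+b), F ((R:ℂ) + (v:ℂ) * I)) - ∫ v in s..(s+b), F (((-R:ℝ):ℂ) + (v:ℂ) * I)) = 0 := by
        linear_combination r
      rcases mul_eq_zero.1 this with h | h
      · exact absurd h I_ne_zero
      · exact sub_eq_zero.1 h
    have expD : ∀ q : ℝ, |q| ≤ |x₀.re| → D * Real.exp (2 * π * m * R) * (2 * Real.exp (-2 * π * (R - q) / b)) ≤ D' * Real.exp (-(2 * π * (b⁻¹ - m)) * R) := by
      intro q hq
      rw [hD']
      have : Real.exp (2 * π * m * R) * Real.exp (-2 * π * (R - q) / b) ≤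
          Real.exp (2 * π * |x₀.re| / b) * Real.exp (-(2 * π * (b⁻¹ - m)) * R) := by
        rw [← Real.exp_add, ← Real.exp_add]
        apply Real.exp_le_exp.2
        have : 2 * π * q / b ≤ 2 * π * |x₀.re| / b := by
          gcongr; exact (le_abs_self q).trans hq
        have e : -2 * π * (R - q) / b = 2 * π * q / b - 2 * π * b⁻¹ * R := by field_simp; ring
        rw [e]; linarith
      nlinarith
    have L : ‖∫ v in s..(s+b), F (((-R:ℝ):ℂ) + (v:ℂ) * I)‖ ≤ D' * Real.exp (-(2 * π * (b⁻¹ - m)) * R) * b := by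
      have := intervalIntegral.norm_integral_le_of_norm_le_const (a := s) (b := s + b) (C := D' * Real.exp (-(2 * π * (b⁻¹ - m)) * R))
        (f := fun v : ℝ => F (((-R:ℝ):ℂ) + (v:ℂ) * I)) ?_
      · simpa [abs_of_pos hb] using this
      intro v hv
      rw [Set.uIoc_of_le (by linarith)] at hv
      have i1 : (((-R:ℝ):ℂ) + (v:ℂ) * I).im = v := by simp
      have i2 : (((-R:ℝ):ℂ) + (v:ℂ) * I).re = -R := by simp
      have hv1 := hv.1.le
      rw [hFx _ (by rw [i1]; exact hv.1.le) (by rw [i1]; exact hv.2) (by intro h; rw [h] at i2; linarith), norm_div]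
      have n1 := hPB (((-R:ℝ):ℂ) + (v:ℂ) * I) (by rw [i1]; exact hv.1.le) (by rw [i1]; exact hv.2)
      rw [i2, abs_neg, abs_of_pos hR0] at n1
      have n2 : Real.exp (2 * π * (R - (-x₀.re)) / b) / 2 ≤ ‖E (((-R:ℝ):ℂ) + (v:ℂ) * I)‖ := by
        have := norm_sub_norm_le (Complex.exp (-2 * π * ((((-R:ℝ):ℂ) + (v:ℂ) * I) - x₀) / b)) 1
        rw [hnorm, i2, norm_one, norm_sub_rev] at this
        refine le_trans ?_ this
        have e : -2 * π * (-R - x₀.re) / b = 2 * π * (R - (-x₀.re)) / b := by ring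
        rw [e]
        have : 2 ≤ Real.exp (2 * π * (R - (-x₀.re)) / b) := by
          have h5 : Real.exp (-(2 * π * (R - (-x₀.re)) / b)) ≤ 1 / 2 := by
            refine le_trans (Real.exp_le_exp.2 ?_) hR1
            rw [← neg_div]
            gcongr
            nlinarith
          rw [Real.exp_neg, inv_le_comm₀ (Real.exp_pos _) (by norm_num)] at h5
          norm_num at h5 ⊢
          exact h5
        linarith
      have n3 := expD (-x₀.re) (by rw [abs_neg])
      refine le_trans ?_ n3
      calc _ ≤ (D * Real.exp (2 * π * m * R)) / (Real.exp (2 * π * (R - (-x₀.re)) / b) / 2) := by gcongr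
        _ = _ := by
          have : -2 * π * (R - (-x₀.re)) / b = -(2 * π * (R - (-x₀.re)) / b) := by ring
          rw [this, Real.exp_neg]
          field_simp
    have cF : ContinuousOn (fun v : ℝ => F ((R:ℂ) + (v:ℂ) * I)) (Set.uIcc s (s+b)) := by
      apply q_cont_vert
      intro v hv
      rw [Set.uIcc_of_le (by linarith)] at hv
      exact hFd _ (by simpa using hv.1) (by simpa using hv.2)
    have cP : ContinuousOn (fun v : ℝ => P ((R:ℂ) + (v:ℂ) * I)) (Set.uIcc s (s+b)) := by
      apply q_cont_vert
      intro v hv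
      rw [Set.uIcc_of_le (by linarith)] at hv
      exact hd.differentiableAt (hUo.mem_nhds ⟨by simp; linarith [hv.1], by simp; linarith [hv.2]⟩)
    have cP' : ContinuousOn (fun v : ℝ => P ((R:ℂ) + (v:ℂ) * I) - P x₀) (Set.uIcc s (s+b)) := cP.sub continuousOn_const
    have Rr : ‖∫ v in s..(s+b), (F ((R:ℂ) + (v:ℂ) * I) - (P ((R:ℂ) + (v:ℂ) * I) - P x₀))‖ ≤ D' * Real.exp (-(2 * π * (b⁻¹ - m)) * R) * b := by
      have := intervalIntegral.norm_integral_le_of_norm_le_const (a := s) (b := s + b) (C := D' * Real.exp (-(2 * π * (b⁻¹ - m)) * R))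
        (f := fun v : ℝ => (F ((R:ℂ) + (v:ℂ) * I) - (P ((R:ℂ) + (v:ℂ) * I) - P x₀))) ?_
      · simpa [abs_of_pos hb] using this
      intro v hv
      rw [Set.uIoc_of_le (by linarith)] at hv
      have i1 : ((R:ℂ) + (v:ℂ) * I).im = v := by simp
      have i2 : ((R:ℂ) + (v:ℂ) * I).re = R := by simp
      have hne : ((R:ℂ) + (v:ℂ) * I) ≠ x₀ := by intro h; rw [h] at i2; linarith
      have hEn := hEne _ (by rw [i1]; exact hv.1.le) (by rw [i1]; exact hv.2) hne
      rw [hFx _ (by rw [i1]; exact hv.1.le) (by rw [i1]; exact hv.2) hne]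
      have n1 := hPB ((R:ℂ) + (v:ℂ) * I) (by rw [i1]; exact hv.1.le) (by rw [i1]; exact hv.2)
      rw [i2, abs_of_pos hR0] at n1
      have n4 := hnorm ((R:ℂ) + (v:ℂ) * I)
      rw [i2] at n4
      have n2 : 1 / 2 ≤ ‖E ((R:ℂ) + (v:ℂ) * I)‖ := by
        have := norm_sub_norm_le 1 (Complex.exp (-2 * π * (((R:ℂ) + (v:ℂ) * I) - x₀) / b))
        rw [n4, norm_one] at this
        refine le_trans ?_ this
        have h5 : Real.exp (-2 * π * (R - x₀.re) / b) ≤ 1 / 2 := by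
          refine le_trans (Real.exp_le_exp.2 ?_) hR1
          refine div_le_div_of_nonneg_right ?_ hb.le
          nlinarith [mul_nonneg hpi.le (sub_nonneg.2 xe1.2)]
        linarith
      have e : (P ((R:ℂ) + (v:ℂ) * I) - P x₀) / E ((R:ℂ) + (v:ℂ) * I) - (P ((R:ℂ) + (v:ℂ) * I) - P x₀) =
          (P ((R:ℂ) + (v:ℂ) * I) - P x₀) * (Complex.exp (-2 * π * (((R:ℂ) + (v:ℂ) * I) - x₀) / b) / E ((R:ℂ) + (v:ℂ) * I)) := by
        have : Complex.exp (-2 * π * (((R:ℂ) + (v:ℂ) * I) - x₀) / b) = 1 - E ((R:ℂ) + (v:ℂ) * I) := by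
          simp only [hE]; ring
        rw [this]
        field_simp
      rw [e, norm_mul, norm_div, n4]
      refine le_trans ?_ (expD x₀.re le_rfl)
      have n5 : Real.exp (-2 * π * (R - x₀.re) / b) / ‖E ((R:ℂ) + (v:ℂ) * I)‖ ≤ Real.exp (-2 * π * (R - x₀.re) / b) / (1/2) := by gcongr
      calc _ ≤ (D * Real.exp (2 * π * m * R)) * (Real.exp (-2 * π * (R - x₀.re) / b) / (1/2)) := by gcongr
        _ = _ := by ring
    have fin : (∫ v in s..(s+b), (P ((R:ℂ) + (v:ℂ) * I) - P x₀)) = (∫ v in s..(s+b), F (((-R:ℝ):ℂ) + (v:ℂ) * I)) -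
        ∫ v in s..(s+b), (F ((R:ℂ) + (v:ℂ) * I) - (P ((R:ℂ) + (v:ℂ) * I) - P x₀)) := by
      rw [intervalIntegral.integral_sub cF.intervalIntegrable cP'.intervalIntegrable, r2]; ring
    rw [fin]
    refine (norm_sub_le _ _).trans ?_
    linarith
  refine squeeze_zero_norm' bound ?_
  have : Tendsto (fun R : ℝ => Real.exp (-(2 * π * (b⁻¹ - m)) * R)) atTop (𝓝 0) := by
    apply Real.tendsto_exp_atBot.comp
    refine (tendsto_const_mul_atBot_of_neg ?_).2 tendsto_id
    have : 0 < π * (b⁻¹ - m) := mul_pos hpi (by linarith)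
    linarith
  simpa using (((this.const_mul D').mul_const b).const_mul 2)

lemma q_liouville (P : ℂ → ℂ) {b s σ₁ σ₂ m C : ℝ} (hb : 0 < b) (hs1 : σ₁ < s) (hs2 : s + b < σ₂)
    (hd : DifferentiableOn ℂ P {x : ℂ | σ₁ < x.im ∧ x.im < σ₂})
    (hp : ∀ t : ℝ, P ((t:ℂ) + ((s + b : ℝ):ℂ) * I) = P ((t:ℂ) + (s:ℂ) * I))
    (hm0 : 0 ≤ m) (hm : m < b⁻¹) (hC : 0 ≤ C)
    (hB : ∀ x : ℂ, s ≤ x.im → x.im ≤ s + b → ‖P x‖ ≤ C * Real.exp (2 * π * m * |x.re|))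
    (x₀ x₁ : ℂ) (h1 : s < x₀.im) (h2 : x₀.im < s + b) (h3 : s < x₁.im) (h4 : x₁.im < s + b) :
    P x₀ = P x₁ := by
  have t0 := q_liouville_aux P hb hs1 hs2 hd hp hm0 hm hC hB x₀ h1 h2
  have t1 := q_liouville_aux P hb hs1 hs2 hd hp hm0 hm hC hB x₁ h3 h4
  have t := t1.sub t0
  have hUo : IsOpen {x : ℂ | σ₁ < x.im ∧ x.im < σ₂} :=
    (isOpen_lt continuous_const continuous_im).inter (isOpen_lt continuous_im continuous_const)
  have e : ∀ R : ℝ, (∫ v in s..(s + b), (P ((R:ℂ) + (v:ℂ) * I) - P x₁)) -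
      (∫ v in s..(s + b), (P ((R:ℂ) + (v:ℂ) * I) - P x₀)) = b * (P x₀ - P x₁) := by
    intro R
    have cP : ContinuousOn (fun v : ℝ => P ((R:ℂ) + (v:ℂ) * I)) (Set.uIcc s (s+b)) := by
      apply q_cont_vert
      intro v hv
      rw [Set.uIcc_of_le (by linarith)] at hv
      exact hd.differentiableAt (hUo.mem_nhds ⟨by simp; linarith [hv.1], by simp; linarith [hv.2]⟩)
    rw [intervalIntegral.integral_sub cP.intervalIntegrable (by simp),
      intervalIntegral.integral_sub cP.intervalIntegrable (by simp)]
    simp; ring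
  simp only [e] at t
  have := tendsto_nhds_unique t tendsto_const_nhds
  have hbc : (b:ℂ) ≠ 0 := by exact_mod_cast hb.ne'
  rw [sub_zero] at this
  have h5 := (mul_eq_zero.1 this.symm).resolve_left hbc
  exact sub_eq_zero.1 h5

lemma q_Phi_bound {b : ℝ} {f : ℂ → ℂ} (Q : QD b f) {η κ δ s : ℝ} (P : QP b η κ δ)
    (hs1 : η < s) (hs2 : s + b < (b + b⁻¹) / 2) : ∃ C : ℝ, 0 ≤ C ∧ ∀ x : ℂ, s ≤ x.im → x.im ≤ s + b →
      ‖qPhi b f η κ δ x‖ ≤ C * Real.exp (-(2 * π * η) * x.re) := by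
  obtain ⟨C, hC, B⟩ := q_H_bound Q P.hη
  have hpi := Real.pi_pos
  have hη := P.hη
  have hb := Q.hb
  obtain ⟨α, hα, hα1, hα2⟩ : ∃ α : ℝ, 0 < α ∧ α ≤ s - η ∧ α ≤ (b + b⁻¹) / 2 - (s + b) :=
    ⟨min (s - η) ((b + b⁻¹) / 2 - (s + b)), lt_min (by linarith) (by linarith), min_le_left _ _, min_le_right _ _⟩
  have hint := q_int_abs (α := 2 * π * α) (by positivity)
  refine ⟨C * ∫ t : ℝ, Real.exp (-(2 * π * α) * |t|), by positivity, ?_⟩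
  intro x h1 h2
  rw [q_Phi_line Q P x (by linarith) (by linarith)]
  have : C * (∫ t : ℝ, Real.exp (-(2 * π * α) * |t|)) * Real.exp (-(2 * π * η) * x.re) =
      ∫ t : ℝ, C * Real.exp (-(2 * π * η) * x.re) * Real.exp (-(2 * π * α) * |t|) := by
    rw [integral_const_mul]; ring
  rw [this]
  refine norm_integral_le_of_norm_le (hint.const_mul _) (Eventually.of_forall ?_)
  intro t
  have i1 : ((t:ℂ) + ((-η:ℝ):ℂ) * I).im = -η := by simp
  have i2 : ((t:ℂ) + ((-η:ℝ):ℂ) * I).re = t := by simp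
  obtain ⟨B1, B2⟩ := B x ((t:ℂ) + ((-η:ℝ):ℂ) * I) (by rw [i1]; linarith) (by rw [i1])
  rw [i1, i2] at B1 B2
  have e : -(2 * π * η) * x.re = 2 * π * x.re * -η := by ring
  rw [e]
  rcases le_total t 0 with ht | ht
  · refine B1.trans (mul_le_mul_of_nonneg_left (Real.exp_le_exp.2 ?_) (by positivity))
    rw [abs_of_nonpos ht]
    nlinarith [mul_nonneg (mul_nonneg hpi.le (by linarith : 0 ≤ x.im - η - α)) (neg_nonneg.2 ht)]
  · refine B2.trans (mul_le_mul_of_nonneg_left (Real.exp_le_exp.2 ?_) (by positivity))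
    rw [abs_of_nonneg ht]
    nlinarith [mul_nonneg (mul_nonneg hpi.le (by linarith : 0 ≤ (b + b⁻¹) / 2 - x.im - α)) ht]

lemma q_const {b : ℝ} {f : ℂ → ℂ} (Q : QD b f) {η κ δ s : ℝ} (P : QP b η κ δ)
    (hs1 : η < s) (hs2 : s + b < (b + b⁻¹) / 2) (x₀ x₁ : ℂ) (h1 : s < x₀.im) (h2 : x₀.im < s + b)
    (h3 : s < x₁.im) (h4 : x₁.im < s + b) :
    qPhi b f η κ δ x₀ / f x₀ = qPhi b f η κ δ x₁ / f x₁ := by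
  have hpi := Real.pi_pos
  have hη := P.hη
  have hκ := P.hκ
  have hb := Q.hb
  have hb1 := Q.hb1
  have hbi : b < b⁻¹ := hb1.trans (by rw [lt_inv_comm₀ one_pos hb, inv_one]; exact hb1)
  obtain ⟨C, hC, B⟩ := q_Phi_bound Q P hs1 hs2
  obtain ⟨C', hC', B'⟩ := q_f_bound Q hs2
  have fne : ∀ x : ℂ, η < x.im → x.im < (b + b⁻¹) / 2 → f x ≠ 0 := by
    intro x g1 g2
    obtain ⟨C'', _, B''⟩ := q_f_bound Q g2
    exact (B'' x (by rw [abs_of_pos (by linarith)])).1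
  refine q_liouville (fun x => qPhi b f η κ δ x / f x) (b := b) (s := s) (σ₁ := η) (σ₂ := (b + b⁻¹) / 2)
    (m := s + b) (C := C * C') hb hs1 hs2 ?_ ?_ (by linarith) (by linarith) (by positivity) ?_ x₀ x₁ h1 h2 h3 h4
  · rintro x ⟨g1, g2⟩
    refine DifferentiableAt.differentiableWithinAt ?_
    exact (q_Phi_hol Q P x (by linarith) g2).div (Q.an x (q_not_pole2 hb x g2)).differentiableAt (fne x g1 g2)
  · intro t
    have i1 : ((t:ℂ) + ((s + b : ℝ):ℂ) * I).im = s + b := by simp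
    have e : (t:ℂ) + (s:ℂ) * I = ((t:ℂ) + ((s + b : ℝ):ℂ) * I) - I * b := by push_cast; ring
    have f1 := fne ((t:ℂ) + (s:ℂ) * I) (by simpa using hs1) (by simp; linarith)
    have f2 := fne ((t:ℂ) + ((s + b : ℝ):ℂ) * I) (by rw [i1]; linarith) (by rw [i1]; linarith)
    rw [e] at f1 ⊢
    rw [q_Phi_shift Q P _ (by rw [i1]; linarith) (by rw [i1]; linarith)]
    have fs := q_f_shift Q ((t:ℂ) + ((s + b : ℝ):ℂ) * I) (by rw [i1]; linarith)
    rw [fs] at f1 ⊢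
    have := left_ne_zero_of_mul f1
    rw [mul_div_mul_left _ _ this]
  · intro x g1 g2
    obtain ⟨b1, b2, b3⟩ := B' x (by rw [abs_of_pos (by linarith)]; exact g2)
    rw [norm_div, div_eq_mul_inv]
    have b0 := B x g1 g2
    rcases le_total x.re 0 with hx | hx
    · calc _ ≤ (C * Real.exp (-(2 * π * η) * x.re)) * C' := by
            have := (b2 hx).2
            gcongr
        _ = C * C' * Real.exp (-(2 * π * η) * x.re) := by ring
        _ ≤ _ := by
          refine mul_le_mul_of_nonneg_left (Real.exp_le_exp.2 ?_) (by positivity)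
          rw [abs_of_nonpos hx]
          nlinarith [mul_nonneg (mul_nonneg hpi.le (by linarith : 0 ≤ s + b - η)) (neg_nonneg.2 hx)]
    · calc _ ≤ (C * Real.exp (-(2 * π * η) * x.re)) * (C' * Real.exp (2 * π * x.re * x.im)) := by
            have := (b3 hx).2
            gcongr
        _ = C * C' * Real.exp (-(2 * π * η) * x.re + 2 * π * x.re * x.im) := by rw [Real.exp_add]; ring
        _ ≤ _ := by
          refine mul_le_mul_of_nonneg_left (Real.exp_le_exp.2 ?_) (by positivity)
          rw [abs_of_nonneg hx]
          nlinarith [mul_nonneg (mul_nonneg hpi.le (by linarith : 0 ≤ s + b - x.im)) hx, mul_nonneg (mul_nonneg hpi.le hη.le) hx]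

/-- integral over the line bent at the origin from height `a₁` down to height `-a₂` -/
def qbent (a₁ a₂ : ℝ) (h : ℂ → ℂ) : ℂ :=
  (∫ u in Set.Iic (0:ℝ), h ((u:ℂ) + (a₁:ℂ) * I)) + (∫ u in Set.Ioi (0:ℝ), h ((u:ℂ) + ((-a₂:ℝ):ℂ) * I))
    - I * ∫ s in (-a₂)..a₁, h (((0:ℝ):ℂ) + (s:ℂ) * I)

lemma q_bent_lim {ι : Type*} {l : Filter ι} [l.IsCountablyGenerated] {a₁ a₂ M : ℝ} (h₁ : 0 < a₁) (h₂ : 0 < a₂)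
    (φ : ι → ℂ → ℂ)
    (hd : ∀ᶠ p in l, ∀ w : ℂ, -a₂ ≤ w.im → w.im ≤ a₁ → DifferentiableAt ℂ (φ p) w)
    (hM : ∀ᶠ p in l, ∀ w : ℂ, -a₂ ≤ w.im → w.im ≤ a₁ → ‖φ p w‖ ≤ M)
    (hl : ∀ w : ℂ, -a₂ ≤ w.im → w.im ≤ a₁ → Tendsto (fun p => φ p w) l (𝓝 1)) :
    Tendsto (fun p => qbent a₁ a₂ (fun w => Complex.exp (-(π:ℂ) * I * w ^ 2) * φ p w)) l
      (𝓝 (qbent a₁ a₂ (fun w => Complex.exp (-(π:ℂ) * I * w ^ 2)))) := by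
  have hpi := Real.pi_pos
  have hD : ∀ᶠ p in l, ∀ w : ℂ, -a₂ ≤ w.im → w.im ≤ a₁ →
      DifferentiableAt ℂ (fun w => Complex.exp (-(π:ℂ) * I * w ^ 2) * φ p w) w := by
    filter_upwards [hd] with p hp w g1 g2
    exact DifferentiableAt.mul (by fun_prop) (hp w g1 g2)
  have hN : ∀ᶠ p in l, ∀ w : ℂ, -a₂ ≤ w.im → w.im ≤ a₁ →
      ‖Complex.exp (-(π:ℂ) * I * w ^ 2) * φ p w‖ ≤ M * Real.exp (2 * π * w.re * w.im) := by
    filter_upwards [hM] with p hp w g1 g2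
    rw [norm_mul, q_norm_gauss', mul_comm]
    exact mul_le_mul_of_nonneg_right (hp w g1 g2) (Real.exp_pos _).le
  have hL : ∀ w : ℂ, -a₂ ≤ w.im → w.im ≤ a₁ →
      Tendsto (fun p => Complex.exp (-(π:ℂ) * I * w ^ 2) * φ p w) l (𝓝 (Complex.exp (-(π:ℂ) * I * w ^ 2))) := by
    intro w g1 g2
    have := (hl w g1 g2).const_mul (Complex.exp (-(π:ℂ) * I * w ^ 2))
    rwa [mul_one] at this
  unfold qbent
  refine Tendsto.sub (Tendsto.add ?_ ?_) (Tendsto.const_mul _ ?_)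
  · refine tendsto_integral_filter_of_dominated_convergence (fun u => M * Real.exp ((2 * π * a₁) * u)) ?_ ?_ ?_ ?_
    · filter_upwards [hD] with p hp
      refine ContinuousOn.aestronglyMeasurable ?_ measurableSet_Iic
      exact q_cont_line (fun w => Complex.exp (-(π:ℂ) * I * w ^ 2) * φ p w) _ _ (fun t _ => hp _ (by simp; linarith) (by simp))
    · filter_upwards [hN] with p hp
      refine Eventually.of_forall (fun u => ?_)
      refine (hp ((u:ℂ) + (a₁:ℂ) * I) (by simp; linarith) (by simp)).trans (le_of_eq ?_)
      congr 2; simp; ring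
    · exact (integrableOn_exp_mul_Iic (by positivity) 0).const_mul _
    · refine Eventually.of_forall (fun u => ?_)
      exact hL _ (by simp; linarith) (by simp)
  · refine tendsto_integral_filter_of_dominated_convergence (fun u => M * Real.exp (-(2 * π * a₂) * u)) ?_ ?_ ?_ ?_
    · filter_upwards [hD] with p hp
      refine ContinuousOn.aestronglyMeasurable ?_ measurableSet_Ioi
      exact q_cont_line (fun w => Complex.exp (-(π:ℂ) * I * w ^ 2) * φ p w) _ _ (fun t _ => hp _ (by simp) (by simp; linarith))
    · filter_upwards [hN] with p hp
      refine Eventually.of_forall (fun u => ?_)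
      refine (hp ((u:ℂ) + ((-a₂:ℝ):ℂ) * I) (by simp) (by simp; linarith)).trans (le_of_eq ?_)
      congr 2; simp; ring
    · exact (integrableOn_exp_mul_Ioi (by have := mul_pos hpi h₂; linarith) 0).const_mul _
    · refine Eventually.of_forall (fun u => ?_)
      exact hL _ (by simp) (by simp; linarith)
  · refine intervalIntegral.tendsto_integral_filter_of_dominated_convergence (fun _ => M) ?_ ?_ ?_ ?_
    · filter_upwards [hD] with p hp
      refine ContinuousOn.aestronglyMeasurable ?_ measurableSet_uIoc
      refine q_cont_vert (fun w => Complex.exp (-(π:ℂ) * I * w ^ 2) * φ p w) _ _ (fun t ht => ?_)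
      rw [Set.uIoc_of_le (by linarith)] at ht
      exact hp _ (by simpa using ht.1.le) (by simpa using ht.2)
    · filter_upwards [hN] with p hp
      refine Eventually.of_forall (fun u hu => ?_)
      rw [Set.uIoc_of_le (by linarith)] at hu
      refine (hp (((0:ℝ):ℂ) + (u:ℂ) * I) (by simpa using hu.1.le) (by simpa using hu.2)).trans (le_of_eq ?_)
      simp
    · simp
    · refine Eventually.of_forall (fun u hu => ?_)
      rw [Set.uIoc_of_le (by linarith)] at hu
      exact hL _ (by simpa using hu.1.le) (by simpa using hu.2)

lemma q_norm_gauss_tau (τ : ℝ) (w : ℂ) : ‖Complex.exp (-(π:ℂ) * τ * w ^ 2)‖ = Real.exp (-π * τ * (w.re ^ 2 - w.im ^ 2)) := by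
  rw [Complex.norm_exp]; congr 1; simp [sq]

lemma q_bent_gauss {a₁ a₂ τ : ℝ} (h₁ : 0 < a₁) (h₂ : 0 < a₂) (hτ : 0 < τ) :
    qbent a₁ a₂ (fun w => Complex.exp (-(π:ℂ) * I * w ^ 2) * Complex.exp (-(π:ℂ) * τ * w ^ 2)) =
      (1 / ((τ:ℂ) + I)) ^ (1 / 2 : ℂ) := by
  have hpi := Real.pi_pos
  set h : ℂ → ℂ := fun w => Complex.exp (-(π:ℂ) * I * w ^ 2) * Complex.exp (-(π:ℂ) * τ * w ^ 2) with hh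
  have hd : ∀ w, DifferentiableAt ℂ h w := by intro w; rw [hh]; fun_prop
  obtain ⟨a, ha1, ha2⟩ : ∃ a : ℝ, a₁ ≤ a ∧ a₂ ≤ a := ⟨max a₁ a₂, le_max_left _ _, le_max_right _ _⟩
  obtain ⟨C, hC, B⟩ : ∃ C : ℝ, 0 ≤ C ∧ ∀ w : ℂ, -a₂ ≤ w.im → w.im ≤ a₁ → ‖h w‖ ≤ C * Real.exp (-1 * |w.re|) := by
    refine ⟨Real.exp (π * τ * a ^ 2 + (2 * π * a + 1) ^ 2 / (4 * (π * τ))), (Real.exp_pos _).le, ?_⟩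
    intro w g1 g2
    simp only [hh]
    rw [norm_mul, q_norm_gauss', q_norm_gauss_tau, ← Real.exp_add, ← Real.exp_add]
    apply Real.exp_le_exp.2
    have e1 : w.re * w.im ≤ |w.re| * a := by
      refine (le_abs_self _).trans ?_
      rw [abs_mul]
      exact mul_le_mul_of_nonneg_left (abs_le.2 ⟨by linarith, by linarith⟩) (abs_nonneg _)
    have e2 : w.im ^ 2 ≤ a ^ 2 := sq_le_sq' (by linarith) (by linarith)
    have pt : 0 < π * τ := by positivity
    have e3 : (2 * π * a + 1) * |w.re| ≤ π * τ * w.re ^ 2 + (2 * π * a + 1) ^ 2 / (4 * (π * τ)) := by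
      have := sq_nonneg (2 * (π * τ) * |w.re| - (2 * π * a + 1))
      have e4 : π * τ * w.re ^ 2 + (2 * π * a + 1) ^ 2 / (4 * (π * τ)) - (2 * π * a + 1) * |w.re| =
          (2 * (π * τ) * |w.re| - (2 * π * a + 1)) ^ 2 / (4 * (π * τ)) := by
        rw [← sq_abs w.re]; field_simp; ring
      have : 0 ≤ (2 * (π * τ) * |w.re| - (2 * π * a + 1)) ^ 2 / (4 * (π * τ)) := by positivity
      linarith
    nlinarith [mul_le_mul_of_nonneg_left e1 hpi.le, mul_le_mul_of_nonneg_left e2 pt.le]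
  have L := q_hs_left h (a0 := 0) (c := 0) (d := a₁) (α := 1) (C := C) one_pos h₁.le (fun y _ _ _ => hd y)
    (fun y g1 g2 g3 => by
      have := B y (by linarith) g3
      rwa [abs_of_nonpos g1, neg_one_mul, neg_neg, ← one_mul y.re] at this)
  have R := q_hs_right h (a0 := 0) (c := -a₂) (d := 0) (α := 1) (C := C) one_pos (by linarith) (fun y _ _ _ => hd y)
    (fun y g1 g2 g3 => by
      have := B y g2 (by linarith)
      rwa [abs_of_nonneg g1] at this)
  have g := integral_gaussian_complex (b := (π:ℂ) * ((τ:ℂ) + I)) (by simp; positivity)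
  have e0 : ∀ t : ℝ, h ((t:ℂ) + ((0:ℝ):ℂ) * I) = Complex.exp (-((π:ℂ) * ((τ:ℂ) + I)) * (t:ℂ) ^ 2) := by
    intro t; simp only [hh]; rw [← Complex.exp_add]; congr 1; push_cast; ring
  have int : Integrable (fun t : ℝ => h ((t:ℂ) + ((0:ℝ):ℂ) * I)) := by
    simp only [e0]
    exact integrable_cexp_neg_mul_sq (by simp; positivity)
  have sp := intervalIntegral.integral_Iic_add_Ioi (b := (0:ℝ)) int.integrableOn int.integrableOn
  have cv : ∀ p q : ℝ, IntervalIntegrable (fun s : ℝ => h (((0:ℝ):ℂ) + (s:ℂ) * I)) volume p q := fun p q =>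
    (q_cont_vert h _ _ (fun t _ => hd _)).intervalIntegrable
  have sv := intervalIntegral.integral_add_adjacent_intervals (cv (-a₂) 0) (cv 0 a₁)
  have g' : (∫ t : ℝ, h ((t:ℂ) + ((0:ℝ):ℂ) * I)) = (1 / ((τ:ℂ) + I)) ^ (1 / 2 : ℂ) := by
    simp only [e0]; rw [g]; congr 1
    have : (π:ℂ) ≠ 0 := by exact_mod_cast hpi.ne'
    have : (τ:ℂ) + I ≠ 0 := by
      intro h0; have := congrArg Complex.im h0; simp at this
    field_simp
  unfold qbent
  rw [← g', ← sp, ← sv]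
  linear_combination -L + R

lemma q_fresnel {a₁ a₂ : ℝ} (h₁ : 0 < a₁) (h₂ : 0 < a₂) :
    qbent a₁ a₂ (fun w => Complex.exp (-(π:ℂ) * I * w ^ 2)) = Complex.exp (-(π:ℂ) * I / 4) := by
  have hpi := Real.pi_pos
  have t := q_bent_lim (l := 𝓝[>] (0:ℝ)) (M := Real.exp (π * (a₁ + a₂) ^ 2)) h₁ h₂
    (fun τ w => Complex.exp (-(π:ℂ) * (τ:ℂ) * w ^ 2)) (Eventually.of_forall (fun τ w _ _ => by fun_prop)) ?_ ?_
  · have t2 : Tendsto (fun τ : ℝ => (1 / ((τ:ℂ) + I)) ^ (1 / 2 : ℂ)) (𝓝[>] (0:ℝ)) (𝓝 ((1 / (((0:ℝ):ℂ) + I)) ^ (1 / 2 : ℂ))) := by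
      have : ContinuousAt (fun τ : ℝ => (1 / ((τ:ℂ) + I)) ^ (1 / 2 : ℂ)) 0 := by
        refine ContinuousAt.cpow (ContinuousAt.div continuousAt_const (by fun_prop) (by simp)) continuousAt_const ?_
        right; simp
      exact this.tendsto.mono_left nhdsWithin_le_nhds
    have t3 := t2.congr' (f₂ := fun τ : ℝ => qbent a₁ a₂ (fun w => Complex.exp (-(π:ℂ) * I * w ^ 2) * Complex.exp (-(π:ℂ) * τ * w ^ 2))) (by
      filter_upwards [self_mem_nhdsWithin] with τ hτ
      exact (q_bent_gauss h₁ h₂ hτ).symm)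
    rw [tendsto_nhds_unique t t3]
    rw [Complex.cpow_def_of_ne_zero (by simp)]
    congr 1
    simp [Complex.log_neg_I]
    ring
  · have : Set.Ioc (0:ℝ) 1 ∈ 𝓝[>] (0:ℝ) := Ioc_mem_nhdsGT one_pos
    filter_upwards [this] with τ hτ w g1 g2
    rw [q_norm_gauss_tau]
    apply Real.exp_le_exp.2
    have e2 : w.im ^ 2 ≤ (a₁ + a₂) ^ 2 := sq_le_sq' (by linarith) (by linarith)
    have : τ * (w.im ^ 2 - w.re ^ 2) ≤ (a₁ + a₂) ^ 2 := by
      nlinarith [mul_nonneg hτ.1.le (sq_nonneg w.re), hτ.1, hτ.2, sq_nonneg w.im]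
    nlinarith [mul_le_mul_of_nonneg_left this hpi.le]
  · intro w _ _
    have : ContinuousAt (fun τ : ℝ => Complex.exp (-(π:ℂ) * (τ:ℂ) * w ^ 2)) 0 := by fun_prop
    have := this.tendsto.mono_left (nhdsWithin_le_nhds (s := Set.Ioi 0))
    simpa using this

lemma q_Phi_bent {b : ℝ} {f : ℂ → ℂ} (Q : QD b f) {η κ δ η₂ v : ℝ} (P : QP b η κ δ) (h1 : η < v) (h2 : v < η₂)
    (h3 : η₂ < (b + b⁻¹) / 2) (ξ : ℝ) :
    qPhi b f η κ δ ((ξ:ℂ) + (v:ℂ) * I) * Complex.exp (-(π:ℂ) * I * ((ξ:ℂ) + (v:ℂ) * I) ^ 2) =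
      qbent (v - η) (η₂ - v) (fun w => Complex.exp (-(π:ℂ) * I * w ^ 2) * f (w - ((ξ:ℂ) + (v:ℂ) * I) + cb b)) := by
  have hpi := Real.pi_pos
  have hη := P.hη
  set x : ℂ := (ξ:ℂ) + (v:ℂ) * I with hx
  have x1 : x.im = v := by simp [hx]
  have x2 : x.re = ξ := by simp [hx]
  obtain ⟨C, hC, B⟩ := q_H_bound Q P.hη
  have int := q_H_line_int Q P.hη x (by rw [x1]; exact h1) (by rw [x1]; linarith)
  have sp := intervalIntegral.integral_Iic_add_Ioi (b := -ξ) int.integrableOn int.integrableOn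
  obtain ⟨C', hC', B'⟩ : ∃ C' : ℝ, 0 ≤ C' ∧ ∀ y : ℂ, -ξ ≤ y.re → -η₂ ≤ y.im → y.im ≤ -η →
      ‖qH b f x y‖ ≤ C' * Real.exp (-(2 * π * ((b + b⁻¹) / 2 - v)) * y.re) := by
    refine ⟨C * Real.exp (2 * π * |ξ| * η₂), by positivity, ?_⟩
    intro y g1 g2 g3
    have := (B x y (by linarith) g3).2
    rw [x1, x2] at this
    refine this.trans ?_
    refine mul_le_mul_of_nonneg_right (mul_le_mul_of_nonneg_left (Real.exp_le_exp.2 ?_) hC.le) (Real.exp_pos _).le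
    have e1 : ξ * y.im ≤ |ξ| * η₂ := by
      refine (le_abs_self _).trans ?_
      rw [abs_mul]
      exact mul_le_mul_of_nonneg_left (abs_le.2 ⟨by linarith, by linarith⟩) (abs_nonneg _)
    nlinarith [mul_le_mul_of_nonneg_left e1 hpi.le]
  have S := q_hs_right (qH b f x) (a0 := -ξ) (c := -η₂) (d := -η) (C := C')
    (α := 2 * π * ((b + b⁻¹) / 2 - v)) (by have := mul_pos hpi (by linarith : 0 < (b + b⁻¹) / 2 - v); linarith) (by linarith)
    (fun y _ _ g => q_H_diff Q x y (Or.inl (by linarith))) B'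
  have key : ∀ y : ℂ, qH b f x y * Complex.exp (-(π:ℂ) * I * x ^ 2) =
      Complex.exp (-(π:ℂ) * I * (x + y) ^ 2) * f (x + y - x + cb b) := by
    intro y
    unfold qH qg
    have : Complex.exp (-(π:ℂ) * I * (x + y) ^ 2) = Complex.exp (-2 * π * I * x * y) * Complex.exp (-(π:ℂ) * I * y ^ 2) *
        Complex.exp (-(π:ℂ) * I * x ^ 2) := by
      rw [← Complex.exp_add, ← Complex.exp_add]; congr 1; ring
    rw [this, add_sub_cancel_left]; ring
  set h : ℂ → ℂ := fun w => Complex.exp (-(π:ℂ) * I * w ^ 2) * f (w - x + cb b) with hh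
  have key2 : ∀ y : ℂ, qH b f x y * Complex.exp (-(π:ℂ) * I * x ^ 2) = h (x + y) := key
  rw [q_Phi_line Q P x (by rw [x1]; exact h1) (by rw [x1]; linarith), ← sp]
  have e : ∀ A B D E : ℂ, D - B = I * E → (A + B) * Complex.exp (-(π:ℂ) * I * x ^ 2) =
      A * Complex.exp (-(π:ℂ) * I * x ^ 2) + D * Complex.exp (-(π:ℂ) * I * x ^ 2) - I * (E * Complex.exp (-(π:ℂ) * I * x ^ 2)) := by
    intro A B D E hE
    linear_combination Complex.exp (-(π:ℂ) * I * x ^ 2) * -hE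
  rw [e _ _ _ _ S, ← integral_mul_const, ← integral_mul_const, ← intervalIntegral.integral_mul_const]
  simp only [key2]
  unfold qbent
  congr 1
  · congr 1
    · rw [q_shift_Iic _ _ (-ξ)]
      simp only [sub_self]
      congr 1; ext u; congr 1; rw [hx]; push_cast; ring
    · rw [q_shift_Ioi _ _ (-ξ)]
      simp only [sub_self]
      congr 1; ext u; congr 1; rw [hx]; push_cast; ring
  · congr 1
    have := intervalIntegral.integral_comp_add_left (a := -η₂) (b := -η) (fun s : ℝ => h (((0:ℝ):ℂ) + (s:ℂ) * I)) v
    have e1 : v + -η₂ = -(η₂ - v) := by ring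
    have e2 : v + -η = v - η := by ring
    rw [e1, e2] at this
    rw [← this]
    congr 1; ext u; congr 1; rw [hx]; push_cast; ring

lemma q_Phi_lim {b : ℝ} {f : ℂ → ℂ} (Q : QD b f) {η κ δ v : ℝ} (P : QP b η κ δ) (h1 : η < v) 
    (h3 : v < (b + b⁻¹) / 2) :
    Tendsto (fun ξ : ℝ => qPhi b f η κ δ ((ξ:ℂ) + (v:ℂ) * I) / f ((ξ:ℂ) + (v:ℂ) * I)) atTop
      (𝓝 (Complex.exp (-(π:ℂ) * I / 4) / qz b)) := by
  have hpi := Real.pi_pos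
  have hη := P.hη
  have hb := Q.hb
  obtain ⟨η₂, g1, g2⟩ := exists_between h3
  obtain ⟨C, hC, B⟩ := q_f_bound Q (V := (b + b⁻¹) / 2 - η) (by linarith)
  have l1 : Tendsto (fun ξ : ℝ => qPhi b f η κ δ ((ξ:ℂ) + (v:ℂ) * I) * Complex.exp (-(π:ℂ) * I * ((ξ:ℂ) + (v:ℂ) * I) ^ 2))
      atTop (𝓝 (Complex.exp (-(π:ℂ) * I / 4))) := by
    simp only [q_Phi_bent Q P h1 g1 g2]
    rw [← q_fresnel (a₁ := v - η) (a₂ := η₂ - v) (by linarith) (by linarith)]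
    have im : ∀ (ξ : ℝ) (w : ℂ), (w - ((ξ:ℂ) + (v:ℂ) * I) + cb b).im = w.im - v + (b + b⁻¹) / 2 := by
      intro ξ w; rw [q_cb]; simp
    refine q_bent_lim (M := C) (by linarith) (by linarith) (fun (ξ : ℝ) w => f (w - ((ξ:ℂ) + (v:ℂ) * I) + cb b)) ?_ ?_ ?_
    · refine Eventually.of_forall (fun ξ w k1 k2 => ?_)
      have := (Q.an (w - ((ξ:ℂ) + (v:ℂ) * I) + cb b) (q_not_pole2 hb _ (by rw [im]; linarith))).differentiableAt
      exact DifferentiableAt.comp w (f := fun w => w - ((ξ:ℂ) + (v:ℂ) * I) + cb b) this (by fun_prop)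
    · refine Eventually.of_forall (fun ξ w k1 k2 => ?_)
      have i0 : 0 ≤ (w - ((ξ:ℂ) + (v:ℂ) * I) + cb b).im := by rw [im]; linarith
      obtain ⟨_, b2, b3⟩ := B (w - ((ξ:ℂ) + (v:ℂ) * I) + cb b) (by rw [abs_of_nonneg i0, im]; linarith)
      rcases le_total (w - ((ξ:ℂ) + (v:ℂ) * I) + cb b).re 0 with hr | hr
      · exact (b2 hr).1
      · refine (b3 hr).1.trans ?_
        refine mul_le_of_le_one_right hC.le (Real.exp_le_one_iff.2 ?_)
        nlinarith [mul_nonneg hpi.le (mul_nonneg hr i0)]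
    · intro w k1 k2
      have := q_f_lim_left Q (c := w.im - v + (b + b⁻¹) / 2) (by rw [abs_lt]; constructor <;> linarith)
      have t : Tendsto (fun ξ : ℝ => w.re - ξ) atTop atBot := by
        simpa [sub_eq_add_neg] using tendsto_atBot_add_const_left atTop w.re tendsto_neg_atTop_atBot
      refine (this.comp t).congr (fun ξ => ?_)
      simp only [Function.comp]
      congr 1
      conv_rhs => rw [← Complex.re_add_im w, q_cb]
      push_cast; ring
  have l2 := q_f_lim_right Q (c := v) (by rw [abs_of_pos (by linarith)]; exact h3)
  have := l1.div l2 (by rw [← norm_ne_zero_iff, q_norm_qz]; exact one_ne_zero)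
  refine this.congr (fun ξ => ?_)
  simp only [Pi.div_apply]
  rw [mul_div_mul_right _ _ (Complex.exp_ne_zero _)]

lemma q_zeta {b : ℝ} (hb : 0 < b) : Complex.exp (-(π:ℂ) * I / 4) / qz b = (zeta0 b)⁻¹ := by
  unfold qz zeta0 cb
  have hbc : (b:ℂ) ≠ 0 := by exact_mod_cast hb.ne'
  rw [← Complex.exp_sub, ← Complex.exp_neg]
  congr 1
  have : (I * ((b:ℂ) + (b:ℂ)⁻¹) / 2) ^ 2 = -(((b:ℂ) ^ 2 + 2 + ((b:ℂ)⁻¹) ^ 2) / 4) := by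
    rw [div_pow, mul_pow, I_sq]; field_simp; ring
  rw [this]; ring

lemma q_Phi_eq {b : ℝ} {f : ℂ → ℂ} (Q : QD b f) {η κ δ : ℝ} (P : QP b η κ δ) (x : ℂ)
    (h1 : -κ < x.im) (h2 : x.im < (b + b⁻¹) / 2) : qPhi b f η κ δ x = (zeta0 b)⁻¹ * f x := by
  have hη := P.hη
  have hκ := P.hκ
  have hb := Q.hb
  obtain ⟨s, s1, s2⟩ : ∃ s, η < s ∧ s < (b + b⁻¹) / 2 - b := exists_between (by linarith [P.hηb])
  have hs2 : s + b < (b + b⁻¹) / 2 := by linarith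
  have strip : ∀ x : ℂ, s < x.im → x.im < s + b → qPhi b f η κ δ x = (zeta0 b)⁻¹ * f x := by
    intro x g1 g2
    obtain ⟨v, v1, v2⟩ : ∃ v, s < v ∧ v < s + b := exists_between (by linarith)
    have t := q_Phi_lim Q P (v := v) (by linarith) (by linarith)
    have t2 : Tendsto (fun ξ : ℝ => qPhi b f η κ δ ((ξ:ℂ) + (v:ℂ) * I) / f ((ξ:ℂ) + (v:ℂ) * I)) atTop
        (𝓝 (qPhi b f η κ δ x / f x)) := by
      refine tendsto_const_nhds.congr (fun ξ => ?_)
      exact q_const Q P s1 hs2 _ _ g1 g2 (by simpa using v1) (by simpa using v2)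
    have e := tendsto_nhds_unique t2 t
    rw [q_zeta hb] at e
    obtain ⟨C, _, B⟩ := q_f_bound Q hs2
    have fne := (B x (by rw [abs_of_pos (by linarith)]; exact g2.le)).1
    rw [← e]; field_simp
  set U : Set ℂ := {x : ℂ | -κ < x.im ∧ x.im < (b + b⁻¹) / 2} with hU
  have hUo : IsOpen U := (isOpen_lt continuous_const continuous_im).inter (isOpen_lt continuous_im continuous_const)
  have hUc : Convex ℝ U := (convex_halfSpace_im_gt _).inter (convex_halfSpace_im_lt _)
  have a1 : AnalyticOnNhd ℂ (qPhi b f η κ δ) U :=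
    DifferentiableOn.analyticOnNhd (fun y hy => (q_Phi_hol Q P y hy.1 hy.2).differentiableWithinAt) hUo
  have a2 : AnalyticOnNhd ℂ (fun x => (zeta0 b)⁻¹ * f x) U := fun y hy =>
    analyticAt_const.mul (Q.an y (q_not_pole2 hb y hy.2))
  obtain ⟨v, v1, v2⟩ : ∃ v, s < v ∧ v < s + b := exists_between (by linarith)
  have hz : (v:ℂ) * I ∈ U := ⟨by simp; linarith, by simp; linarith⟩
  have ev : qPhi b f η κ δ =ᶠ[𝓝 ((v:ℂ) * I)] (fun x => (zeta0 b)⁻¹ * f x) := by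
    have ho : IsOpen {x : ℂ | s < x.im ∧ x.im < s + b} :=
      (isOpen_lt continuous_const continuous_im).inter (isOpen_lt continuous_im continuous_const)
    filter_upwards [ho.mem_nhds (show (v:ℂ) * I ∈ _ from ⟨by simpa using v1, by simpa using v2⟩)] with y hy
    exact strip y hy.1 hy.2
  exact a1.eqOn_of_preconnected_of_eventuallyEq a2 hUc.isPreconnected hz ev ⟨h1, h2⟩

lemma q_ball (h : ℂ → ℂ) (H : ∀ y : ℂ, (y.im < 0 ∨ y.re ≠ 0) → DifferentiableAt ℂ h y) {σ r m : ℝ}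
    (hσ : σ ^ 2 = 1) (hr : 0 < r) (hm : 0 < m) :
    ∃ G : ℂ → ℂ, ∀ z : ℂ, z.re ^ 2 + z.im ^ 2 ≤ r ^ 2 → σ * z.re + z.im ≤ -m → HasDerivAt G (h z) z := by
  obtain ⟨K, hK⟩ : ∃ K : ℝ, K = r ^ 2 / m := ⟨_, rfl⟩
  have hK0 : 0 < K := by rw [hK]; positivity
  have hKm : K * m = r ^ 2 := by rw [hK]; field_simp
  have memb : ∀ z : ℂ, z ∈ Metric.ball (⟨-σ * K, -K⟩ : ℂ) (K * √2) ↔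
      z.re ^ 2 + z.im ^ 2 + 2 * K * (σ * z.re + z.im) < 0 := by
    intro z
    have : 0 ≤ K * √2 := by positivity
    rw [Metric.mem_ball, dist_eq_norm, ← sq_lt_sq₀ (norm_nonneg _) this, ← Complex.normSq_eq_norm_sq,
      Complex.normSq_apply, mul_pow, Real.sq_sqrt (by norm_num)]
    simp only [Complex.sub_re, Complex.sub_im]
    have e : (z.re - -σ * K) * (z.re - -σ * K) + (z.im - -K) * (z.im - -K) =
        z.re ^ 2 + z.im ^ 2 + 2 * K * (σ * z.re + z.im) + K ^ 2 * 2 := by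
      linear_combination K ^ 2 * hσ
    rw [e]; constructor <;> intro <;> linarith
  have hd : DifferentiableOn ℂ h (Metric.ball (⟨-σ * K, -K⟩ : ℂ) (K * √2)) := by
    intro z hz
    rw [memb] at hz
    refine (H z ?_).differentiableWithinAt
    by_cases hz0 : z.re = 0
    · left
      rw [hz0] at hz
      by_contra hc
      push Not at hc
      nlinarith [mul_nonneg hK0.le hc]
    · right; exact hz0
  obtain ⟨G, hG⟩ := hd.isExactOn_ball
  refine ⟨G, fun z h1 h2 => hG z ?_⟩
  rw [memb]
  nlinarith [mul_le_mul_of_nonneg_left h2 hK0.le, sq_pos_of_pos hr]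

lemma q_ftc (h G : ℂ → ℂ) (γ γ' : ℝ → ℂ) (a b : ℝ) (hγ : ∀ t, HasDerivAt γ (γ' t) t) (hγ' : Continuous γ')
    (hc : ∀ t ∈ Set.uIcc a b, ContinuousAt h (γ t)) (hG : ∀ t ∈ Set.uIcc a b, HasDerivAt G (h (γ t)) (γ t)) :
    ∫ t in a..b, γ' t * h (γ t) = G (γ b) - G (γ a) := by
  refine intervalIntegral.integral_eq_sub_of_hasDerivAt (f := fun t => G (γ t)) ?_ ?_
  · intro t ht
    have := (hG t ht).comp t (hγ t)
    exact this.congr_deriv (mul_comm _ _)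
  · apply ContinuousOn.intervalIntegrable
    refine hγ'.continuousOn.mul ?_
    intro t ht
    exact (ContinuousAt.comp (f := γ) (hc t ht) (hγ t).continuousAt).continuousWithinAt

lemma q_ftc_h (h G : ℂ → ℂ) (a b c : ℝ) (hc : ∀ t ∈ Set.uIcc a b, ContinuousAt h ((t:ℂ) + (c:ℂ) * I))
    (hG : ∀ t ∈ Set.uIcc a b, HasDerivAt G (h ((t:ℂ) + (c:ℂ) * I)) ((t:ℂ) + (c:ℂ) * I)) :
    ∫ t in a..b, h ((t:ℂ) + (c:ℂ) * I) = G ((b:ℂ) + (c:ℂ) * I) - G ((a:ℂ) + (c:ℂ) * I) := by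
  have := q_ftc h G (fun t => (t:ℂ) + (c:ℂ) * I) (fun _ => 1) a b
    (fun t => (hasDerivAt_id t).ofReal_comp.add_const _) continuous_const hc hG
  simpa using this

lemma q_ftc_v (h G : ℂ → ℂ) (a b c : ℝ) (hc : ∀ t ∈ Set.uIcc a b, ContinuousAt h ((c:ℂ) + (t:ℂ) * I))
    (hG : ∀ t ∈ Set.uIcc a b, HasDerivAt G (h ((c:ℂ) + (t:ℂ) * I)) ((c:ℂ) + (t:ℂ) * I)) :
    I * ∫ t in a..b, h ((c:ℂ) + (t:ℂ) * I) = G ((c:ℂ) + (b:ℂ) * I) - G ((c:ℂ) + (a:ℂ) * I) := by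
  have := q_ftc h G (fun t => (c:ℂ) + (t:ℂ) * I) (fun _ => 1 * I) a b
    (fun t => ((hasDerivAt_id t).ofReal_comp.mul_const I).const_add _) continuous_const hc hG
  simpa using this

lemma q_ftc_a (h G : ℂ → ℂ) (a b δ : ℝ) (hc : ∀ t ∈ Set.uIcc a b, ContinuousAt h ((δ:ℂ) * Complex.exp (I * (t:ℂ))))
    (hG : ∀ t ∈ Set.uIcc a b, HasDerivAt G (h ((δ:ℂ) * Complex.exp (I * (t:ℂ)))) ((δ:ℂ) * Complex.exp (I * (t:ℂ)))) :
    ∫ t in a..b, (I * (δ:ℂ) * Complex.exp (I * (t:ℂ))) * h ((δ:ℂ) * Complex.exp (I * (t:ℂ))) =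
      G ((δ:ℂ) * Complex.exp (I * (b:ℂ))) - G ((δ:ℂ) * Complex.exp (I * (a:ℂ))) := by
  refine q_ftc h G (fun t => (δ:ℂ) * Complex.exp (I * (t:ℂ))) (fun t => I * (δ:ℂ) * Complex.exp (I * (t:ℂ))) a b
    ?_ (by fun_prop) hc hG
  intro t
  have := (((hasDerivAt_id t).ofReal_comp.const_mul I).cexp).const_mul (δ:ℂ)
  refine this.congr_deriv ?_
  simp; ring

lemma q_arc_re (δ t : ℝ) : ((δ:ℂ) * Complex.exp (I * (t:ℂ))).re = δ * Real.cos t := by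
  rw [mul_comm I, Complex.re_ofReal_mul, Complex.exp_ofReal_mul_I_re]

lemma q_arc_im (δ t : ℝ) : ((δ:ℂ) * Complex.exp (I * (t:ℂ))).im = δ * Real.sin t := by
  rw [mul_comm I, Complex.im_ofReal_mul, Complex.exp_ofReal_mul_I_im]

lemma q_semi (h : ℂ → ℂ) (H : ∀ y : ℂ, (y.im < 0 ∨ y.re ≠ 0) → DifferentiableAt ℂ h y) {δ η : ℝ} (hη : 0 < η)
    (hδ : η ≤ δ) :
    ∫ θ in (π : ℝ)..(2 * π), (I * (δ:ℂ) * Complex.exp (I * (θ:ℂ))) * h ((δ:ℂ) * Complex.exp (I * (θ:ℂ))) =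
      -(I * ∫ s in (-η)..0, h (((-δ:ℝ):ℂ) + (s:ℂ) * I)) + (∫ t in (-δ)..δ, h ((t:ℂ) + ((-η:ℝ):ℂ) * I)) +
      I * ∫ s in (-η)..0, h ((δ:ℂ) + (s:ℂ) * I) := by
  have hpi := Real.pi_pos
  have hδ0 : 0 < δ := by linarith
  obtain ⟨G₁, hG₁⟩ := q_ball h H (σ := 1) (r := 2 * δ) (m := η) (by norm_num) (by linarith) hη
  obtain ⟨G₂, hG₂⟩ := q_ball h H (σ := -1) (r := 2 * δ) (m := η) (by norm_num) (by linarith) hη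
  have C : ∀ y : ℂ, (y.im < 0 ∨ y.re ≠ 0) → ContinuousAt h y := fun y hy => (H y hy).continuousAt
  -- first quarter
  have cs1 : ∀ t : ℝ, π ≤ t → t ≤ 3 * π / 2 → Real.cos t ≤ 0 ∧ Real.sin t ≤ 0 ∧ Real.cos t + Real.sin t ≤ -1 := by
    intro t h1 h2
    have c : Real.cos t ≤ 0 := Real.cos_nonpos_of_pi_div_two_le_of_le (by linarith) (by linarith)
    have s : Real.sin t ≤ 0 := by
      have := Real.sin_nonneg_of_nonneg_of_le_pi (x := t - π) (by linarith) (by linarith)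
      rw [Real.sin_sub_pi] at this; linarith
    refine ⟨c, s, ?_⟩
    nlinarith [Real.sin_sq_add_cos_sq t, mul_nonneg (neg_nonneg.2 c) (neg_nonneg.2 s)]
  have cs2 : ∀ t : ℝ, 3 * π / 2 ≤ t → t ≤ 2 * π → 0 ≤ Real.cos t ∧ Real.sin t ≤ 0 ∧ -Real.cos t + Real.sin t ≤ -1 := by
    intro t h1 h2
    have c : 0 ≤ Real.cos t := by
      have := Real.cos_nonneg_of_neg_pi_div_two_le_of_le (x := t - 2 * π) (by linarith) (by linarith)
      rwa [Real.cos_sub_two_pi] at this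
    have s : Real.sin t ≤ 0 := by
      have := Real.sin_nonneg_of_nonneg_of_le_pi (x := t - π) (by linarith) (by linarith)
      rw [Real.sin_sub_pi] at this; linarith
    refine ⟨c, s, ?_⟩
    nlinarith [Real.sin_sq_add_cos_sq t, mul_nonneg c (neg_nonneg.2 s)]
  have ca : ∀ t : ℝ, π ≤ t → t ≤ 2 * π → ContinuousAt h ((δ:ℂ) * Complex.exp (I * (t:ℂ))) := by
    intro t h1 h2
    apply C
    rw [q_arc_re, q_arc_im]
    by_cases hc : Real.cos t = 0
    · left
      rcases le_total t (3 * π / 2) with h3 | h3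
      · obtain ⟨_, _, k⟩ := cs1 t h1 h3
        nlinarith
      · obtain ⟨_, _, k⟩ := cs2 t h3 h2
        nlinarith
    · right; exact mul_ne_zero hδ0.ne' hc
  have i1 : (3 * π / 2) ∈ Set.Icc π (2 * π) := ⟨by linarith, by linarith⟩
  have a1 := q_ftc_a h G₁ π (3 * π / 2) δ
    (by intro t ht; rw [Set.uIcc_of_le i1.1] at ht; exact ca t ht.1 (ht.2.trans i1.2))
    (by
      intro t ht; rw [Set.uIcc_of_le i1.1] at ht
      obtain ⟨c, s, k⟩ := cs1 t ht.1 ht.2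
      apply hG₁
      · rw [q_arc_re, q_arc_im]; nlinarith [Real.sin_sq_add_cos_sq t]
      · rw [q_arc_re, q_arc_im]; nlinarith)
  have a2 := q_ftc_a h G₂ (3 * π / 2) (2 * π) δ
    (by intro t ht; rw [Set.uIcc_of_le i1.2] at ht; exact ca t (i1.1.trans ht.1) ht.2)
    (by
      intro t ht; rw [Set.uIcc_of_le i1.2] at ht
      obtain ⟨c, s, k⟩ := cs2 t ht.1 ht.2
      apply hG₂
      · rw [q_arc_re, q_arc_im]; nlinarith [Real.sin_sq_add_cos_sq t]
      · rw [q_arc_re, q_arc_im]; nlinarith)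
  have v1 := q_ftc_v h G₁ (-η) 0 (-δ)
    (by intro t ht; apply C; right; simp [hδ0.ne'])
    (by
      intro t ht; rw [Set.uIcc_of_le (by linarith)] at ht
      obtain ⟨t1, t2⟩ := ht
      apply hG₁ <;> simp <;> nlinarith)
  have v2 := q_ftc_v h G₂ (-η) 0 δ
    (by intro t ht; apply C; right; simp [hδ0.ne'])
    (by
      intro t ht; rw [Set.uIcc_of_le (by linarith)] at ht
      obtain ⟨t1, t2⟩ := ht
      apply hG₂ <;> simp <;> nlinarith)
  have w1 := q_ftc_v h G₁ (-δ) (-η) 0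
    (by
      intro t ht; rw [Set.uIcc_of_le (by linarith)] at ht
      apply C; left; simp; linarith [ht.2])
    (by
      intro t ht; rw [Set.uIcc_of_le (by linarith)] at ht
      obtain ⟨t1, t2⟩ := ht
      apply hG₁ <;> simp <;> nlinarith)
  have w2 := q_ftc_v h G₂ (-δ) (-η) 0
    (by
      intro t ht; rw [Set.uIcc_of_le (by linarith)] at ht
      apply C; left; simp; linarith [ht.2])
    (by
      intro t ht; rw [Set.uIcc_of_le (by linarith)] at ht
      obtain ⟨t1, t2⟩ := ht
      apply hG₂ <;> simp <;> nlinarith)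
  have u1 := q_ftc_h h G₁ (-δ) 0 (-η)
    (by intro t ht; apply C; left; simpa using hη)
    (by
      intro t ht; rw [Set.uIcc_of_le (by linarith)] at ht
      obtain ⟨t1, t2⟩ := ht
      apply hG₁ <;> simp <;> nlinarith)
  have u2 := q_ftc_h h G₂ 0 δ (-η)
    (by intro t ht; apply C; left; simpa using hη)
    (by
      intro t ht; rw [Set.uIcc_of_le (by linarith)] at ht
      obtain ⟨t1, t2⟩ := ht
      apply hG₂ <;> simp <;> nlinarith)
  have ci : ∀ p q : ℝ, p ∈ Set.Icc π (2 * π) → q ∈ Set.Icc π (2 * π) → IntervalIntegrable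
      (fun θ : ℝ => (I * (δ:ℂ) * Complex.exp (I * (θ:ℂ))) * h ((δ:ℂ) * Complex.exp (I * (θ:ℂ)))) volume p q := by
    intro p q hp hq
    apply ContinuousOn.intervalIntegrable
    refine ContinuousOn.mul (by fun_prop) ?_
    intro t ht
    have ht' := Set.uIcc_subset_Icc hp hq ht
    exact (ContinuousAt.comp (f := fun θ : ℝ => (δ:ℂ) * Complex.exp (I * (θ:ℂ))) (ca t ht'.1 ht'.2) (by fun_prop)).continuousWithinAt
  have hi : ∀ p q : ℝ, IntervalIntegrable (fun t : ℝ => h ((t:ℂ) + ((-η:ℝ):ℂ) * I)) volume p q := fun p q =>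
    (q_cont_line h _ _ (fun t _ => H _ (Or.inl (by simpa using hη)))).intervalIntegrable
  rw [← intervalIntegral.integral_add_adjacent_intervals (ci π (3 * π / 2) ⟨le_rfl, by linarith⟩ i1)
    (ci (3 * π / 2) (2 * π) i1 ⟨by linarith, le_rfl⟩), a1, a2,
    ← intervalIntegral.integral_add_adjacent_intervals (hi (-δ) 0) (hi 0 δ), v1, v2, u1, u2]
  have p1 : (δ:ℂ) * Complex.exp (I * ((π:ℝ):ℂ)) = ((-δ:ℝ):ℂ) + ((0:ℝ):ℂ) * I := by
    rw [mul_comm I, Complex.exp_pi_mul_I]; push_cast; ring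
  have p2 : (δ:ℂ) * Complex.exp (I * ((2 * π:ℝ):ℂ)) = (δ:ℂ) + ((0:ℝ):ℂ) * I := by
    rw [mul_comm I]; push_cast; rw [Complex.exp_two_pi_mul_I]; ring
  have p3 : (δ:ℂ) * Complex.exp (I * ((3 * π / 2:ℝ):ℂ)) = ((0:ℝ):ℂ) + ((-δ:ℝ):ℂ) * I := by
    have : I * ((3 * π / 2:ℝ):ℂ) = 2 * π * I + (-π / 2 * I) := by push_cast; ring
    rw [this, Complex.exp_add, Complex.exp_two_pi_mul_I, Complex.exp_neg_pi_div_two_mul_I]; push_cast; ring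
  rw [p1, p2, p3]
  linear_combination w1 - w2

lemma q_trunc {b : ℝ} {f : ℂ → ℂ} (Q : QD b f) {η κ δ : ℝ} (P : QP b η κ δ) (hηδ : η ≤ δ) (x : ℝ) :
    Tendsto
      (fun R : ℝ × ℝ =>
        (∫ t in (-R.1)..(-δ), qH b f x (t:ℂ)) +
        (∫ θ in (π : ℝ)..(2 * π), (I * (δ:ℂ) * Complex.exp (I * (θ:ℂ))) * qH b f x ((δ:ℂ) * Complex.exp (I * (θ:ℂ)))) +
        (∫ t in δ..R.2, qH b f x (t:ℂ)))
      (atTop ×ˢ atTop) (𝓝 (qPhi b f η κ δ x)) := by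
  have hpi := Real.pi_pos
  have hη := P.hη
  have hκ := P.hκ
  have hδ := P.hδ
  have hb := Q.hb
  have hbi : 0 < b⁻¹ := inv_pos.2 hb
  have hκb := P.hκb
  have hηb := P.hηb
  set h : ℂ → ℂ := qH b f x with hh
  have H : ∀ y : ℂ, (y.im < 0 ∨ y.re ≠ 0) → DifferentiableAt ℂ h y := fun y hy => q_H_diff Q x y hy
  obtain ⟨C₁, hC₁, B₁⟩ := q_H_bound Q hη
  obtain ⟨C₂, hC₂, B₂⟩ := q_g_bound2 Q hη hκb hηb.le hδ
  obtain ⟨D, hD, BL, BR⟩ : ∃ D : ℝ, 0 < D ∧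
      (∀ y : ℂ, -η ≤ y.im → y.im ≤ κ → y.re ≤ -δ → ‖h y‖ ≤ D * Real.exp (2 * π * y.re * y.im)) ∧
      (∀ y : ℂ, -η ≤ y.im → y.im ≤ κ → δ ≤ y.re → ‖h y‖ ≤ D * Real.exp (-(π * (b + b⁻¹)) * y.re)) := by
    have key : ∀ y : ℂ, -η ≤ y.im → y.im ≤ κ → ‖h y‖ ≤ Real.exp (2 * π * |x| * b) * ‖qg b f y‖ := by
      intro y g1 g2
      simp only [hh]
      unfold qH
      rw [norm_mul, q_norm_char]
      refine mul_le_mul_of_nonneg_right (Real.exp_le_exp.2 ?_) (norm_nonneg _)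
      have e1 : x * y.im ≤ |x| * b := by
        refine (le_abs_self _).trans ?_
        rw [abs_mul]
        exact mul_le_mul_of_nonneg_left (abs_le.2 ⟨by linarith, by linarith⟩) (abs_nonneg _)
      simp only [ofReal_im, ofReal_re]
      nlinarith [mul_le_mul_of_nonneg_left e1 hpi.le]
    refine ⟨Real.exp (2 * π * |x| * b) * C₂, by positivity, ?_, ?_⟩
    · intro y g1 g2 g3
      rw [mul_assoc]
      exact (key y g1 g2).trans (mul_le_mul_of_nonneg_left ((B₂ y g1 g2).1 g3) (Real.exp_pos _).le)
    · intro y g1 g2 g3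
      rw [mul_assoc]
      exact (key y g1 g2).trans (mul_le_mul_of_nonneg_left ((B₂ y g1 g2).2 g3) (Real.exp_pos _).le)
  -- integrability
  have iL : IntegrableOn (fun t : ℝ => h ((t:ℂ) + (κ:ℂ) * I)) (Set.Iic (-δ)) := by
    refine q_int_left h (α := 2 * π * κ) (C := D) (by positivity) (fun t ht => H _ (Or.inr (by simp; linarith))) ?_
    intro t ht
    refine (BL ((t:ℂ) + (κ:ℂ) * I) (by simp; linarith) (by simp) (by simpa using ht)).trans (le_of_eq ?_)
    congr 2; simp; ring
  have iR : IntegrableOn (fun t : ℝ => h ((t:ℂ) + ((-η:ℝ):ℂ) * I)) (Set.Ioi (-δ)) := by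
    refine q_int_right h (α := 2 * π * ((b + b⁻¹) / 2)) (C := C₁ * Real.exp (2 * π * x * (-η))) (by positivity)
      (fun t ht => H _ (Or.inl (by simpa using hη))) ?_
    intro t ht
    refine (B₁ x ((t:ℂ) + ((-η:ℝ):ℂ) * I) (by simp; linarith) (by simp)).2.trans (le_of_eq ?_)
    simp
  have tL : Tendsto (fun R : ℝ => ∫ t in (-R)..(-δ), h ((t:ℂ) + (κ:ℂ) * I)) atTop
      (𝓝 (∫ t in Set.Iic (-δ), h ((t:ℂ) + (κ:ℂ) * I))) :=
    intervalIntegral_tendsto_integral_Iic (-δ) iL tendsto_neg_atTop_atBot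
  have tR : Tendsto (fun R : ℝ => ∫ t in (-δ)..R, h ((t:ℂ) + ((-η:ℝ):ℂ) * I)) atTop
      (𝓝 (∫ t in Set.Ioi (-δ), h ((t:ℂ) + ((-η:ℝ):ℂ) * I))) :=
    intervalIntegral_tendsto_integral_Ioi (-δ) iR tendsto_id
  have vL : Tendsto (fun R : ℝ => ∫ s in (0:ℝ)..κ, h (((-R:ℝ):ℂ) + (s:ℂ) * I)) atTop (𝓝 0) := by
    have := intervalIntegral.tendsto_integral_filter_of_dominated_convergence (l := (atTop : Filter ℝ)) (μ := volume) (a := 0) (b := κ)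
      (F := fun (R : ℝ) (s : ℝ) => h (((-R:ℝ):ℂ) + (s:ℂ) * I)) (f := fun _ => (0:ℂ)) (fun _ => D) ?_ ?_ (by simp) ?_
    · simpa using this
    · filter_upwards [eventually_ge_atTop δ] with R hR
      refine ContinuousOn.aestronglyMeasurable ?_ measurableSet_uIoc
      exact q_cont_vert h _ _ (fun t ht => H _ (Or.inr (by simp; linarith)))
    · filter_upwards [eventually_ge_atTop δ] with R hR
      refine Eventually.of_forall (fun s hs => ?_)
      rw [Set.uIoc_of_le hκ.le] at hs
      have hs0 := hs.1
      refine (BL (((-R:ℝ):ℂ) + (s:ℂ) * I) (by simp; linarith) (by simpa using hs.2) (by simpa using hR)).trans ?_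
      refine mul_le_of_le_one_right hD.le (Real.exp_le_one_iff.2 ?_)
      simp
      have : 0 < π * R * s := by have : 0 < R := by linarith
                                 positivity
      linarith
    · refine Eventually.of_forall (fun s hs => ?_)
      rw [Set.uIoc_of_le hκ.le] at hs
      have hs0 := hs.1
      refine squeeze_zero_norm' (a := fun R : ℝ => D * Real.exp (-(2 * π * s) * R)) ?_ ?_
      · filter_upwards [eventually_ge_atTop δ] with R hR
        refine (BL (((-R:ℝ):ℂ) + (s:ℂ) * I) (by simp; linarith) (by simpa using hs.2) (by simpa using hR)).trans (le_of_eq ?_)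
        congr 2; simp; ring
      · have : Tendsto (fun R : ℝ => Real.exp (-(2 * π * s) * R)) atTop (𝓝 0) := by
          apply Real.tendsto_exp_atBot.comp
          refine (tendsto_const_mul_atBot_of_neg ?_).2 tendsto_id
          have : 0 < π * s := by positivity
          linarith
        simpa using this.const_mul D
  have vR : Tendsto (fun R : ℝ => ∫ s in (-η)..(0:ℝ), h ((R:ℂ) + (s:ℂ) * I)) atTop (𝓝 0) := by
    refine squeeze_zero_norm' (a := fun R : ℝ => D * Real.exp (-(π * (b + b⁻¹)) * R) * |0 - -η|) ?_ ?_
    · filter_upwards [eventually_ge_atTop δ] with R hR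
      refine intervalIntegral.norm_integral_le_of_norm_le_const ?_
      intro s hs
      rw [Set.uIoc_of_le (by linarith)] at hs
      refine (BR ((R:ℂ) + (s:ℂ) * I) (by simpa using hs.1.le) (by simpa using hs.2.trans hκ.le) (by simpa using hR)).trans (le_of_eq ?_)
      simp
    · have : Tendsto (fun R : ℝ => Real.exp (-(π * (b + b⁻¹)) * R)) atTop (𝓝 0) := by
        apply Real.tendsto_exp_atBot.comp
        refine (tendsto_const_mul_atBot_of_neg ?_).2 tendsto_id
        have : 0 < π * (b + b⁻¹) := by positivity
        linarith
      simpa using (this.const_mul D).mul_const |0 - -η|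
  have T : Tendsto (fun R : ℝ × ℝ => (((∫ t in (-R.1)..(-δ), h ((t:ℂ) + (κ:ℂ) * I)) -
      I * (∫ s in (-η)..κ, h (((-δ:ℝ):ℂ) + (s:ℂ) * I)) + (∫ t in (-δ)..R.2, h ((t:ℂ) + ((-η:ℝ):ℂ) * I))) +
      I * (∫ s in (0:ℝ)..κ, h (((-R.1:ℝ):ℂ) + (s:ℂ) * I))) + I * (∫ s in (-η)..(0:ℝ), h ((R.2:ℂ) + (s:ℂ) * I)))
      (atTop ×ˢ atTop) (𝓝 (qPhi b f η κ δ x + I * 0 + I * 0)) := by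
    refine Tendsto.add (Tendsto.add (Tendsto.add (Tendsto.sub (tL.comp tendsto_fst) tendsto_const_nhds)
      (tR.comp tendsto_snd)) ((vL.comp tendsto_fst).const_mul I)) ((vR.comp tendsto_snd).const_mul I)
  rw [mul_zero, add_zero, add_zero] at T
  refine T.congr' ?_
  filter_upwards [(eventually_ge_atTop δ).prod_mk (eventually_ge_atTop δ)] with R hR
  obtain ⟨hR1, hR2⟩ := hR
  have r1 := q_rect h (a := -R.1) (b := -δ) (c := 0) (d := κ) (by linarith) hκ.le
    (fun y _ g _ _ => H y (Or.inr (by linarith)))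
  have r2 := q_rect h (a := δ) (b := R.2) (c := -η) (d := 0) hR2 (by linarith)
    (fun y g _ _ _ => H y (Or.inr (by linarith)))
  have sm := q_semi h H hη hηδ
  have hi : ∀ p q : ℝ, IntervalIntegrable (fun t : ℝ => h ((t:ℂ) + ((-η:ℝ):ℂ) * I)) volume p q := fun p q =>
    (q_cont_line h _ _ (fun t _ => H _ (Or.inl (by simpa using hη)))).intervalIntegrable
  have vi : ∀ p q : ℝ, IntervalIntegrable (fun s : ℝ => h (((-δ:ℝ):ℂ) + (s:ℂ) * I)) volume p q := fun p q =>
    (q_cont_vert h _ _ (fun t _ => H _ (Or.inr (by simp [hδ.ne'])))).intervalIntegrable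
  have s1 := intervalIntegral.integral_add_adjacent_intervals (hi (-δ) δ) (hi δ R.2)
  have s2 := intervalIntegral.integral_add_adjacent_intervals (vi (-η) 0) (vi 0 κ)
  rw [sm, ← s1, ← s2]
  simp only [ofReal_zero, zero_mul, add_zero] at r1 r2
  linear_combination r2 - r1

lemma q_main {b : ℝ} {f : ℂ → ℂ} (Q : QD b f) (x δ : ℝ) (hδ : 0 < δ) :
    Tendsto
      (fun R : ℝ × ℝ =>
        (∫ t in (-R.1)..(-δ),
          Complex.exp (-2 * (π : ℂ) * Complex.I * (x : ℂ) * (t : ℂ)) *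
            Complex.exp (-(π : ℂ) * Complex.I * (t : ℂ) ^ 2) * f ((t : ℂ) + cb b)) +
        (∫ θ in (π : ℝ)..(2 * π),
          (Complex.I * (δ : ℂ) * Complex.exp (Complex.I * (θ : ℂ))) *
            (Complex.exp (-2 * (π : ℂ) * Complex.I * (x : ℂ) *
                ((δ : ℂ) * Complex.exp (Complex.I * (θ : ℂ)))) *
              Complex.exp (-(π : ℂ) * Complex.I *
                ((δ : ℂ) * Complex.exp (Complex.I * (θ : ℂ))) ^ 2) *
              f ((δ : ℂ) * Complex.exp (Complex.I * (θ : ℂ)) + cb b))) +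
        (∫ t in δ..R.2,
          Complex.exp (-2 * (π : ℂ) * Complex.I * (x : ℂ) * (t : ℂ)) *
            Complex.exp (-(π : ℂ) * Complex.I * (t : ℂ) ^ 2) * f ((t : ℂ) + cb b)))
      (atTop ×ˢ atTop) (𝓝 ((zeta0 b)⁻¹ * eb b (x : ℂ))) := by
  have hb := Q.hb
  have hb1 := Q.hb1
  have hbi : b < b⁻¹ := hb1.trans (by rw [lt_inv_comm₀ one_pos hb, inv_one]; exact hb1)
  obtain ⟨η, h0, h1, h2, h3⟩ : ∃ η : ℝ, 0 < η ∧ η ≤ b / 4 ∧ η ≤ (b⁻¹ - b) / 4 ∧ η ≤ δ :=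
    ⟨min (b / 4) (min ((b⁻¹ - b) / 4) δ), lt_min (by linarith) (lt_min (by linarith) hδ), min_le_left _ _,
      (min_le_right _ _).trans (min_le_left _ _), (min_le_right _ _).trans (min_le_right _ _)⟩
  have P : QP b η η δ := ⟨h0, h0, by linarith, by linarith, hδ⟩
  have t := q_trunc Q P h3 x
  rw [q_Phi_eq Q P x (by simpa using h0) (by simp; linarith), Q.ext x (by simp; positivity)] at t
  simpa only [qH, qg, ← mul_assoc] using t

lemma q_cb_inv (b : ℝ) : cb b⁻¹ = cb b := by
  unfold cb; push_cast; rw [inv_inv, add_comm]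

lemma q_eb_inv (b : ℝ) (z : ℂ) : eb b⁻¹ z = eb b z := by
  unfold eb ebE
  rw [inv_inv, min_comm]
  congr 2
  congr 1
  ext t
  unfold ebIntegrand
  push_cast
  rw [inv_inv]
  congr 1
  ring

lemma q_poles_inv (b : ℝ) : ebPoles b⁻¹ = ebPoles b := by
  ext z
  unfold ebPoles
  simp only [Set.mem_setOf_eq, q_cb_inv]
  constructor
  · rintro ⟨m, n, h⟩
    refine ⟨n, m, ?_⟩
    rw [h]; push_cast; rw [inv_inv]; ring
  · rintro ⟨m, n, h⟩
    refine ⟨n, m, ?_⟩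
    rw [h]; push_cast; rw [inv_inv]; ring

lemma q_zeta_inv (b : ℝ) : zeta0 b⁻¹ = zeta0 b := by
  unfold zeta0; rw [q_cb_inv]

/-- the Fourier-type integral representation
`∫_{γ_δ} e^{−2πixy}·e^{−πiy²}·e_b(y+c_b) dy = ζ₀⁻¹·e_b(x)` where `γ_δ` is the real axis
with the segment `[−δ,δ]` replaced by the semicircle of radius `δ` below the origin,
and `e_b` under the integral denotes the meromorphic continuation `f` of `e_b`
(characterized by the stated hypotheses). The improper integral is a limit over
cutoffs `R, R' → ∞`; since the limit is the same for every admissible `δ`, it is in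
particular independent of `δ`. -/
theorem statement7 (b : ℝ) (hb : 0 < b) (hirr : Irrational (b ^ 2))
    (f : ℂ → ℂ)
    (hf_ext : ∀ z : ℂ, |z.im| < (b + b⁻¹) / 2 → f z = eb b z)
    (hf_an : ∀ z : ℂ, z ∉ ebPoles b → AnalyticAt ℂ f z)
    (hf_shift₁ : ∀ z : ℂ, z - Complex.I * (b : ℂ) / 2 ∉ ebPoles b →
      z + Complex.I * (b : ℂ) / 2 ∉ ebPoles b →
      f (z - Complex.I * (b : ℂ) / 2) =
        (1 + Complex.exp (2 * (π : ℂ) * (b : ℂ) * z)) * f (z + Complex.I * (b : ℂ) / 2))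
    (hf_shift₂ : ∀ z : ℂ, z - Complex.I * (b : ℂ)⁻¹ / 2 ∉ ebPoles b →
      z + Complex.I * (b : ℂ)⁻¹ / 2 ∉ ebPoles b →
      f (z - Complex.I * (b : ℂ)⁻¹ / 2) =
        (1 + Complex.exp (2 * (π : ℂ) * (b : ℂ)⁻¹ * z)) *
          f (z + Complex.I * (b : ℂ)⁻¹ / 2))
    (x δ : ℝ) (hδ₁ : 0 < δ) (hδ₂ : δ < min b b⁻¹) :
    Tendsto
      (fun R : ℝ × ℝ =>
        (∫ t in (-R.1)..(-δ),
          Complex.exp (-2 * (π : ℂ) * Complex.I * (x : ℂ) * (t : ℂ)) *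
            Complex.exp (-(π : ℂ) * Complex.I * (t : ℂ) ^ 2) * f ((t : ℂ) + cb b)) +
        (∫ θ in (π : ℝ)..(2 * π),
          (Complex.I * (δ : ℂ) * Complex.exp (Complex.I * (θ : ℂ))) *
            (Complex.exp (-2 * (π : ℂ) * Complex.I * (x : ℂ) *
                ((δ : ℂ) * Complex.exp (Complex.I * (θ : ℂ)))) *
              Complex.exp (-(π : ℂ) * Complex.I *
                ((δ : ℂ) * Complex.exp (Complex.I * (θ : ℂ))) ^ 2) *
              f ((δ : ℂ) * Complex.exp (Complex.I * (θ : ℂ)) + cb b))) +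
        (∫ t in δ..R.2,
          Complex.exp (-2 * (π : ℂ) * Complex.I * (x : ℂ) * (t : ℂ)) *
            Complex.exp (-(π : ℂ) * Complex.I * (t : ℂ) ^ 2) * f ((t : ℂ) + cb b)))
      (atTop ×ˢ atTop) (𝓝 ((zeta0 b)⁻¹ * eb b (x : ℂ))) := by
  have hδ := hδ₁
  have hne : b ≠ 1 := by
    rintro rfl
    exact hirr ⟨1, by norm_num⟩
  rcases lt_or_gt_of_ne hne with h1 | h1
  · exact q_main ⟨hb, h1, hf_ext, hf_an, hf_shift₁⟩ x δ hδ
  · have Q : QD b⁻¹ f := by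
      refine ⟨inv_pos.2 hb, inv_lt_one_of_one_lt₀ h1, ?_, ?_, ?_⟩
      · intro z hz
        rw [inv_inv, add_comm] at hz
        rw [q_eb_inv]
        exact hf_ext z hz
      · intro z hz
        rw [q_poles_inv] at hz
        exact hf_an z hz
      · intro z g1 g2
        rw [q_poles_inv] at g1 g2
        push_cast at g1 g2 ⊢
        exact hf_shift₂ z g1 g2
    have t := q_main Q x δ hδ
    rw [q_zeta_inv, q_eb_inv] at t
    simpa only [q_cb_inv] using t

end
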